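/- arXiv:1108.2147 — 2 statements merged into one kernel-verified Lean document; each statement's English description precedes it below -/
import Mathlib

section
/- Let Γ be a group generated by a finite set S, let L be an (r,k)-rule, and let α be a free p.m.p. action of Γ on a standard Borel probability space (X, μ) that has an (ε, L)-good coloring for every ε > 0. Then there exists a free p.m.p. action β of Γ on a standard Borel probability space (Y, ν) such that β is weakly equivalent to α, β contains α as a factor (there is a Borel map π : Y → X with π_*ν = μ and π ∘ β_γ = α_γ ∘ π almost everywhere for all γ ∈ Γ), and β has a (0, L)-good coloring, i.e. β properly satisfies L. -/
open MeasureTheory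

/-- A probability-measure-preserving action of a group `G` on a measure space. -/
structure PMP (G : Type*) [Group G] (X : Type*) [MeasurableSpace X] (μ : Measure X) where
  act : G → X → X
  measurable : ∀ γ, Measurable (act γ)
  preserves : ∀ γ, MeasurePreserving (act γ) μ μ
  act_one : ∀ x, act 1 x = x
  act_mul : ∀ γ₁ γ₂ x, act (γ₁ * γ₂) x = act γ₁ (act γ₂ x)

/-- `f` weakly contains `g`. -/
def WeaklyContains {G : Type*} [Group G] {X Y : Type*} [MeasurableSpace X] [MeasurableSpace Y]
    {μ : Measure X} {ν : Measure Y} (f : PMP G X μ) (g : PMP G Y ν) : Prop :=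
  ∀ n : ℕ, 1 ≤ n → ∀ C : Y → Fin n, Measurable C →
    ∀ F : Finset G, ∀ ε : ℝ, 0 < ε →
      ∃ D : X → Fin n, Measurable D ∧
        ∀ i j : Fin n, ∀ γ ∈ F,
          |(μ (f.act γ '' (D ⁻¹' {i}) ∩ D ⁻¹' {j})).toReal -
            (ν (g.act γ '' (C ⁻¹' {i}) ∩ C ⁻¹' {j})).toReal| ≤ ε

/-- Weak equivalence of p.m.p. actions. -/
def WeaklyEquivalent {G : Type*} [Group G] {X Y : Type*} [MeasurableSpace X] [MeasurableSpace Y]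
    {μ : Measure X} {ν : Measure Y} (f : PMP G X μ) (g : PMP G Y ν) : Prop :=
  WeaklyContains f g ∧ WeaklyContains g f

/-- The action `f` is (essentially) free. -/
def IsFreeAction {G : Type*} [Group G] {X : Type*} [MeasurableSpace X] {μ : Measure X}
    (f : PMP G X μ) : Prop :=
  ∀ᵐ x ∂μ, ∀ γ : G, f.act γ x = x → γ = 1

/-- The ball of radius `r` around the identity in the Cayley graph `Cay(Γ, S)`. -/
def cayleyBall {Γ : Type*} [Group Γ] (S : Finset Γ) (r : ℕ) : Set Γ :=
  {γ | ∃ l : List Γ, l.length ≤ r ∧ (∀ x ∈ l, x ∈ S ∨ x⁻¹ ∈ S) ∧ l.prod = γ}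

/-- The `k`-coloring of the `r`-ball around `x` induced by `φ` and the action `f`. -/
def ballColoring {Γ X : Type*} [Group Γ] [MeasurableSpace X] {μ : Measure X}
    (f : PMP Γ X μ) (S : Finset Γ) (r k : ℕ) (φ : X → Fin k) (x : X) :
    cayleyBall S r → Fin k :=
  fun γ => φ (f.act ↑γ x)

/-- `φ` is an `(ε, L)`-good coloring for the action `f`. -/
def GoodColoring {Γ X : Type*} [Group Γ] [MeasurableSpace X] {μ : Measure X}
    (f : PMP Γ X μ) (S : Finset Γ) {r k : ℕ} (L : Set (cayleyBall S r → Fin k))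
    (ε : ℝ) (φ : X → Fin k) : Prop :=
  Measurable φ ∧ 1 - ε ≤ (μ {x | ballColoring f S r k φ x ∈ L}).toReal

/-- The action `f` almost satisfies the rule `L`. -/
def AlmostSatisfies {Γ X : Type*} [Group Γ] [MeasurableSpace X] {μ : Measure X}
    (f : PMP Γ X μ) (S : Finset Γ) {r k : ℕ} (L : Set (cayleyBall S r → Fin k)) : Prop :=
  ∀ ε : ℝ, 0 < ε → ∃ φ : X → Fin k, GoodColoring f S L ε φ

/-- The action `f` properly satisfies the rule `L`. -/
def ProperlySatisfies {Γ X : Type*} [Group Γ] [MeasurableSpace X] {μ : Measure X}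
    (f : PMP Γ X μ) (S : Finset Γ) {r k : ℕ} (L : Set (cayleyBall S r → Fin k)) : Prop :=
  ∃ φ : X → Fin k, Measurable φ ∧ μ {x | ballColoring f S r k φ x ∈ L} = 1

/-- A p.m.p. action of `Γ` on some standard Borel probability space. -/
structure PMPSpace (Γ : Type) [Group Γ] where
  Y : Type
  mY : MeasurableSpace Y
  sbY : @StandardBorelSpace Y mY
  ν : @Measure Y mY
  probY : @IsProbabilityMeasure Y mY ν
  act : @PMP Γ _ Y mY ν

attribute [instance] PMPSpace.mY PMPSpace.sbY PMPSpace.probY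

open Filter Topology

namespace WEExt

lemma finite_cayleyBall {Γ : Type*} [Group Γ] (S : Finset Γ) (r : ℕ) :
    (cayleyBall S r).Finite := by
  have hT : ({x : Γ | x ∈ S ∨ x⁻¹ ∈ S}).Finite := by
    have : {x : Γ | x ∈ S ∨ x⁻¹ ∈ S} = (S : Set Γ) ∪ (S : Set Γ)⁻¹ := by
      ext x; simp
    rw [this]
    exact S.finite_toSet.union S.finite_toSet.inv
  have := hT.to_subtype
  refine ((List.finite_length_le {x : Γ | x ∈ S ∨ x⁻¹ ∈ S} r).image
    (fun l => (l.map Subtype.val).prod)).subset ?_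
  rintro γ ⟨l, hl, hm, rfl⟩
  refine ⟨l.attachWith _ hm, by simpa using hl, ?_⟩
  exact congrArg List.prod (List.attachWith_map_subtype_val hm)

lemma exists_continuous_approx {K : Type*} [TopologicalSpace K] [CompactSpace K] [T2Space K]
    [TotallyDisconnectedSpace K] [SecondCountableTopology K] [MeasurableSpace K] [BorelSpace K]
    (ν : Measure K) [IsFiniteMeasure ν] (n : ℕ) (C : K → Fin n) (hC : Measurable C)
    (δ : ℝ) (hδ : 0 < δ) :
    ∃ C' : K → Fin n, Continuous C' ∧ ν.real {y | C y ≠ C' y} ≤ δ := by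
  classical
  rcases Nat.eq_zero_or_pos n with rfl | hn
  · have : IsEmpty K := ⟨fun y => (C y).elim0⟩
    exact ⟨C, continuous_of_const (fun x => isEmptyElim x), by simp [Set.eq_empty_of_isEmpty, hδ.le]⟩
  have hring : IsSetRing {s : Set K | IsClopen s} :=
    ⟨isClopen_empty, fun s t hs ht => hs.union ht, fun s t hs ht => hs.diff ht⟩
  have key : ∀ i : Fin n, ∃ t : Set K, IsClopen t ∧
      ν (symmDiff t (C ⁻¹' {i})) < ENNReal.ofReal (δ / n) := by
    intro i
    refine exists_measure_symmDiff_lt_of_generateFrom_isSetRing hring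
      ⟨{Set.univ}, by simp, by simpa using isClopen_univ, by simp⟩ ?_ (hC (measurableSet_singleton i)) ?_
    · rw [BorelSpace.measurable_eq (α := K)]
      exact isTopologicalBasis_isClopen.borel_eq_generateFrom
    · simp only [ENNReal.ofReal_pos]; positivity
  choose t ht htν using key
  let g : (Fin n → Bool) → Fin n := fun b =>
    if h : ∃ i, b = fun j => decide (j = i) then h.choose else ⟨0, hn⟩
  have hg : ∀ i, g (fun j => decide (j = i)) = i := by
    intro i
    have h : ∃ i', (fun j : Fin n => decide (j = i)) = fun j => decide (j = i') := ⟨i, rfl⟩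
    have h2 := h.choose_spec
    have h3 : g (fun j => decide (j = i)) = h.choose := dif_pos h
    rw [h3]
    have := congrFun h2 i
    simp only [decide_true] at this
    exact (of_decide_eq_true this.symm).symm
  let T : K → Fin n → Bool := fun y i => decide (y ∈ t i)
  have hT : Continuous T := by
    refine continuous_pi fun i => ?_
    refine continuous_def.2 fun s _ => ?_
    have hpre : (fun y => T y i) ⁻¹' s = (t i ∩ {_y | true ∈ s}) ∪ ((t i)ᶜ ∩ {_y | false ∈ s}) := by
      ext y
      by_cases hy : y ∈ t i <;> simp [T, hy]
    rw [hpre]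
    exact ((ht i).isOpen.inter isOpen_const).union ((ht i).compl.isOpen.inter isOpen_const)
  refine ⟨g ∘ T, (continuous_of_discreteTopology).comp hT, ?_⟩
  have hsub : {y | C y ≠ (g ∘ T) y} ⊆ ⋃ i, symmDiff (t i) (C ⁻¹' {i}) := by
    intro y hy
    by_contra hcon
    simp only [Set.mem_iUnion, not_exists, Set.mem_symmDiff, Set.mem_preimage,
      Set.mem_singleton_iff] at hcon
    apply hy
    have : T y = fun j => decide (j = C y) := by
      funext j
      have := hcon j
      simp only [T, decide_eq_decide]
      grind
    simp [this, hg]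
  calc ν.real {y | C y ≠ (g ∘ T) y} ≤ ν.real (⋃ i, symmDiff (t i) (C ⁻¹' {i})) :=
        measureReal_mono hsub
    _ ≤ ∑ i, ν.real (symmDiff (t i) (C ⁻¹' {i})) := measureReal_iUnion_fintype_le _
    _ ≤ ∑ i : Fin n, δ / n := by
        refine Finset.sum_le_sum fun i _ => ?_
        exact ENNReal.toReal_le_of_le_ofReal (by positivity) (htν i).le
    _ = δ := by
        simp; field_simp

/-- The shift space. -/
abbrev Sp (Γ : Type) (k : ℕ) : Type := (Γ → ℕ → Bool) × (Γ → Fin k)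

/-- The shift. -/
def sh {Γ : Type} [Group Γ] {k : ℕ} (γ : Γ) (y : Sp Γ k) : Sp Γ k :=
  (fun δ => y.1 (δ * γ), fun δ => y.2 (δ * γ))

lemma continuous_sh {Γ : Type} [Group Γ] {k : ℕ} (γ : Γ) :
    Continuous (sh γ : Sp Γ k → Sp Γ k) := by
  unfold sh; fun_prop

lemma image_act {G X : Type*} [Group G] [MeasurableSpace X] {μ : Measure X} (f : PMP G X μ)
    (γ : G) (A : Set X) : f.act γ '' A = f.act γ⁻¹ ⁻¹' A := by
  ext x
  constructor
  · rintro ⟨y, hy, rfl⟩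
    simpa [← f.act_mul, f.act_one] using hy
  · intro hx
    exact ⟨_, hx, by simp [← f.act_mul, f.act_one]⟩

lemma abs_measureReal_sub_le {K : Type*} [MeasurableSpace K] (ν : Measure K) [IsFiniteMeasure ν]
    (A B E : Set K) (h1 : A ⊆ B ∪ E) (h2 : B ⊆ A ∪ E) :
    |ν.real A - ν.real B| ≤ ν.real E := by
  have := (measureReal_mono (μ := ν) h1).trans (measureReal_union_le _ _)
  have := (measureReal_mono (μ := ν) h2).trans (measureReal_union_le _ _)
  rw [abs_le]; constructor <;> linarith

end WEExt

open WEExt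

theorem exists_weakly_equivalent_extension_properly_satisfying
    {Γ X : Type} [Group Γ] [Countable Γ] (S : Finset Γ)
    (hS : Subgroup.closure (S : Set Γ) = ⊤)
    [MeasurableSpace X] [StandardBorelSpace X]
    (μ : Measure X) [IsProbabilityMeasure μ]
    (r k : ℕ) (L : Set (cayleyBall S r → Fin k))
    (α : PMP Γ X μ) (hαfree : IsFreeAction α)
    (hα : ∀ ε : ℝ, 0 < ε → ∃ φ : X → Fin k, GoodColoring α S L ε φ) :
    ∃ B : PMPSpace Γ, IsFreeAction B.act ∧ WeaklyEquivalent B.act α ∧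
      (∃ π : B.Y → X, Measurable π ∧ B.ν.map π = μ ∧
        ∀ γ : Γ, ∀ᵐ y ∂B.ν, π (B.act.act γ y) = α.act γ (π y)) ∧
      ∃ φ : B.Y → Fin k, Measurable φ ∧
        B.ν {y | ballColoring B.act S r k φ y ∈ L} = 1 := by
  have hk : Nonempty (X → Fin k) := (hα 1 one_pos).nonempty
  choose φ hφm hφ using fun n : ℕ => hα (1 / ((n : ℝ) + 1)) (by positivity)
  obtain ⟨ι, hιm, hιi⟩ := MeasurableSpace.measurable_injection_nat_bool_of_countablySeparated X
  have hXne : Nonempty X := μ.nonempty_of_neZero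
  -- the equivariant embedding
  let J : X → (Γ → ℕ → Bool) := fun x γ => ι (α.act γ x)
  have hJm : Measurable J := measurable_pi_lambda _ fun γ => hιm.comp (α.measurable γ)
  have hJi : Function.Injective J := fun x y h => by
    have := hιi (congrFun h 1)
    simpa [α.act_one] using this
  have hJ : MeasurableEmbedding J := hJm.measurableEmbedding hJi
  let Φ : ℕ → X → Sp Γ k := fun n x => (J x, fun γ => φ n (α.act γ x))
  have hΦm : ∀ n, Measurable (Φ n) := fun n =>
    hJm.prodMk (measurable_pi_lambda _ fun γ => (hφm n).comp (α.measurable γ))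
  have hΦe : ∀ n γ x, Φ n (α.act γ x) = sh γ (Φ n x) := by
    intro n γ x
    simp only [Φ, J, sh, α.act_mul]
  have iB : BorelSpace (Sp Γ k) := inferInstance
  have iC : CompactSpace (Sp Γ k) := inferInstance
  have iT : T2Space (Sp Γ k) := inferInstance
  have iH : HasOuterApproxClosed (Sp Γ k) := inferInstance
  have iPC : CompactSpace (ProbabilityMeasure (Sp Γ k)) := inferInstance
  have iPT : T2Space (ProbabilityMeasure (Sp Γ k)) := inferInstance
  let νs : ℕ → ProbabilityMeasure (Sp Γ k) := fun n =>
    ⟨μ.map (Φ n), Measure.isProbabilityMeasure_map (hΦm n).aemeasurable⟩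
  let U : Ultrafilter ℕ := hyperfilter ℕ
  have hU : (U : Filter ℕ) ≤ atTop := Nat.hyperfilter_le_atTop
  obtain ⟨ν, -, hν⟩ := isCompact_univ.ultrafilter_le_nhds (U.map νs) (by simp)
  have hlim : Tendsto νs U (𝓝 ν) := hν
  have hclopen : ∀ E : Set (Sp Γ k), IsClopen E →
      Tendsto (fun n => μ.real (Φ n ⁻¹' E)) U (𝓝 ((ν : Measure (Sp Γ k)).real E)) := by
    intro E hE
    have h1 := ProbabilityMeasure.tendsto_measure_of_null_frontier_of_tendsto' hlim
      (E := E) (by simp [hE.frontier_eq])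
    have h2 := (ENNReal.tendsto_toReal (measure_ne_top _ _)).comp h1
    refine h2.congr fun n => ?_
    simp [νs, Measure.real, Measure.map_apply (hΦm n) hE.isOpen.measurableSet]
  have hinv : ∀ γ : Γ, MeasurePreserving (sh γ) (ν : Measure (Sp Γ k)) ν := by
    intro γ
    refine ⟨(continuous_sh γ).measurable, ?_⟩
    have h1 : Tendsto (fun n => (νs n).map (continuous_sh γ).measurable.aemeasurable) U
        (𝓝 (ν.map (continuous_sh γ).measurable.aemeasurable)) :=
      ((ProbabilityMeasure.continuous_map (continuous_sh γ)).tendsto ν).comp hlim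
    have h2 : ∀ n, (νs n).map (continuous_sh γ).measurable.aemeasurable = νs n := by
      intro n
      apply Subtype.ext
      change (μ.map (Φ n)).map (sh γ) = μ.map (Φ n)
      rw [Measure.map_map (continuous_sh γ).measurable (hΦm n)]
      have : sh γ ∘ Φ n = Φ n ∘ α.act γ := by
        funext x; exact (hΦe n γ x).symm
      rw [this, ← Measure.map_map (hΦm n) (α.measurable γ), (α.preserves γ).map_eq]
    simp only [h2] at h1
    have h3 : ν.map (continuous_sh γ).measurable.aemeasurable = ν := tendsto_nhds_unique h1 hlim
    exact congrArg ProbabilityMeasure.toMeasure h3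
  have hfst : (ν : Measure (Sp Γ k)).map Prod.fst = μ.map J := by
    have hc : Continuous (Prod.fst : Sp Γ k → _) := continuous_fst
    have h1 : Tendsto (fun n => (νs n).map hc.measurable.aemeasurable) U
        (𝓝 (ν.map hc.measurable.aemeasurable)) :=
      ((ProbabilityMeasure.continuous_map hc).tendsto ν).comp hlim
    let m : ProbabilityMeasure (Γ → ℕ → Bool) :=
      ⟨μ.map J, Measure.isProbabilityMeasure_map hJm.aemeasurable⟩
    have h2 : ∀ n, (νs n).map hc.measurable.aemeasurable = m := by
      intro n
      apply Subtype.ext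
      change (μ.map (Φ n)).map Prod.fst = μ.map J
      rw [Measure.map_map hc.measurable (hΦm n)]
      rfl
    simp only [h2] at h1
    have h3 : ν.map hc.measurable.aemeasurable = m := tendsto_nhds_unique h1 tendsto_const_nhds
    exact congrArg ProbabilityMeasure.toMeasure h3
  let β : PMP Γ (Sp Γ k) (ν : Measure (Sp Γ k)) :=
    { act := sh
      measurable := fun γ => (continuous_sh γ).measurable
      preserves := hinv
      act_one := fun x => by simp [sh]
      act_mul := fun a b x => by simp [sh, mul_assoc] }
  let π : Sp Γ k → X := fun y => hJ.invFun y.1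
  have hπm : Measurable π := hJ.measurable_invFun.comp measurable_fst
  have hπJ : ∀ x, hJ.invFun (J x) = x := hJ.leftInverse_invFun
  have hπν : (ν : Measure (Sp Γ k)).map π = μ := by
    change (ν : Measure (Sp Γ k)).map (hJ.invFun ∘ Prod.fst) = μ
    rw [← Measure.map_map hJ.measurable_invFun measurable_fst, hfst,
      Measure.map_map hJ.measurable_invFun hJm]
    have : hJ.invFun ∘ J = id := funext hπJ
    rw [this, Measure.map_id]
  have hπmp : MeasurePreserving π (ν : Measure (Sp Γ k)) μ := ⟨hπm, hπν⟩
  have hrange : ∀ᵐ y ∂(ν : Measure (Sp Γ k)), y.1 ∈ Set.range J := by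
    have h1 : ∀ᵐ z ∂(ν : Measure (Sp Γ k)).map Prod.fst, z ∈ Set.range J := by
      rw [hfst]
      exact (ae_map_iff hJm.aemeasurable hJ.measurableSet_range).2 (by simp)
    exact ae_of_ae_map measurable_fst.aemeasurable h1
  have hπe : ∀ᵐ y ∂(ν : Measure (Sp Γ k)), ∀ γ : Γ, π (sh γ y) = α.act γ (π y) := by
    filter_upwards [hrange] with y hy γ
    obtain ⟨x, hx⟩ := hy
    have h1 : (sh γ y).1 = J (α.act γ x) := by
      simp only [sh, ← hx, J, α.act_mul]
    simp only [π]
    rw [h1, ← hx, hπJ, hπJ]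
  refine ⟨⟨Sp Γ k, inferInstance, inferInstance, ν, inferInstance, β⟩, ?_, ⟨?_, ?_⟩,
    ⟨π, hπm, hπν, fun γ => ?_⟩, fun y => y.2 1, ?_, ?_⟩
  · -- free
    have h1 : ∀ᵐ y ∂(ν : Measure (Sp Γ k)), ∀ γ : Γ, α.act γ (π y) = π y → γ = 1 :=
      hπmp.quasiMeasurePreserving.ae hαfree
    change ∀ᵐ y ∂(ν : Measure (Sp Γ k)), ∀ γ : Γ, sh γ y = y → γ = 1
    filter_upwards [h1, hπe] with y h1 h2 γ hγ
    exact h1 γ (by rw [← h2, hγ])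
  · -- β weakly contains α
    intro n hn C hC F ε hε
    refine ⟨C ∘ π, hC.comp hπm, fun i j γ _ => ?_⟩
    have hmeq : (ν : Measure (Sp Γ k)) (β.act γ '' ((C ∘ π) ⁻¹' {i}) ∩ (C ∘ π) ⁻¹' {j}) =
        μ (α.act γ '' (C ⁻¹' {i}) ∩ C ⁻¹' {j}) := by
      rw [image_act, image_act]
      have hms : MeasurableSet (α.act γ⁻¹ ⁻¹' (C ⁻¹' {i}) ∩ C ⁻¹' {j}) :=
        ((hC (measurableSet_singleton i)).preimage (α.measurable _)).inter
          (hC (measurableSet_singleton j))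
      rw [← hπmp.measure_preimage hms.nullMeasurableSet]
      apply measure_congr
      filter_upwards [hπe] with y hy
      have h3 : π (β.act γ⁻¹ y) = α.act γ⁻¹ (π y) := hy γ⁻¹
      apply propext
      change (C (π (β.act γ⁻¹ y)) = i ∧ C (π y) = j) ↔ (C (α.act γ⁻¹ (π y)) = i ∧ C (π y) = j)
      rw [h3]
    change |((ν : Measure (Sp Γ k)) (β.act γ '' ((C ∘ π) ⁻¹' {i}) ∩ (C ∘ π) ⁻¹' {j})).toReal -
      _| ≤ ε
    rw [hmeq]
    simpa using hε.le
  · -- α weakly contains β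
    intro n hn C hC F ε hε
    change Sp Γ k → Fin n at C
    obtain ⟨C', hC'c, hC'⟩ := exists_continuous_approx (ν : Measure (Sp Γ k)) n C hC (ε / 4)
      (by positivity)
    have hev : ∀ᶠ m in (U : Filter ℕ), ∀ i j : Fin n, ∀ γ ∈ F,
        |μ.real (Φ m ⁻¹' (sh γ⁻¹ ⁻¹' (C' ⁻¹' {i}) ∩ C' ⁻¹' {j})) -
          (ν : Measure (Sp Γ k)).real (sh γ⁻¹ ⁻¹' (C' ⁻¹' {i}) ∩ C' ⁻¹' {j})| < ε / 2 := by
      rw [eventually_all]; intro i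
      rw [eventually_all]; intro j
      rw [Filter.eventually_all_finset]; intro γ _
      have hcl : IsClopen (sh γ⁻¹ ⁻¹' (C' ⁻¹' {i}) ∩ C' ⁻¹' {j}) :=
        (((isClopen_discrete {i}).preimage hC'c).preimage (continuous_sh _)).inter
          ((isClopen_discrete {j}).preimage hC'c)
      have := (Metric.tendsto_nhds.1 (hclopen _ hcl)) (ε / 2) (by positivity)
      simpa only [Real.dist_eq] using this
    obtain ⟨m, hm⟩ := hev.exists
    refine ⟨C' ∘ Φ m, hC'c.measurable.comp (hΦm m), fun i j γ hγ => ?_⟩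
    rw [image_act, image_act]
    have hs : α.act γ⁻¹ ⁻¹' ((C' ∘ Φ m) ⁻¹' {i}) ∩ (C' ∘ Φ m) ⁻¹' {j} =
        Φ m ⁻¹' (sh γ⁻¹ ⁻¹' (C' ⁻¹' {i}) ∩ C' ⁻¹' {j}) := by
      ext x
      simp [hΦe]
    rw [hs]
    have h1 := hm i j γ hγ
    let E : Set (Sp Γ k) := {y | C y ≠ C' y}
    have hE : MeasurableSet E := (measurableSet_eq_fun hC hC'c.measurable).compl
    have h2 := abs_measureReal_sub_le (ν : Measure (Sp Γ k))
      (sh γ⁻¹ ⁻¹' (C' ⁻¹' {i}) ∩ C' ⁻¹' {j}) (sh γ⁻¹ ⁻¹' (C ⁻¹' {i}) ∩ C ⁻¹' {j})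
      (sh γ⁻¹ ⁻¹' E ∪ E)
      (by intro y hy
          simp only [E, Set.mem_inter_iff, Set.mem_preimage, Set.mem_singleton_iff,
            Set.mem_union, Set.mem_ofPred_eq] at hy ⊢
          grind)
      (by intro y hy
          simp only [E, Set.mem_inter_iff, Set.mem_preimage, Set.mem_singleton_iff,
            Set.mem_union, Set.mem_ofPred_eq] at hy ⊢
          grind)
    have h3 : (ν : Measure (Sp Γ k)).real (sh γ⁻¹ ⁻¹' E ∪ E) ≤ ε / 4 + ε / 4 := by
      refine (measureReal_union_le _ _).trans (add_le_add ?_ hC')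
      rw [(hinv γ⁻¹).measureReal_preimage hE.nullMeasurableSet]
      exact hC'
    change |μ.real _ - (ν : Measure (Sp Γ k)).real (sh γ⁻¹ ⁻¹' (C ⁻¹' {i}) ∩ C ⁻¹' {j})| ≤ ε
    rw [abs_le] at h2 ⊢
    rw [abs_lt] at h1
    constructor <;> linarith
  · exact hπe.mono fun y hy => hy γ
  · exact (measurable_pi_apply 1).comp measurable_snd
  · -- the rule
    have := (finite_cayleyBall S r).to_subtype
    let R : Sp Γ k → (cayleyBall S r → Fin k) := fun y γ => y.2 γ
    have hR : Continuous R := by fun_prop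
    have hset : {y : Sp Γ k | ballColoring β S r k (fun y => y.2 1) y ∈ L} = R ⁻¹' L := by
      ext y
      have : ballColoring β S r k (fun y => y.2 1) y = R y := by
        funext γ
        simp [ballColoring, β, sh, R]
      simp [this]
    change (ν : Measure (Sp Γ k)) {y : Sp Γ k | ballColoring β S r k (fun y => y.2 1) y ∈ L} = 1
    rw [hset]
    have h1 := hclopen (R ⁻¹' L) ((isClopen_discrete L).preimage hR)
    have h2 : Tendsto (fun n : ℕ => 1 - 1 / ((n : ℝ) + 1)) U (𝓝 (1 - 0)) :=
      (tendsto_const_nhds.sub tendsto_one_div_add_atTop_nhds_zero_nat).mono_left hU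
    have h3 : (1 : ℝ) - 0 ≤ (ν : Measure (Sp Γ k)).real (R ⁻¹' L) :=
      le_of_tendsto_of_tendsto' h2 h1 fun n => hφ n
    have h4 : (ν : Measure (Sp Γ k)).real (R ⁻¹' L) = 1 :=
      le_antisymm measureReal_le_one (by simpa using h3)
    have h5 := (ENNReal.toReal_eq_one_iff _).1 h4
    exact h5
end

section
/- Let Γ be a countable non-amenable group and let f be a free p.m.p. action of Γ on a standard Borel probability space (X, μ). Then there exists a p.m.p. action g of Γ on (X, μ) weakly equivalent to f, and a free p.m.p. action h of the free group F_2 on two generators on (X, μ), such that for μ-almost every x ∈ X the F_2-orbit of x under h is contained in the Γ-orbit of x under g: for every t ∈ F_2 there exists γ ∈ Γ with h_t(x) = g_γ(x). -/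
open MeasureTheory

/-- A group is amenable if it admits a left-translation-invariant finitely additive
probability measure defined on all of its subsets. -/
def IsAmenable (Γ : Type*) [Group Γ] : Prop :=
  ∃ m : Set Γ → ℝ, (∀ A, 0 ≤ m A) ∧ m Set.univ = 1 ∧
    (∀ A B, Disjoint A B → m (A ∪ B) = m A + m B) ∧
    ∀ (γ : Γ) (A : Set Γ), m ((γ * ·) '' A) = m A

open MeasureTheory

section Spectral
open Filter Topology

noncomputable def nsq {Γ : Type*} (ξ : Γ → ℝ) : ℝ := ∑' x, ξ x ^ 2

lemma summable_fs {Γ : Type*} {ξ : Γ → ℝ} (h : ξ.support.Finite) : Summable ξ :=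
  summable_of_hasFiniteSupport h

lemma summable_sq_fs {Γ : Type*} {ξ : Γ → ℝ} (h : ξ.support.Finite) :
    Summable (fun x => ξ x ^ 2) := by
  apply summable_fs
  apply h.subset
  intro x hx
  simpa using hx

lemma fs_translate {Γ : Type*} [Group Γ] {ξ : Γ → ℝ} (h : ξ.support.Finite) (s : Γ) :
    (fun x => ξ (s * x)).support.Finite := by
  have := h.preimage ((mul_right_injective s).injOn (s := (fun x => s * x) ⁻¹' ξ.support))
  exact this.subset (fun x hx => hx)

lemma nsq_translate {Γ : Type*} [Group Γ] (ξ : Γ → ℝ) (s : Γ) :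
    nsq (fun x => ξ (s * x)) = nsq ξ :=
  (Equiv.mulLeft s).tsum_eq (fun x => ξ x ^ 2)

lemma fs_sub {Γ : Type*} {ξ η : Γ → ℝ} (h : ξ.support.Finite) (h' : η.support.Finite) :
    (fun x => ξ x - η x).support.Finite :=
  (h.union h').subset (Function.support_sub ξ η)

theorem amenable_of_almost_inv {Γ : Type*} [Group Γ]
    (H : ∀ S : Finset Γ, ∀ δ : ℝ, 0 < δ → ∃ ξ : Γ → ℝ, ξ.support.Finite ∧
      ∀ s ∈ S, nsq (fun x => ξ (s * x) - ξ x) < δ * nsq ξ) : IsAmenable Γ := by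
  classical
  have H' : ∀ i : Finset Γ × ℕ, ∃ ξ : Γ → ℝ, ξ.support.Finite ∧ 0 < nsq ξ ∧
      ∀ s ∈ i.1, nsq (fun x => ξ (s * x) - ξ x) ≤ (1 / ((i.2 : ℝ) + 1)) ^ 2 * nsq ξ := by
    intro i
    have hp : (0 : ℝ) < (1 / ((i.2 : ℝ) + 1)) ^ 2 := by positivity
    obtain ⟨ξ, h1, h2⟩ := H (insert 1 i.1) _ hp
    refine ⟨ξ, h1, ?_, fun s hs => (h2 s (Finset.mem_insert_of_mem hs)).le⟩
    have := h2 1 (Finset.mem_insert_self _ _)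
    simp only [one_mul, sub_self] at this
    have h0 : nsq (fun _ : Γ => (0 : ℝ)) = 0 := by simp [nsq]
    rw [h0] at this
    exact (pos_iff_pos_of_mul_pos this).1 hp
  choose ξ hfs hpos hinv using H'
  let M : Finset Γ × ℕ → Set Γ → ℝ := fun i A =>
    (∑' x, A.indicator (fun x => ξ i x ^ 2) x) / nsq (ξ i)
  have hs : ∀ i (A : Set Γ), Summable (A.indicator (fun x => ξ i x ^ 2)) := fun i A =>
    (summable_sq_fs (hfs i)).indicator A
  have M0 : ∀ i A, 0 ≤ M i A := fun i A =>
    div_nonneg (tsum_nonneg fun x => Set.indicator_nonneg (fun _ _ => sq_nonneg _) x) (hpos i).le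
  have M1 : ∀ i, M i Set.univ = 1 := fun i => by
    simp only [M, Set.indicator_univ]
    exact div_self (hpos i).ne'
  have Madd : ∀ i A B, Disjoint A B → M i (A ∪ B) = M i A + M i B := fun i A B hAB => by
    simp only [M]
    rw [Set.indicator_union_of_disjoint hAB, ← add_div, ← (hs i A).tsum_add (hs i B)]
  have Mle : ∀ i A, M i A ≤ 1 := fun i A => by
    have := Madd i A Aᶜ disjoint_compl_right
    rw [Set.union_compl_self, M1] at this
    linarith [M0 i Aᶜ]
  have Minv : ∀ i, ∀ s ∈ i.1, ∀ A, |M i ((s * ·) '' A) - M i A| ≤ 3 * (1 / ((i.2 : ℝ) + 1)) := by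
    intro i s hsi A
    set η : ℝ := 1 / ((i.2 : ℝ) + 1) with hη
    have hη0 : 0 < η := by positivity
    have e1 : ∑' x, ((s * ·) '' A).indicator (fun x => ξ i x ^ 2) x
        = ∑' x, A.indicator (fun x => ξ i (s * x) ^ 2) x := by
      rw [← (Equiv.mulLeft s).tsum_eq]
      apply tsum_congr
      intro x
      by_cases hx : x ∈ A
      · have : s * x ∈ (s * ·) '' A := ⟨x, hx, rfl⟩
        simp [hx]
      · simp [hx]
    have hfs' := fs_translate (hfs i) s
    have hS1 := summable_sq_fs hfs'
    have hS2 := summable_sq_fs (hfs i)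
    have hS3 := summable_sq_fs (fs_sub hfs' (hfs i))
    have key : |∑' x, A.indicator (fun x => ξ i (s * x) ^ 2) x
        - ∑' x, A.indicator (fun x => ξ i x ^ 2) x| ≤ 3 * η * nsq (ξ i) := by
      rw [← (hS1.indicator A).tsum_sub (hs i A)]
      have hb : ∀ x, ‖A.indicator (fun x => ξ i (s * x) ^ 2) x - A.indicator (fun x => ξ i x ^ 2) x‖
          ≤ (1 / (2 * η)) * (ξ i (s * x) - ξ i x) ^ 2 + η * (ξ i (s * x) ^ 2) + η * ξ i x ^ 2 := by
        intro x
        have hpt : ∀ u v : ℝ, |u ^ 2 - v ^ 2| ≤ (1 / (2 * η)) * (u - v) ^ 2 + η * u ^ 2 + η * v ^ 2 := by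
          intro u v
          have h2 : |u - v| * |u + v| ≤ (1 / (2 * η)) * (u - v) ^ 2 + (η / 2) * (u + v) ^ 2 := by
            have h3 : 0 ≤ (1 / (2 * η)) * (|u - v| - η * |u + v|) ^ 2 := by positivity
            have h4 : (1 / (2 * η)) * (|u - v| - η * |u + v|) ^ 2
              = (1 / (2 * η)) * |u - v| ^ 2 + (η / 2) * |u + v| ^ 2 - |u - v| * |u + v| := by
              field_simp; ring
            rw [sq_abs, sq_abs] at h4
            linarith
          rw [sq_sub_sq, abs_mul, mul_comm]
          nlinarith [sq_nonneg (u - v)]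
        by_cases hx : x ∈ A
        · simpa [hx] using hpt (ξ i (s * x)) (ξ i x)
        · simp only [hx, not_false_eq_true, Set.indicator_of_notMem, sub_self, norm_zero]
          positivity
      have hsum := (((hS3.mul_left (1 / (2 * η))).add (hS1.mul_left η)).add (hS2.mul_left η))
      have := tsum_of_norm_bounded hsum.hasSum hb
      rw [Real.norm_eq_abs] at this
      refine this.trans ?_
      rw [((hS3.mul_left (1 / (2 * η))).add (hS1.mul_left η)).tsum_add (hS2.mul_left η),
        (hS3.mul_left (1 / (2 * η))).tsum_add (hS1.mul_left η), tsum_mul_left, tsum_mul_left,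
        tsum_mul_left]
      have h5 : ∑' x, ξ i (s * x) ^ 2 = nsq (ξ i) := nsq_translate (ξ i) s
      have h6 : ∑' x, (ξ i (s * x) - ξ i x) ^ 2 ≤ η ^ 2 * nsq (ξ i) := hinv i s hsi
      have h7 : ∑' x, ξ i x ^ 2 = nsq (ξ i) := rfl
      rw [h5, h7]
      have h8 : (1 / (2 * η)) * ∑' x, (ξ i (s * x) - ξ i x) ^ 2 ≤ (1 / (2 * η)) * (η ^ 2 * nsq (ξ i)) :=
        mul_le_mul_of_nonneg_left h6 (by positivity)
      have h9 : (1 / (2 * η)) * (η ^ 2 * nsq (ξ i)) = η / 2 * nsq (ξ i) := by field_simp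
      nlinarith [mul_pos hη0 (hpos i)]
    simp only [M]
    rw [e1, ← sub_div, abs_div, abs_of_pos (hpos i), div_le_iff₀ (hpos i)]
    exact key
  let U : Ultrafilter (Finset Γ × ℕ) := Ultrafilter.of atTop
  have hU : (U : Filter (Finset Γ × ℕ)) ≤ atTop := Ultrafilter.of_le atTop
  have hlim : ∀ A, ∃ L, Tendsto (fun i => M i A) U (𝓝 L) := by
    intro A
    have hc : IsCompact (Set.Icc (0 : ℝ) 1) := isCompact_Icc
    obtain ⟨L, -, hL⟩ := hc.ultrafilter_le_nhds (U.map (fun i => M i A))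
      (by
        rw [Ultrafilter.coe_map, le_principal_iff]
        exact Filter.mem_map.2 (Filter.univ_mem' fun i => ⟨M0 i A, Mle i A⟩))
    exact ⟨L, hL⟩
  choose m hm using hlim
  refine ⟨m, fun A => ge_of_tendsto' (hm A) (fun i => M0 i A), ?_, ?_, ?_⟩
  · refine tendsto_nhds_unique (hm _) ?_
    simp only [M1]
    exact tendsto_const_nhds
  · intro A B hAB
    refine tendsto_nhds_unique (hm _) ?_
    simp only [Madd _ A B hAB]
    exact (hm A).add (hm B)
  · intro s A
    have h1 : Tendsto (fun i => M i ((s * ·) '' A) - M i A) U (𝓝 0) := by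
      have h2 : Tendsto (fun i : Finset Γ × ℕ => 3 * (1 / ((i.2 : ℝ) + 1))) U (𝓝 0) := by
        have h3 : Tendsto (fun i : Finset Γ × ℕ => i.2) atTop atTop := by
          rw [← prod_atTop_atTop_eq]; exact tendsto_snd
        have := (tendsto_one_div_add_atTop_nhds_zero_nat (𝕜 := ℝ)).comp (h3.mono_left hU)
        simpa using this.const_mul 3
      refine squeeze_zero_norm' ?_ h2
      have : ∀ᶠ i : Finset Γ × ℕ in atTop, s ∈ i.1 := by
        refine (eventually_ge_atTop (({s} : Finset Γ), 0)).mono ?_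
        intro i hi
        exact hi.1 (Finset.mem_singleton_self s)
      exact (this.filter_mono hU).mono fun i hi => Minv i s hi A
    have h4 := (hm ((s * ·) '' A)).sub (hm A)
    have := tendsto_nhds_unique h1 h4
    linarith

lemma sum_sq_le_aux {ι : Type*} (S : Finset ι) (v : ι → ℝ) {a b : ι} (ha : a ∈ S) (hb : b ∈ S) :
    (∑ t ∈ S, v t) ^ 2 ≤ (S.card : ℝ) * ∑ t ∈ S, v t ^ 2 - (1 / 2) * (v a - v b) ^ 2 := by
  have h1 : ∑ i ∈ S, ∑ j ∈ S, (v i - v j) ^ 2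
      = 2 * ((S.card : ℝ) * ∑ t ∈ S, v t ^ 2) - 2 * (∑ t ∈ S, v t) ^ 2 := by
    have : ∀ i j, (v i - v j) ^ 2 = v i ^ 2 + v j ^ 2 - 2 * (v i * v j) := fun i j => by ring
    simp only [this, Finset.sum_sub_distrib, Finset.sum_add_distrib, Finset.sum_const,
      nsmul_eq_mul, ← Finset.mul_sum]
    rw [← Finset.sum_mul]
    ring
  have h2 : (v a - v b) ^ 2 ≤ ∑ i ∈ S, ∑ j ∈ S, (v i - v j) ^ 2 :=
    (Finset.single_le_sum (f := fun j => (v a - v j) ^ 2) (fun j _ => sq_nonneg _) hb).trans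
      (Finset.single_le_sum (f := fun i => ∑ j ∈ S, (v i - v j) ^ 2)
        (fun i _ => Finset.sum_nonneg fun j _ => sq_nonneg _) ha)
  linarith

theorem exists_walk {Γ : Type*} [Group Γ] (hna : ¬ IsAmenable Γ) :
    ∃ (p : ℕ → Γ → ENNReal) (ρ : ENNReal), ρ < 1 ∧ (∀ n, ∑' s, p n s = 1) ∧
      (∀ n s, p n s⁻¹ = p n s) ∧ (∀ n s, p n s ≤ ρ ^ n) ∧
      ∀ a b x, ∑' s, p a s * p b (s⁻¹ * x) = p (a + b) x := by
  classical
  have hgap : ∃ S : Finset Γ, ∃ δ : ℝ, 0 < δ ∧ ∀ ξ : Γ → ℝ, ξ.support.Finite →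
      ∃ s ∈ S, δ * nsq ξ ≤ nsq (fun x => ξ (s * x) - ξ x) := by
    by_contra hcon
    push Not at hcon
    exact hna (amenable_of_almost_inv hcon)
  obtain ⟨S₀, δ, hδ, hgap⟩ := hgap
  let S : Finset Γ := insert 1 (S₀ ∪ S₀.image (·⁻¹))
  have h1S : (1 : Γ) ∈ S := Finset.mem_insert_self _ _
  have hSS : ∀ s ∈ S₀, s⁻¹ ∈ S := fun s hs => by
    simp only [S, Finset.mem_insert, Finset.mem_union, Finset.mem_image]
    exact Or.inr (Or.inr ⟨s, hs, rfl⟩)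
  have hSinv : ∀ s, s⁻¹ ∈ S ↔ s ∈ S := by
    intro s
    simp only [S, Finset.mem_insert, Finset.mem_union, Finset.mem_image, inv_eq_one]
    constructor
    · rintro (h | h | ⟨a, ha, h⟩)
      · exact Or.inl h
      · exact Or.inr (Or.inr ⟨s⁻¹, h, inv_inv s⟩)
      · exact Or.inr (Or.inl (inv_injective h ▸ ha))
    · rintro (h | h | ⟨a, ha, h⟩)
      · exact Or.inl h
      · exact Or.inr (Or.inr ⟨s, h, rfl⟩)
      · exact Or.inr (Or.inl (by rw [← h, inv_inv]; exact ha))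
  set k : ℝ := (S.card : ℝ) with hk
  have hcard : 0 < S.card := Finset.card_pos.2 ⟨1, h1S⟩
  have hkpos : 0 < k := by rw [hk]; exact_mod_cast hcard
  let A : (Γ → ℝ) → Γ → ℝ := fun ξ x => (∑ s ∈ S, ξ (s⁻¹ * x)) / k
  have hAfs : ∀ ξ : Γ → ℝ, ξ.support.Finite → (A ξ).support.Finite := by
    intro ξ hξ
    have : (A ξ).support ⊆ ⋃ s ∈ S, (fun x => ξ (s⁻¹ * x)).support := by
      intro x hx
      by_contra hcon
      simp only [Set.mem_iUnion, not_exists, Function.mem_support, not_not] at hcon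
      apply hx
      simp only [A]
      rw [Finset.sum_eq_zero hcon, zero_div]
    exact (Set.Finite.biUnion S.finite_toSet fun s _ => fs_translate hξ s⁻¹).subset this
  set r : ℝ := max 0 (1 - δ / (2 * k ^ 2)) with hr
  have hr0 : 0 ≤ r := le_max_left _ _
  have hr1 : r < 1 := by
    rw [hr]
    apply max_lt one_pos
    have : 0 < δ / (2 * k ^ 2) := by positivity
    linarith
  have hAN : ∀ ξ : Γ → ℝ, ξ.support.Finite → nsq (A ξ) ≤ r * nsq ξ := by
    intro ξ hξ
    obtain ⟨s, hs, hgs⟩ := hgap ξ hξ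
    have hn0 : 0 ≤ nsq ξ := tsum_nonneg fun x => sq_nonneg _
    have hpt : ∀ x, (A ξ x) ^ 2 ≤
        (k * ∑ t ∈ S, ξ (t⁻¹ * x) ^ 2 - (1 / 2) * (ξ (s * x) - ξ x) ^ 2) / k ^ 2 := by
      intro x
      have := sum_sq_le_aux S (fun t => ξ (t⁻¹ * x)) (hSS s hs) h1S
      simp only [inv_inv, inv_one, one_mul] at this
      simp only [A]
      rw [div_pow]
      exact div_le_div_of_nonneg_right this (by positivity)
    have hsm : ∀ t ∈ S, Summable fun x => ξ (t⁻¹ * x) ^ 2 := fun t _ =>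
      summable_sq_fs (fs_translate hξ t⁻¹)
    have hs2 := summable_sq_fs (fs_sub (fs_translate hξ s) hξ)
    have hs1 := (summable_sum hsm).mul_left k
    have hle := Summable.tsum_le_tsum hpt (summable_sq_fs (hAfs ξ hξ))
      ((hs1.sub (hs2.mul_left (1 / 2))).div_const (k ^ 2))
    rw [tsum_div_const, hs1.tsum_sub (hs2.mul_left (1 / 2)), tsum_mul_left, tsum_mul_left,
      Summable.tsum_finsetSum hsm] at hle
    have e1 : ∀ t ∈ S, ∑' x, ξ (t⁻¹ * x) ^ 2 = nsq ξ := fun t _ => nsq_translate ξ t⁻¹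
    rw [Finset.sum_congr rfl e1, Finset.sum_const, nsmul_eq_mul, ← hk] at hle
    have e2 : ∑' x, (ξ (s * x) - ξ x) ^ 2 = nsq (fun x => ξ (s * x) - ξ x) := rfl
    rw [e2] at hle
    calc nsq (A ξ) ≤ _ := hle
      _ ≤ (k * (k * nsq ξ) - 1 / 2 * (δ * nsq ξ)) / k ^ 2 := by
          apply div_le_div_of_nonneg_right _ (by positivity)
          linarith
      _ = (1 - δ / (2 * k ^ 2)) * nsq ξ := by field_simp
      _ ≤ r * nsq ξ := mul_le_mul_of_nonneg_right (le_max_right _ _) hn0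
  let q : ℕ → Γ → ℝ := fun n => A^[n] (Pi.single 1 1)
  have hq1 : ∀ n x, q (n + 1) x = (∑ s ∈ S, q n (s⁻¹ * x)) / k := by
    intro n x
    simp only [q, Function.iterate_succ', Function.comp]
    rfl
  have hqfs : ∀ n, (q n).support.Finite := by
    intro n
    induction n with
    | zero =>
      simp only [q, Function.iterate_zero, id]
      exact (Set.finite_singleton 1).subset Pi.support_single_subset
    | succ n ih =>
      simp only [q, Function.iterate_succ', Function.comp]
      exact hAfs _ ih
  have hqN : ∀ n, nsq (q n) ≤ r ^ n := by
    intro n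
    induction n with
    | zero =>
      simp only [q, Function.iterate_zero, id, pow_zero, nsq]
      rw [tsum_eq_single 1]
      · simp
      · intro b hb
        simp [hb]
    | succ n ih =>
      have := hAN _ (hqfs n)
      simp only [q, Function.iterate_succ', Function.comp]
      calc _ ≤ r * nsq (q n) := this
        _ ≤ r * r ^ n := mul_le_mul_of_nonneg_left ih hr0
        _ = r ^ (n + 1) := by ring
  have hq0 : ∀ n x, 0 ≤ q n x := by
    intro n
    induction n with
    | zero =>
      intro x
      simp only [q, Function.iterate_zero, id, Pi.single_apply]
      split_ifs <;> norm_num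
    | succ n ih =>
      intro x
      rw [hq1]
      exact div_nonneg (Finset.sum_nonneg fun s _ => ih _) hkpos.le
  have hqle : ∀ n x, q n x ≤ (Real.sqrt r) ^ n := by
    intro n x
    have h1 : q n x ^ 2 ≤ nsq (q n) :=
      (summable_sq_fs (hqfs n)).le_tsum x (fun y _ => sq_nonneg _)
    have h2 : q n x ^ 2 ≤ ((Real.sqrt r) ^ n) ^ 2 := by
      rw [← pow_mul, mul_comm, pow_mul, Real.sq_sqrt hr0]
      exact h1.trans (hqN n)
    exact le_of_sq_le_sq h2 (by positivity)
  let p : ℕ → Γ → ENNReal := fun n x => ENNReal.ofReal (q n x)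
  let c : ENNReal := ENNReal.ofReal (1 / k)
  have hcS : ∑ s ∈ S, c = 1 := by
    rw [Finset.sum_const, nsmul_eq_mul, ← ENNReal.ofReal_natCast, ← ENNReal.ofReal_mul (by positivity),
      ← hk, mul_one_div_cancel hkpos.ne', ENNReal.ofReal_one]
  have hp0 : ∀ x, p 0 x = if x = 1 then 1 else 0 := by
    intro x
    simp only [p, q, Function.iterate_zero, id, Pi.single_apply]
    split_ifs <;> simp
  have hp1 : ∀ n x, p (n + 1) x = ∑ s ∈ S, c * p n (s⁻¹ * x) := by
    intro n x
    simp only [p, c, hq1]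
    rw [← Finset.mul_sum, ← ENNReal.ofReal_sum_of_nonneg (fun s _ => hq0 _ _),
      ← ENNReal.ofReal_mul (by positivity)]
    congr 1
    ring
  have hconv : ∀ a b x, ∑' s, p a s * p b (s⁻¹ * x) = p (a + b) x := by
    intro a b
    induction a with
    | zero =>
      intro x
      rw [tsum_eq_single 1]
      · simp [hp0]
      · intro s hs
        simp [hp0, hs]
    | succ a ih =>
      intro x
      rw [show a + 1 + b = (a + b) + 1 by ring, hp1]
      simp only [hp1 a, Finset.sum_mul]
      rw [Summable.tsum_finsetSum (fun _ _ => ENNReal.summable)]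
      apply Finset.sum_congr rfl
      intro s _
      rw [← ih, ← ENNReal.tsum_mul_left, ← (Equiv.mulLeft s).tsum_eq]
      apply tsum_congr
      intro t
      simp [mul_assoc]
  have hp1' : ∀ x, p 1 x = if x ∈ S then c else 0 := by
    intro x
    rw [hp1 0]
    simp only [hp0, inv_mul_eq_one, mul_ite, mul_one, mul_zero]
    rw [Finset.sum_ite_eq']
  have hsym1 : ∀ x, p 1 x⁻¹ = p 1 x := by
    intro x
    simp only [hp1', hSinv]
  have hsym : ∀ n x, p n x⁻¹ = p n x := by
    intro n
    induction n with
    | zero => intro x; simp [hp0]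
    | succ n ih =>
      intro x
      rw [show p (n + 1) x⁻¹ = p (1 + n) x⁻¹ by rw [add_comm], ← hconv 1 n, ← hconv n 1,
        ← (Equiv.mulLeft x⁻¹).tsum_eq]
      apply tsum_congr
      intro t
      simp only [Equiv.coe_mulLeft, mul_inv_rev, inv_inv]
      rw [mul_comm, mul_assoc, mul_inv_cancel, mul_one, ih, ← hsym1, mul_inv_rev, inv_inv]
  refine ⟨p, ENNReal.ofReal (Real.sqrt r), ?_, ?_, hsym, ?_, hconv⟩
  · rw [← ENNReal.ofReal_one]
    exact (ENNReal.ofReal_lt_ofReal_iff one_pos).2 (by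
      rw [Real.sqrt_lt' one_pos]; simpa using hr1)
  · intro n
    induction n with
    | zero =>
      rw [tsum_eq_single 1]
      · simp [hp0]
      · intro s hs
        simp [hp0, hs]
    | succ n ih =>
      simp only [hp1]
      rw [Summable.tsum_finsetSum (fun _ _ => ENNReal.summable), ← hcS]
      apply Finset.sum_congr rfl
      intro s _
      rw [ENNReal.tsum_mul_left]
      have : ∑' x, p n (s⁻¹ * x) = 1 := by
        rw [← ih]; exact (Equiv.mulLeft s⁻¹).tsum_eq (p n)
      rw [this, mul_one]
  · intro n s
    rw [← ENNReal.ofReal_pow (Real.sqrt_nonneg _)]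
    exact ENNReal.ofReal_le_ofReal (hqle n s)

end Spectral

open MeasureTheory

section Graph
open scoped Classical ENNReal

abbrev Lab (Γ : Type*) := Γ × ℕ → Γ

noncomputable def beta {Γ : Type*} [MeasurableSpace Γ] (pm : ℕ → Measure Γ)
    [∀ n, IsProbabilityMeasure (pm n)] : Measure (Lab Γ) :=
  Measure.infinitePi (fun e : Γ × ℕ => pm e.2)

instance beta_prob {Γ : Type*} [MeasurableSpace Γ] (pm : ℕ → Measure Γ)
    [∀ n, IsProbabilityMeasure (pm n)] : IsProbabilityMeasure (beta pm) := by
  unfold beta; infer_instance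

def shiftFun {Γ : Type*} [Group Γ] (γ : Γ) (ω : Lab Γ) : Lab Γ := fun e => ω (e.1 * γ, e.2)

lemma measurable_shiftFun {Γ : Type*} [Group Γ] [MeasurableSpace Γ] (γ : Γ) :
    Measurable (shiftFun γ : Lab Γ → Lab Γ) := by
  unfold shiftFun
  fun_prop

noncomputable def shift {Γ : Type*} [Group Γ] [MeasurableSpace Γ] (pm : ℕ → Measure Γ)
    [∀ n, IsProbabilityMeasure (pm n)] : PMP Γ (Lab Γ) (beta pm) where
  act := shiftFun
  measurable := measurable_shiftFun
  preserves := fun γ => by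
    refine ⟨measurable_shiftFun γ, ?_⟩
    have hinj : Function.Injective (fun e : Γ × ℕ => (e.1 * γ, e.2)) := by
      rintro ⟨a, i⟩ ⟨b, j⟩ h
      simpa using h
    exact Measure.map_infinitePi_infinitePi_of_inj (P := fun e : Γ × ℕ => pm e.2) hinj
  act_one := fun ω => by funext e; simp [shiftFun]
  act_mul := fun a b ω => by funext e; simp [shiftFun, mul_assoc]

def StepE {Γ : Type*} [Group Γ] (ω : Lab Γ) (n : ℕ) (E : Finset (Γ × ℕ)) (γ γ' : Γ) : Prop :=
  ∃ i ≤ n, ((γ, i) ∉ E ∧ ω (γ, i) * γ = γ') ∨ ((γ', i) ∉ E ∧ ω (γ', i) * γ' = γ)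

def WalkE {Γ : Type*} [Group Γ] (ω : Lab Γ) (n : ℕ) (E : Finset (Γ × ℕ)) : ℕ → Γ → Prop
  | 0, γ => γ = 1
  | k + 1, γ => ∃ γ', StepE ω n E γ γ' ∧ WalkE ω n E k γ'

def Trail {Γ : Type*} [Group Γ] (ω : Lab Γ) (n : ℕ) : ℕ → Finset (Γ × ℕ) → Γ → Prop
  | 0, _, γ => γ = 1
  | k + 1, E, γ => ∃ i ≤ n, ((γ, i) ∉ E ∧ Trail ω n k (insert (γ, i) E) (ω (γ, i) * γ)) ∨
      ∃ s, (s⁻¹ * γ, i) ∉ E ∧ ω (s⁻¹ * γ, i) = s ∧ Trail ω n k (insert (s⁻¹ * γ, i) E) (s⁻¹ * γ)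

/-- Label `ω` has a bad edge of level `n` at the identity. -/
def Bad {Γ : Type*} [Group Γ] (n : ℕ) (ω : Lab Γ) : Prop :=
  Relation.ReflTransGen (StepE ω n {(1, n)}) (ω (1, n)) 1

lemma WalkE_of_conn {Γ : Type*} [Group Γ] {ω : Lab Γ} {n : ℕ} {E : Finset (Γ × ℕ)} {γ : Γ}
    (h : Relation.ReflTransGen (StepE ω n E) γ 1) : ∃ k, WalkE ω n E k γ := by
  induction h using Relation.ReflTransGen.head_induction_on with
  | refl => exact ⟨0, rfl⟩
  | head h1 _ ih =>
    obtain ⟨k, hk⟩ := ih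
    exact ⟨k + 1, _, h1, hk⟩

lemma conn_of_WalkE {Γ : Type*} [Group Γ] {ω : Lab Γ} {n : ℕ} {E : Finset (Γ × ℕ)} (k : ℕ) :
    ∀ {γ : Γ}, WalkE ω n E k γ → Relation.ReflTransGen (StepE ω n E) γ 1 := by
  induction k with
  | zero => intro γ h; rw [show γ = 1 from h]
  | succ k ih =>
    rintro γ ⟨γ', h1, h2⟩
    exact Relation.ReflTransGen.head h1 (ih h2)

/-- A walk either avoids the edge `e`, or visits any endpoint of it. -/
lemma walk_avoid {Γ : Type*} [Group Γ] {ω : Lab Γ} {n : ℕ} {E : Finset (Γ × ℕ)} (e : Γ × ℕ) (k : ℕ) :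
    ∀ {γ : Γ}, WalkE ω n E k γ → WalkE ω n (insert e E) k γ ∨
      ((∃ j ≤ k, WalkE ω n E j e.1) ∧ ∃ j ≤ k, WalkE ω n E j (ω e * e.1)) := by
  induction k with
  | zero => intro γ h; exact Or.inl h
  | succ k ih =>
    rintro γ ⟨γ', ⟨i, hi, hst⟩, h2⟩
    have hw : WalkE ω n E (k + 1) γ := ⟨γ', ⟨i, hi, hst⟩, h2⟩
    rcases ih h2 with h3 | ⟨⟨j, hj, h3⟩, ⟨j', hj', h3'⟩⟩
    · rcases hst with ⟨h4, h5⟩ | ⟨h4, h5⟩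
      · by_cases he : (γ, i) = e
        · subst he
          exact Or.inr ⟨⟨k + 1, le_rfl, hw⟩, ⟨k, by omega, by simpa [h5] using h2⟩⟩
        · exact Or.inl ⟨γ', ⟨i, hi, Or.inl ⟨by simp [he, h4], h5⟩⟩, h3⟩
      · by_cases he : (γ', i) = e
        · subst he
          exact Or.inr ⟨⟨k, by omega, h2⟩, ⟨k + 1, le_rfl, by simpa [h5] using hw⟩⟩
        · exact Or.inl ⟨γ', ⟨i, hi, Or.inr ⟨by simp [he, h4], h5⟩⟩, h3⟩
    · exact Or.inr ⟨⟨j, by omega, h3⟩, ⟨j', by omega, h3'⟩⟩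

lemma trail_of_walk {Γ : Type*} [Group Γ] {ω : Lab Γ} {n : ℕ} (k : ℕ) :
    ∀ {E : Finset (Γ × ℕ)} {γ : Γ}, WalkE ω n E k γ → ∃ k', Trail ω n k' E γ := by
  induction k using Nat.strong_induction_on with
  | _ k ih =>
    intro E γ hw
    by_cases hmin : ∃ j < k, WalkE ω n E j γ
    · obtain ⟨j, hj, hwj⟩ := hmin
      exact ih j hj hwj
    · push Not at hmin
      cases k with
      | zero => exact ⟨0, hw⟩
      | succ k =>
        obtain ⟨γ', ⟨i, hi, hst⟩, h2⟩ := hw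
        rcases hst with ⟨h4, h5⟩ | ⟨h4, h5⟩
        · rcases walk_avoid (γ, i) k h2 with h3 | ⟨⟨j, hj, h3⟩, -⟩
          · obtain ⟨k', hk'⟩ := ih k (by omega) h3
            exact ⟨k' + 1, i, hi, Or.inl ⟨h4, by rw [h5]; exact hk'⟩⟩
          · exact absurd h3 (hmin j (by omega))
        · rcases walk_avoid (γ', i) k h2 with h3 | ⟨-, ⟨j, hj, h3⟩⟩
          · obtain ⟨k', hk'⟩ := ih k (by omega) h3
            have e : (ω (γ', i))⁻¹ * γ = γ' := by rw [← h5]; group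
            exact ⟨k' + 1, i, hi, Or.inr ⟨ω (γ', i), by rw [e]; exact ⟨h4, rfl, hk'⟩⟩⟩
          · rw [h5] at h3
            exact absurd h3 (hmin j (by omega))

noncomputable def Wt {Γ : Type*} [Group Γ] (p : ℕ → Γ → ℝ≥0∞) (n : ℕ) : ℕ → Γ → ℝ≥0∞
  | 0, γ => if γ = 1 then 1 else 0
  | k + 1, γ => ∑ i ∈ Finset.range (n + 1), ∑' s, p i s * (Wt p n k (s * γ) + Wt p n k (s⁻¹ * γ))

def cyl {Γ : Type*} (E : Finset (Γ × ℕ)) (v : Γ × ℕ → Γ) : Set (Lab Γ) := {ω | ∀ e ∈ E, ω e = v e}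

lemma beta_cyl {Γ : Type*} [MeasurableSpace Γ] [MeasurableSingletonClass Γ] (pm : ℕ → Measure Γ)
    [∀ n, IsProbabilityMeasure (pm n)] (E : Finset (Γ × ℕ)) (v : Γ × ℕ → Γ) :
    beta pm (cyl E v) = ∏ e ∈ E, pm e.2 {v e} := by
  rw [← Measure.infinitePi_pi (μ := fun e : Γ × ℕ => pm e.2) (t := fun e => {v e})
    (fun e _ => measurableSet_singleton _)]
  congr 1

lemma beta_cyl_insert {Γ : Type*} [MeasurableSpace Γ] [MeasurableSingletonClass Γ]
    (pm : ℕ → Measure Γ)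
    [∀ n, IsProbabilityMeasure (pm n)] (E : Finset (Γ × ℕ)) (v : Γ × ℕ → Γ) (e : Γ × ℕ) (he : e ∉ E)
    (s : Γ) :
    beta pm (cyl (insert e E) (Function.update v e s)) = beta pm (cyl E v) * pm e.2 {s} := by
  rw [beta_cyl, beta_cyl, Finset.prod_insert he, mul_comm]
  congr 1
  · apply Finset.prod_congr rfl
    intro e' he'
    rw [Function.update_of_ne (by rintro rfl; exact he he')]
  · simp

lemma mem_cyl_insert {Γ : Type*} {E : Finset (Γ × ℕ)} {v : Γ × ℕ → Γ} {e : Γ × ℕ} (he : e ∉ E)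
    {ω : Lab Γ} (hω : ω ∈ cyl E v) : ω ∈ cyl (insert e E) (Function.update v e (ω e)) := by
  intro e' he'
  by_cases h : e' = e
  · subst h; simp
  · rw [Function.update_of_ne h]
    exact hω e' ((Finset.mem_insert.1 he').resolve_left h)

lemma trail_bound {Γ : Type*} [Group Γ] [Countable Γ] [MeasurableSpace Γ]
    [MeasurableSingletonClass Γ] (pm : ℕ → Measure Γ)
    [∀ n, IsProbabilityMeasure (pm n)] (n k : ℕ) :
    ∀ (E : Finset (Γ × ℕ)) (v : Γ × ℕ → Γ) (γ : Γ),
      beta pm (cyl E v ∩ {ω | Trail ω n k E γ}) ≤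
        beta pm (cyl E v) * Wt (fun i s => pm i {s}) n k γ := by
  induction k with
  | zero =>
    intro E v γ
    simp only [Trail, Wt]
    by_cases h : γ = 1 <;> simp [h]
  | succ k ih =>
    intro E v γ
    let A : ℕ → Γ → Set (Lab Γ) := fun i s => {ω | ω ∈ cyl E v ∧ (γ, i) ∉ E ∧ ω (γ, i) = s ∧
      Trail ω n k (insert (γ, i) E) (s * γ)}
    let A' : ℕ → Γ → Set (Lab Γ) := fun i s => {ω | ω ∈ cyl E v ∧ (s⁻¹ * γ, i) ∉ E ∧
      ω (s⁻¹ * γ, i) = s ∧ Trail ω n k (insert (s⁻¹ * γ, i) E) (s⁻¹ * γ)}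
    have hsub : cyl E v ∩ {ω | Trail ω n (k + 1) E γ} ⊆
        ⋃ i ∈ Finset.range (n + 1), ⋃ s, (A i s ∪ A' i s) := by
      rintro ω ⟨h1, i, hi, h2⟩
      simp only [Set.mem_iUnion, Finset.mem_range]
      rcases h2 with ⟨h3, h4⟩ | ⟨s, h3, h4, h5⟩
      · exact ⟨i, by omega, ω (γ, i), Or.inl ⟨h1, h3, rfl, h4⟩⟩
      · exact ⟨i, by omega, s, Or.inr ⟨h1, h3, h4, h5⟩⟩
    have hA : ∀ i s, beta pm (A i s) ≤ beta pm (cyl E v) * (pm i {s} * Wt (fun i s => pm i {s}) n k (s * γ)) := by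
      intro i s
      by_cases hE : (γ, i) ∈ E
      · have : A i s = ∅ := by
          ext ω; simp [A, hE]
        simp [this]
      · have h1 : A i s ⊆ cyl (insert (γ, i) E) (Function.update v (γ, i) s) ∩
            {ω | Trail ω n k (insert (γ, i) E) (s * γ)} := by
          rintro ω ⟨h1, h2, h3, h4⟩
          refine ⟨?_, h4⟩
          have := mem_cyl_insert h2 h1
          rwa [h3] at this
        refine (measure_mono h1).trans ((ih _ _ _).trans ?_)
        rw [beta_cyl_insert pm E v _ hE, mul_assoc]
    have hA' : ∀ i s, beta pm (A' i s) ≤ beta pm (cyl E v) * (pm i {s} * Wt (fun i s => pm i {s}) n k (s⁻¹ * γ)) := by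
      intro i s
      by_cases hE : (s⁻¹ * γ, i) ∈ E
      · have : A' i s = ∅ := by
          ext ω; simp [A', hE]
        simp [this]
      · have h1 : A' i s ⊆ cyl (insert (s⁻¹ * γ, i) E) (Function.update v (s⁻¹ * γ, i) s) ∩
            {ω | Trail ω n k (insert (s⁻¹ * γ, i) E) (s⁻¹ * γ)} := by
          rintro ω ⟨h1, h2, h3, h4⟩
          refine ⟨?_, h4⟩
          have := mem_cyl_insert h2 h1
          rwa [h3] at this
        refine (measure_mono h1).trans ((ih _ _ _).trans ?_)
        rw [beta_cyl_insert pm E v _ hE, mul_assoc]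
    calc beta pm (cyl E v ∩ {ω | Trail ω n (k + 1) E γ})
        ≤ beta pm (⋃ i ∈ Finset.range (n + 1), ⋃ s, (A i s ∪ A' i s)) := measure_mono hsub
      _ ≤ ∑ i ∈ Finset.range (n + 1), beta pm (⋃ s, (A i s ∪ A' i s)) :=
          measure_biUnion_finset_le _ _
      _ ≤ ∑ i ∈ Finset.range (n + 1), ∑' s, beta pm (cyl E v) *
            (pm i {s} * (Wt (fun i s => pm i {s}) n k (s * γ) + Wt (fun i s => pm i {s}) n k (s⁻¹ * γ))) := by
          apply Finset.sum_le_sum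
          intro i _
          refine (measure_iUnion_le _).trans (ENNReal.tsum_le_tsum fun s => ?_)
          refine (measure_union_le _ _).trans ?_
          rw [mul_add, mul_add]
          exact add_le_add (hA i s) (hA' i s)
      _ = beta pm (cyl E v) * Wt (fun i s => pm i {s}) n (k + 1) γ := by
          simp only [Wt, ENNReal.tsum_mul_left, Finset.mul_sum]

lemma Wt_bound {Γ : Type*} [Group Γ] (p : ℕ → Γ → ℝ≥0∞) (ρ : ℝ≥0∞)
    (hsym : ∀ n s, p n s⁻¹ = p n s) (hle : ∀ n s, p n s ≤ ρ ^ n)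
    (hconv : ∀ a b x, ∑' s, p a s * p b (s⁻¹ * x) = p (a + b) x) (n0 : ℕ)
    (hρ : ∀ N, ∑ i ∈ Finset.range N, 2 * ρ ^ (i + n0) ≤ 1 / 2) (n k : ℕ) :
    ∀ m x, ∑' s, p m s * Wt (fun i => p (i + n0)) n k (s⁻¹ * x) ≤ ρ ^ m * (1 / 2) ^ k := by
  induction k with
  | zero =>
    intro m x
    rw [tsum_eq_single x]
    · simp [Wt, hle]
    · intro s hs
      have : ¬ (s⁻¹ * x = 1) := by rw [inv_mul_eq_one]; exact hs
      simp [Wt, this]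
  | succ k ih =>
    intro m x
    set W := Wt (fun i => p (i + n0)) n k with hW
    have e1 : ∀ i y, ∑' s, p (i + n0) s * (W (s * y) + W (s⁻¹ * y)) =
        2 * ∑' s, p (i + n0) s * W (s⁻¹ * y) := by
      intro i y
      simp only [mul_add]
      rw [ENNReal.tsum_add, two_mul]
      congr 1
      rw [← (Equiv.inv Γ).tsum_eq]
      simp [hsym]
    have e2 : ∀ i, ∑' s, p m s * (2 * ∑' t, p (i + n0) t * W (t⁻¹ * (s⁻¹ * x)))
        = 2 * ∑' u, p (m + (i + n0)) u * W (u⁻¹ * x) := by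
      intro i
      have : ∀ s, ∑' t, p (i + n0) t * W (t⁻¹ * (s⁻¹ * x)) =
          ∑' u, p (i + n0) (s⁻¹ * u) * W (u⁻¹ * x) := by
        intro s
        rw [← (Equiv.mulLeft s⁻¹).tsum_eq]
        apply tsum_congr
        intro u
        simp [mul_assoc]
      simp only [this]
      simp only [← hconv m (i + n0), ← ENNReal.tsum_mul_left, ← ENNReal.tsum_mul_right]
      rw [ENNReal.tsum_comm]
      apply tsum_congr; intro u; apply tsum_congr; intro s
      ring
    calc ∑' s, p m s * Wt (fun i => p (i + n0)) n (k + 1) (s⁻¹ * x)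
        = ∑' s, ∑ i ∈ Finset.range (n + 1), p m s * (2 * ∑' t, p (i + n0) t * W (t⁻¹ * (s⁻¹ * x))) := by
          apply tsum_congr; intro s
          rw [Wt, Finset.mul_sum]
          apply Finset.sum_congr rfl
          intro i _
          rw [← e1]
      _ = ∑ i ∈ Finset.range (n + 1), 2 * ∑' u, p (m + (i + n0)) u * W (u⁻¹ * x) := by
          rw [Summable.tsum_finsetSum (fun _ _ => ENNReal.summable)]
          apply Finset.sum_congr rfl
          intro i _
          exact e2 i
      _ ≤ ∑ i ∈ Finset.range (n + 1), 2 * (ρ ^ (m + (i + n0)) * (1 / 2) ^ k) := by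
          gcongr with i _
          exact ih _ _
      _ = (ρ ^ m * (1 / 2) ^ k) * ∑ i ∈ Finset.range (n + 1), 2 * ρ ^ (i + n0) := by
          rw [Finset.mul_sum]
          apply Finset.sum_congr rfl
          intro i _
          rw [pow_add]; ring
      _ ≤ (ρ ^ m * (1 / 2) ^ k) * (1 / 2) := by gcongr; exact hρ _
      _ = ρ ^ m * (1 / 2) ^ (k + 1) := by rw [pow_succ]; ring

theorem bad_bound {Γ : Type*} [Group Γ] [Countable Γ] [MeasurableSpace Γ]
    [MeasurableSingletonClass Γ] (pm : ℕ → Measure Γ)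
    [∀ n, IsProbabilityMeasure (pm n)] (p : ℕ → Γ → ℝ≥0∞) (ρ : ℝ≥0∞)
    (hsym : ∀ n s, p n s⁻¹ = p n s) (hle : ∀ n s, p n s ≤ ρ ^ n)
    (hconv : ∀ a b x, ∑' s, p a s * p b (s⁻¹ * x) = p (a + b) x) (n0 : ℕ)
    (hρ : ∀ N, ∑ i ∈ Finset.range N, 2 * ρ ^ (i + n0) ≤ 1 / 2)
    (hpm : ∀ i s, pm i {s} = p (i + n0) s) (n : ℕ) :
    beta pm {ω | Bad n ω} ≤ 2 * ρ ^ (n + n0) := by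
  have hpm' : (fun i s => pm i {s}) = fun i => p (i + n0) := by
    funext i s; exact hpm i s
  have hsub : {ω : Lab Γ | Bad n ω} ⊆ ⋃ k, ⋃ s, (cyl {(1, n)} (fun _ => s) ∩
      {ω | Trail ω n k {(1, n)} s}) := by
    intro ω hω
    obtain ⟨k, hk⟩ := WalkE_of_conn hω
    obtain ⟨k', hk'⟩ := trail_of_walk k hk
    simp only [Set.mem_iUnion]
    exact ⟨k', ω (1, n), by intro e he; rw [Finset.mem_singleton.1 he], hk'⟩
  calc beta pm {ω | Bad n ω} ≤ _ := measure_mono hsub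
    _ ≤ ∑' k, ∑' s, beta pm (cyl {(1, n)} (fun _ => s) ∩ {ω | Trail ω n k {(1, n)} s}) :=
        (measure_iUnion_le _).trans (ENNReal.tsum_le_tsum fun k => measure_iUnion_le _)
    _ ≤ ∑' k, ∑' s, p (n + n0) s * Wt (fun i => p (i + n0)) n k s := by
        gcongr with k s
        refine (trail_bound pm n k _ _ _).trans ?_
        rw [hpm', beta_cyl]
        simp [hpm]
    _ = ∑' k, ∑' s, p (n + n0) s * Wt (fun i => p (i + n0)) n k (s⁻¹ * 1) := by
        apply tsum_congr; intro k
        rw [← (Equiv.inv Γ).tsum_eq]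
        apply tsum_congr; intro s
        simp [hsym]
    _ ≤ ∑' k : ℕ, ρ ^ (n + n0) * (1 / 2) ^ k := by
        gcongr with k
        exact Wt_bound p ρ hsym hle hconv n0 hρ n k _ _
    _ = 2 * ρ ^ (n + n0) := by
        rw [ENNReal.tsum_mul_left, ENNReal.tsum_geometric]
        simp [mul_comm]

end Graph

open MeasureTheory

section Mixing
open scoped Classical ENNReal
open Filter Topology

/-- `U` only depends on the coordinates in `J`. -/
def Dep {Γ : Type*} (J : Set (Γ × ℕ)) (U : Set (Lab Γ)) : Prop :=
  ∀ ω ω' : Lab Γ, (∀ e ∈ J, ω e = ω' e) → ω ∈ U → ω' ∈ U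

lemma dep_indep {ι Ω : Type*} [MeasurableSpace Ω] [Nonempty Ω] (P : ι → Measure Ω)
    [∀ n, IsProbabilityMeasure (P n)] {J K : Set ι} (hJK : Disjoint J K) {U V : Set (ι → Ω)}
    (hU : MeasurableSet U) (hV : MeasurableSet V)
    (dU : ∀ ω ω' : ι → Ω, (∀ e ∈ J, ω e = ω' e) → ω ∈ U → ω' ∈ U)
    (dV : ∀ ω ω' : ι → Ω, (∀ e ∈ K, ω e = ω' e) → ω ∈ V → ω' ∈ V) :
    Measure.infinitePi P (U ∩ V) = Measure.infinitePi P U * Measure.infinitePi P V := by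
  let m : ι → MeasurableSpace (ι → Ω) := fun e => MeasurableSpace.comap (fun ω => ω e) inferInstance
  have hle : ∀ e, m e ≤ MeasurableSpace.pi := fun e => (measurable_pi_apply e).comap_le
  have hind : ProbabilityTheory.iIndep m (Measure.infinitePi P) := by
    have := ProbabilityTheory.iIndepFun_infinitePi (P := P) (X := fun _ (x : Ω) => x)
      (fun _ => measurable_id)
    exact this
  have h2 := ProbabilityTheory.indep_iSup_of_disjoint hle hind hJK
  obtain ⟨c⟩ := ‹Nonempty Ω›
  have key : ∀ (L : Set ι) (W : Set (ι → Ω)), MeasurableSet W →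
      (∀ ω ω' : ι → Ω, (∀ e ∈ L, ω e = ω' e) → ω ∈ W → ω' ∈ W) → MeasurableSet[⨆ e ∈ L, m e] W := by
    intro L W hW dW
    let g : (ι → Ω) → (ι → Ω) := fun ω e => if e ∈ L then ω e else c
    have hg : @Measurable _ _ (⨆ e ∈ L, m e) _ g := by
      rw [@measurable_pi_iff]
      intro e
      by_cases he : e ∈ L
      · simp only [g, he, if_true]
        exact (comap_measurable (fun ω : ι → Ω => ω e)).mono
          (le_iSup₂_of_le (f := fun e _ => m e) e he le_rfl) le_rfl
      · simp only [g, he, if_false]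
        exact measurable_const
    have : W = g ⁻¹' W := by
      ext ω
      constructor
      · exact dW _ _ (fun e he => by simp [g, he])
      · exact dW _ _ (fun e he => by simp [g, he])
    rw [this]
    exact hg hW
  exact (ProbabilityTheory.Indep_iff _ _ _).1 h2 _ _ (key J U hU dU) (key K V hV dV)

/-- Abstract step: the class of sets asymptotically independent of a family. -/
lemma mixing_class {Ω ι : Type*} {m : MeasurableSpace Ω} (μ : Measure Ω) [IsProbabilityMeasure μ]
    (l : Filter ι) (W : ι → Set Ω) (hW : ∀ s, MeasurableSet (W s)) (w : ℝ) (hw : ∀ s, μ.real (W s) = w)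
    (S : Set (Set Ω)) (hS : m = MeasurableSpace.generateFrom S) (hpi : IsPiSystem S)
    (hb : ∀ U ∈ S, Tendsto (fun s => μ.real (U ∩ W s)) l (𝓝 (μ.real U * w)))
    (U : Set Ω) (hU : MeasurableSet U) :
    Tendsto (fun s => μ.real (U ∩ W s)) l (𝓝 (μ.real U * w)) := by
  induction U, hU using MeasurableSpace.induction_on_inter hS hpi with
  | empty => simpa using tendsto_const_nhds
  | basic t ht => exact hb t ht
  | compl t ht ih =>
    have e : ∀ s, μ.real (tᶜ ∩ W s) = w - μ.real (t ∩ W s) := by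
      intro s
      rw [← hw s, ← measureReal_inter_add_sdiff (μ := μ) (s := W s) ht, Set.inter_comm (W s) t,
        Set.diff_eq, Set.inter_comm (W s)]
      ring
    simp only [e]
    rw [probReal_compl_eq_one_sub ht]
    have := ih.const_sub w
    convert this using 2
    ring
  | iUnion f hd hm ih =>
    have e : ∀ s, μ.real ((⋃ i, f i) ∩ W s) = ∑' i, μ.real (f i ∩ W s) := by
      intro s
      rw [Set.iUnion_inter]
      rw [measureReal_def, measure_iUnion (fun i j h => (hd h).mono Set.inter_subset_left Set.inter_subset_left)
        (fun i => (hm i).inter (hW s)), ENNReal.tsum_toReal_eq (fun _ => measure_ne_top _ _)]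
      rfl
    have e' : μ.real (⋃ i, f i) = ∑' i, μ.real (f i) := by
      rw [measureReal_def, measure_iUnion hd hm, ENNReal.tsum_toReal_eq (fun _ => measure_ne_top _ _)]
      rfl
    have hsum : Summable (fun i => μ.real (f i)) := by
      apply ENNReal.summable_toReal
      rw [← measure_iUnion hd hm]
      exact measure_ne_top _ _
    simp only [e]
    rw [e', ← tsum_mul_right]
    refine tendsto_tsum_of_dominated_convergence hsum ih (Eventually.of_forall fun s i => ?_)
    rw [Real.norm_of_nonneg measureReal_nonneg]
    exact measureReal_mono Set.inter_subset_left

variable {Γ : Type*} [Group Γ] [MeasurableSpace Γ]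

lemma mixing_symm (pm : ℕ → Measure Γ) [∀ n, IsProbabilityMeasure (pm n)] {U V : Set (Lab Γ)}
    (hU : MeasurableSet U) (hV : MeasurableSet V)
    (h : Tendsto (fun s => (beta pm).real (U ∩ shiftFun s ⁻¹' V)) cofinite
      (𝓝 ((beta pm).real U * (beta pm).real V))) :
    Tendsto (fun s => (beta pm).real (V ∩ shiftFun s ⁻¹' U)) cofinite
      (𝓝 ((beta pm).real V * (beta pm).real U)) := by
  have h1 := h.comp (inv_injective (G := Γ)).tendsto_cofinite
  rw [mul_comm]
  refine h1.congr (fun s => ?_)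
  simp only [Function.comp]
  rw [measureReal_def, measureReal_def,
    ← ((shift pm).preserves s).measure_preimage (hU.inter (measurable_shiftFun _ hV)).nullMeasurableSet]
  congr 2
  rw [Set.preimage_inter, Set.inter_comm]
  congr 1
  ext ω
  simp [← Set.preimage_comp]
  have : shiftFun s⁻¹ ((shift pm).act s ω) = ω := by
    funext e; simp [shiftFun, shift]
  rw [this]

theorem mixing (pm : ℕ → Measure Γ) [∀ n, IsProbabilityMeasure (pm n)] {U V : Set (Lab Γ)}
    (hU : MeasurableSet U) (hV : MeasurableSet V) :
    Tendsto (fun s => (beta pm).real (U ∩ shiftFun s ⁻¹' V)) cofinite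
      (𝓝 ((beta pm).real U * (beta pm).real V)) := by
  have hinv : ∀ (V : Set (Lab Γ)), MeasurableSet V → ∀ s, (beta pm).real (shiftFun s ⁻¹' V) = (beta pm).real V := by
    intro V hV s
    rw [measureReal_def, measureReal_def,
      ← ((shift pm).preserves s).measure_preimage hV.nullMeasurableSet]
    rfl
  have step1 : ∀ U ∈ measurableCylinders (fun _ : Γ × ℕ => Γ), ∀ V ∈ measurableCylinders (fun _ : Γ × ℕ => Γ),
      Tendsto (fun s => (beta pm).real (U ∩ shiftFun s ⁻¹' V)) cofinite
      (𝓝 ((beta pm).real U * (beta pm).real V)) := by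
    intro U hU V hV
    obtain ⟨E, S, hS, rfl⟩ := (mem_measurableCylinders _).1 hU
    obtain ⟨F, T, hT, rfl⟩ := (mem_measurableCylinders _).1 hV
    have hUm := MeasurableSet.of_mem_measurableCylinders hU
    have hVm := MeasurableSet.of_mem_measurableCylinders hV
    refine tendsto_const_nhds.congr' ?_
    let K : Finset Γ := (E ×ˢ F).image (fun q => q.2.1⁻¹ * q.1.1)
    have hK : ∀ᶠ s in cofinite, s ∉ K := by
      have := K.finite_toSet
      exact this.compl_mem_cofinite
    filter_upwards [hK] with s hs
    rw [← hinv _ hVm s, measureReal_def, measureReal_def, measureReal_def, ← ENNReal.toReal_mul]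
    congr 1
    unfold beta
    rw [dep_indep (fun e : Γ × ℕ => pm e.2) (J := (E : Set (Γ × ℕ))) (K := (fun e : Γ × ℕ => (e.1 * s, e.2)) '' F)]
    · rw [Set.disjoint_left]
      rintro e he ⟨e', he', rfl⟩
      apply hs
      simp only [K, Finset.mem_image, Finset.mem_product]
      exact ⟨((e'.1 * s, e'.2), e'), ⟨he, he'⟩, by simp⟩
    · exact hUm
    · exact measurable_shiftFun s hVm
    · intro ω ω' h hω
      rw [mem_cylinder] at hω ⊢
      convert hω using 1
      funext e
      exact (h e e.2).symm
    · intro ω ω' h hω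
      rw [Set.mem_preimage, mem_cylinder] at hω ⊢
      convert hω using 1
      funext e
      exact (h _ ⟨e, e.2, rfl⟩).symm
  have hgen := (generateFrom_measurableCylinders (α := fun _ : Γ × ℕ => Γ)).symm
  have hpi := isPiSystem_measurableCylinders (α := fun _ : Γ × ℕ => Γ)
  have step2 : ∀ V ∈ measurableCylinders (fun _ : Γ × ℕ => Γ), ∀ U : Set (Lab Γ), MeasurableSet U →
      Tendsto (fun s => (beta pm).real (U ∩ shiftFun s ⁻¹' V)) cofinite
      (𝓝 ((beta pm).real U * (beta pm).real V)) := by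
    intro V hV U hU
    have hVm := MeasurableSet.of_mem_measurableCylinders hV
    exact mixing_class (beta pm) cofinite (fun s => shiftFun s ⁻¹' V)
      (fun s => measurable_shiftFun s hVm) _ (fun s => hinv V hVm s) _ hgen hpi
      (fun U hU => step1 U hU V hV) U hU
  apply mixing_symm pm hV hU
  refine mixing_class (beta pm) cofinite (fun s => shiftFun s ⁻¹' U)
      (fun s => measurable_shiftFun s hU) _ (fun s => hinv U hU s) _ hgen hpi
      (fun V' hV' => ?_) V hV
  exact mixing_symm pm hU (MeasurableSet.of_mem_measurableCylinders hV') (step2 V' hV' U hU)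

end Mixing

open MeasureTheory

section Greedy
open scoped Classical ENNReal
open Filter Topology

variable {Γ : Type*} [Group Γ]

lemma shiftFun_mul (a b : Γ) (ω : Lab Γ) : shiftFun (a * b) ω = shiftFun a (shiftFun b ω) := by
  funext e; simp [shiftFun, mul_assoc]

lemma shiftFun_one (ω : Lab Γ) : shiftFun 1 ω = ω := by
  funext e; simp [shiftFun]

/-- The edge of level `n` at the identity is chosen by its endpoint. -/
def DD (enc : Γ → ℕ) (n : ℕ) : Set (Lab Γ) :=
  {ω | ∀ s', enc s' < enc (ω (1, n)) → ω (s'⁻¹ * ω (1, n), n) ≠ s'}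

def TT (n : ℕ) (ω : Lab Γ) : Lab Γ := shiftFun (ω (1, n)) ω

def TM (n : ℕ) (M : Set (Lab Γ)) : Set (Lab Γ) :=
  {z | ∃ s, shiftFun s⁻¹ z ∈ M ∧ (shiftFun s⁻¹ z) (1, n) = s}

def Mof (enc : Γ → ℕ) (c n : ℕ) (UV : Set (Lab Γ) × Set (Lab Γ)) : Set (Lab Γ) :=
  {ω | n % 2 = c ∧ ω ∈ UV.1 ∧ ω ∈ DD enc n ∧ ¬ Bad n ω ∧ TT n ω ∈ UV.2}

def UVs (enc : Γ → ℕ) (c : ℕ) : ℕ → Set (Lab Γ) × Set (Lab Γ)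
  | 0 => (Set.univ, Set.univ)
  | n + 1 => ((UVs enc c n).1 \ Mof enc c n (UVs enc c n),
      (UVs enc c n).2 \ TM n (Mof enc c n (UVs enc c n)))

def MM (enc : Γ → ℕ) (c n : ℕ) : Set (Lab Γ) := Mof enc c n (UVs enc c n)

lemma DD_unique {enc : Γ → ℕ} (henc : Function.Injective enc) {n : ℕ} {z : Lab Γ} {s t : Γ}
    (hs : shiftFun s⁻¹ z ∈ DD enc n) (hs' : (shiftFun s⁻¹ z) (1, n) = s)
    (ht : shiftFun t⁻¹ z ∈ DD enc n) (ht' : (shiftFun t⁻¹ z) (1, n) = t) : s = t := by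
  have key : ∀ a b : Γ, shiftFun a⁻¹ z ∈ DD enc n → (shiftFun a⁻¹ z) (1, n) = a →
      (shiftFun b⁻¹ z) (1, n) = b → enc a ≤ enc b := by
    intro a b ha ha' hb'
    by_contra hlt
    push Not at hlt
    have := ha b (by rw [ha']; exact hlt)
    rw [ha'] at this
    apply this
    simpa [shiftFun] using hb'
  exact henc (le_antisymm (key s t hs hs' ht') (key t s ht ht' hs'))

lemma UVs_anti1 (enc : Γ → ℕ) (c : ℕ) : Antitone (fun n => (UVs enc c n).1) :=
  antitone_nat_of_succ_le (fun n => by simp only [UVs]; exact Set.sdiff_subset)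

lemma UVs_anti2 (enc : Γ → ℕ) (c : ℕ) : Antitone (fun n => (UVs enc c n).2) :=
  antitone_nat_of_succ_le (fun n => by simp only [UVs]; exact Set.sdiff_subset)

lemma MM_sub_U (enc : Γ → ℕ) (c n : ℕ) : MM enc c n ⊆ (UVs enc c n).1 := fun _ h => h.2.1

lemma TM_sub_V (enc : Γ → ℕ) (c n : ℕ) : TM n (MM enc c n) ⊆ (UVs enc c n).2 := by
  rintro z ⟨s, h1, h2⟩
  have := h1.2.2.2.2
  unfold TT at this
  rwa [h2, ← shiftFun_mul, mul_inv_cancel, shiftFun_one] at this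

lemma MM_unique (enc : Γ → ℕ) (c : ℕ) {n m : ℕ} {ω : Lab Γ} (h1 : ω ∈ MM enc c n)
    (h2 : ω ∈ MM enc c m) : n = m := by
  have key : ∀ a b : ℕ, ω ∈ MM enc c a → ω ∈ MM enc c b → ¬ a < b := by
    intro a b ha hb hab
    have h3 := UVs_anti1 enc c (Nat.succ_le_of_lt hab) (MM_sub_U enc c b hb)
    simp only [UVs] at h3
    exact h3.2 ha
  have := key n m h1 h2
  have := key m n h2 h1
  omega

lemma TM_unique (enc : Γ → ℕ) (c : ℕ) {n m : ℕ} {ω : Lab Γ} (h1 : ω ∈ TM n (MM enc c n))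
    (h2 : ω ∈ TM m (MM enc c m)) : n = m := by
  have key : ∀ a b : ℕ, ω ∈ TM a (MM enc c a) → ω ∈ TM b (MM enc c b) → ¬ a < b := by
    intro a b ha hb hab
    have h3 := UVs_anti2 enc c (Nat.succ_le_of_lt hab) (TM_sub_V enc c b hb)
    simp only [UVs] at h3
    exact h3.2 ha
  have := key n m h1 h2
  have := key m n h2 h1
  omega

lemma StepE_congr {ω ω' : Lab Γ} {n : ℕ} (h : ∀ e : Γ × ℕ, e.2 ≤ n → ω e = ω' e)
    (E : Finset (Γ × ℕ)) : StepE ω n E = StepE ω' n E := by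
  funext a b
  unfold StepE
  apply propext
  apply exists_congr
  intro i
  by_cases hi : i ≤ n
  · rw [h (a, i) hi, h (b, i) hi]
  · simp [hi]

lemma DD_dep (enc : Γ → ℕ) (n : ℕ) : Dep {e : Γ × ℕ | e.2 = n} (DD enc n) := by
  intro ω ω' h hω s' hs'
  rw [← h (1, n) rfl] at hs' ⊢
  rw [← h (_, n) rfl]
  exact hω s' hs'

lemma Bad_congr {n : ℕ} {ω ω' : Lab Γ} (h : ∀ e : Γ × ℕ, e.2 ≤ n → ω e = ω' e) :
    Bad n ω ↔ Bad n ω' := by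
  unfold Bad
  rw [StepE_congr h, h (1, n) le_rfl]

lemma Mof_dep (enc : Γ → ℕ) (c n : ℕ) (UV : Set (Lab Γ) × Set (Lab Γ))
    (h1 : Dep {e : Γ × ℕ | e.2 < n} UV.1) (h2 : Dep {e : Γ × ℕ | e.2 < n} UV.2) :
    Dep {e : Γ × ℕ | e.2 < n + 1} (Mof enc c n UV) := by
  rintro ω ω' h ⟨ha, hb, hc, hd, he⟩
  refine ⟨ha, h1 ω ω' (fun e he => h e (Nat.lt_succ_of_lt he)) hb,
    DD_dep enc n ω ω' (fun e he => h e (by simp only [Set.mem_ofPred_eq] at he ⊢; omega)) hc,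
    ?_, h2 _ _ ?_ he⟩
  · rw [← Bad_congr (ω := ω) (fun e he => h e (Nat.lt_succ_of_le he))]
    exact hd
  · intro e he
    unfold TT
    rw [h (1, n) (Nat.lt_succ_self n)]
    exact h (_, e.2) (Nat.lt_succ_of_lt he)

lemma TM_dep (n m : ℕ) (hnm : n < m) (M : Set (Lab Γ))
    (h1 : Dep {e : Γ × ℕ | e.2 < m} M) : Dep {e : Γ × ℕ | e.2 < m} (TM n M) := by
  rintro ω ω' h ⟨s, ha, hb⟩
  refine ⟨s, h1 _ _ (fun e he => h (_, e.2) he) ha, ?_⟩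
  rw [← hb]
  have := h ((1, n).1 * s⁻¹, n) hnm
  simp only [shiftFun] at hb ⊢
  rw [hb, ← this, hb]

lemma Dep_mono {J K : Set (Γ × ℕ)} (h : J ⊆ K) {U : Set (Lab Γ)} (hU : Dep J U) : Dep K U :=
  fun ω ω' h' => hU ω ω' (fun e he => h' e (h he))

lemma Dep_diff {J : Set (Γ × ℕ)} {U V : Set (Lab Γ)} (hU : Dep J U) (hV : Dep J V) :
    Dep J (U \ V) :=
  fun ω ω' h ⟨h1, h2⟩ => ⟨hU ω ω' h h1, fun h3 => h2 (hV ω' ω (fun e he => (h e he).symm) h3)⟩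

lemma UVs_dep (enc : Γ → ℕ) (c n : ℕ) : Dep {e : Γ × ℕ | e.2 < n} (UVs enc c n).1 ∧
    Dep {e : Γ × ℕ | e.2 < n} (UVs enc c n).2 := by
  induction n with
  | zero => exact ⟨fun _ _ _ _ => trivial, fun _ _ _ _ => trivial⟩
  | succ n ih =>
    have hM := Mof_dep enc c n _ ih.1 ih.2
    have hs : {e : Γ × ℕ | e.2 < n} ⊆ {e : Γ × ℕ | e.2 < n + 1} := fun e he => Nat.lt_succ_of_lt he
    exact ⟨Dep_diff (Dep_mono hs ih.1) hM,
      Dep_diff (Dep_mono hs ih.2) (TM_dep n (n + 1) (Nat.lt_succ_self n) _ hM)⟩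

variable [Countable Γ] [MeasurableSpace Γ] [MeasurableSingletonClass Γ]

lemma meas_coord (e : Γ × ℕ) (s : Γ) : MeasurableSet {ω : Lab Γ | ω e = s} := by
  have h : MeasurableSet ((fun ω : Lab Γ => ω e) ⁻¹' {s}) :=
    (measurable_pi_apply e) (measurableSet_singleton s)
  exact h

lemma meas_StepE (n : ℕ) (E : Finset (Γ × ℕ)) (a b : Γ) :
    MeasurableSet {ω : Lab Γ | StepE ω n E a b} := by
  unfold StepE
  have e : {ω : Lab Γ | ∃ i ≤ n, ((a, i) ∉ E ∧ ω (a, i) * a = b) ∨ ((b, i) ∉ E ∧ ω (b, i) * b = a)}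
     = ⋃ i, ⋃ (_ : i ≤ n), (({ω : Lab Γ | (a, i) ∉ E} ∩ {ω | ω (a, i) = b * a⁻¹}) ∪
        ({ω : Lab Γ | (b, i) ∉ E} ∩ {ω | ω (b, i) = a * b⁻¹})) := by
    ext ω
    simp only [Set.mem_ofPred_eq, Set.mem_iUnion, Set.mem_union, Set.mem_inter_iff, eq_mul_inv_iff_mul_eq,
      exists_prop]
  rw [e]
  exact MeasurableSet.iUnion fun i => MeasurableSet.iUnion fun _ =>
    ((MeasurableSet.const _).inter (meas_coord _ _)).union ((MeasurableSet.const _).inter (meas_coord _ _))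

lemma meas_WalkE (n : ℕ) (E : Finset (Γ × ℕ)) (k : ℕ) : ∀ a : Γ,
    MeasurableSet {ω : Lab Γ | WalkE ω n E k a} := by
  induction k with
  | zero => intro a; exact MeasurableSet.const _
  | succ k ih =>
    intro a
    have : {ω : Lab Γ | WalkE ω n E (k + 1) a} =
        ⋃ b, ({ω : Lab Γ | StepE ω n E a b} ∩ {ω | WalkE ω n E k b}) := by
      ext ω; simp [WalkE]
    rw [this]
    exact MeasurableSet.iUnion fun b => (meas_StepE n E a b).inter (ih b)

lemma meas_split (n : ℕ) (Q : Γ → Lab Γ → Prop) (h : ∀ s, MeasurableSet {ω : Lab Γ | Q s ω}) :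
    MeasurableSet {ω : Lab Γ | Q (ω (1, n)) ω} := by
  have : {ω : Lab Γ | Q (ω (1, n)) ω} = ⋃ s, ({ω : Lab Γ | ω (1, n) = s} ∩ {ω | Q s ω}) := by
    ext ω; simp
  rw [this]
  exact MeasurableSet.iUnion fun s => (meas_coord _ _).inter (h s)

lemma meas_Bad (n : ℕ) : MeasurableSet {ω : Lab Γ | Bad n ω} := by
  have : {ω : Lab Γ | Bad n ω} = ⋃ k, {ω : Lab Γ | WalkE ω n {(1, n)} k (ω (1, n))} := by
    ext ω
    simp only [Set.mem_ofPred_eq, Set.mem_iUnion]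
    exact ⟨WalkE_of_conn, fun ⟨k, hk⟩ => conn_of_WalkE k hk⟩
  rw [this]
  exact MeasurableSet.iUnion fun k => meas_split n (fun s ω => WalkE ω n {(1, n)} k s)
    (fun s => meas_WalkE _ _ _ _)

lemma meas_DD (enc : Γ → ℕ) (n : ℕ) : MeasurableSet (DD enc n) := by
  refine meas_split n (fun s ω => ∀ s', enc s' < enc s → ω (s'⁻¹ * s, n) ≠ s') (fun s => ?_)
  have : {ω : Lab Γ | ∀ s', enc s' < enc s → ω (s'⁻¹ * s, n) ≠ s'} =
      ⋂ s', ⋂ (_ : enc s' < enc s), {ω : Lab Γ | ω (s'⁻¹ * s, n) = s'}ᶜ := by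
    ext ω; simp
  rw [this]
  exact MeasurableSet.iInter fun s' => MeasurableSet.iInter fun _ => (meas_coord _ _).compl

lemma meas_TM (n : ℕ) {M : Set (Lab Γ)} (hM : MeasurableSet M) : MeasurableSet (TM n M) := by
  have : TM n M = ⋃ s, shiftFun s⁻¹ ⁻¹' (M ∩ {ω : Lab Γ | ω (1, n) = s}) := by
    ext ω; simp [TM]
  rw [this]
  exact MeasurableSet.iUnion fun s => measurable_shiftFun _ (hM.inter (meas_coord _ _))

lemma meas_Mof (enc : Γ → ℕ) (c n : ℕ) (UV : Set (Lab Γ) × Set (Lab Γ)) (h1 : MeasurableSet UV.1)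
    (h2 : MeasurableSet UV.2) : MeasurableSet (Mof enc c n UV) := by
  refine (MeasurableSet.const _).inter (h1.inter ((meas_DD enc n).inter ((meas_Bad n).compl.inter ?_)))
  exact meas_split n (fun s ω => shiftFun s ω ∈ UV.2) (fun s => measurable_shiftFun s h2)

lemma meas_UVs (enc : Γ → ℕ) (c n : ℕ) : MeasurableSet (UVs enc c n).1 ∧
    MeasurableSet (UVs enc c n).2 := by
  induction n with
  | zero => exact ⟨MeasurableSet.univ, MeasurableSet.univ⟩
  | succ n ih =>
    have hM := meas_Mof enc c n _ ih.1 ih.2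
    exact ⟨ih.1.diff hM, ih.2.diff (meas_TM n hM)⟩

lemma meas_MM (enc : Γ → ℕ) (c n : ℕ) : MeasurableSet (MM enc c n) :=
  meas_Mof enc c n _ (meas_UVs enc c n).1 (meas_UVs enc c n).2

variable (pm : ℕ → Measure Γ) [∀ n, IsProbabilityMeasure (pm n)]

lemma beta_TM {enc : Γ → ℕ} (henc : Function.Injective enc) (n : ℕ) {M : Set (Lab Γ)}
    (hM : MeasurableSet M) (hMD : M ⊆ DD enc n) : beta pm (TM n M) = beta pm M := by
  have e1 : TM n M = ⋃ s, shiftFun s⁻¹ ⁻¹' (M ∩ {ω : Lab Γ | ω (1, n) = s}) := by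
    ext ω; simp [TM]
  have e2 : M = ⋃ s, (M ∩ {ω : Lab Γ | ω (1, n) = s}) := by
    ext ω; simp
  have hm : ∀ s, MeasurableSet (M ∩ {ω : Lab Γ | ω (1, n) = s}) :=
    fun s => hM.inter (meas_coord _ _)
  rw [e1]
  conv_rhs => rw [e2]
  rw [measure_iUnion, measure_iUnion]
  · apply tsum_congr
    intro s
    exact ((shift pm).preserves s⁻¹).measure_preimage (hm s).nullMeasurableSet
  · intro s t hst
    rw [Function.onFun, Set.disjoint_left]
    rintro ω ⟨_, h1⟩ ⟨_, h2⟩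
    exact hst (h1.symm.trans h2)
  · exact hm
  · intro s t hst
    rw [Function.onFun, Set.disjoint_left]
    rintro ω ⟨h1, h1'⟩ ⟨h2, h2'⟩
    exact hst (DD_unique henc (hMD h1) h1' (hMD h2) h2')
  · intro s
    exact measurable_shiftFun _ (hm s)

lemma beta_DD {enc : Γ → ℕ} (henc : Function.Injective enc) (n : ℕ) :
    2 * beta pm (DD enc n)ᶜ ≤ 1 := by
  have hsub : (DD enc n)ᶜ ⊆ ⋃ s, ⋃ s', {ω : Lab Γ | enc s' < enc s ∧ ω (1, n) = s ∧
      ω (s'⁻¹ * s, n) = s'} := by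
    intro ω hω
    simp only [DD, Set.mem_compl_iff, Set.mem_ofPred_eq, not_forall, not_not] at hω
    obtain ⟨s', h1, h2⟩ := hω
    simp only [Set.mem_iUnion]
    exact ⟨ω (1, n), s', h1, rfl, h2⟩
  have hone : ∑' s, ∑' s', pm n {s} * pm n {s'} = 1 := by
    have : ∑' s, pm n {s} = 1 := by
      have := (pm n).tsum_indicator_apply_singleton Set.univ MeasurableSet.univ
      simpa using this
    simp only [ENNReal.tsum_mul_left, this, mul_one]
  have hb : beta pm (DD enc n)ᶜ ≤ ∑' s, ∑' s', if enc s' < enc s then pm n {s} * pm n {s'} else 0 := by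
    refine (measure_mono hsub).trans ((measure_iUnion_le _).trans (ENNReal.tsum_le_tsum fun s =>
      (measure_iUnion_le _).trans (ENNReal.tsum_le_tsum fun s' => ?_)))
    split_ifs with h
    · have hne : s' ≠ s := by rintro rfl; exact lt_irrefl _ h
      have hne' : ((1 : Γ), n) ≠ (s'⁻¹ * s, n) := by
        intro h'
        have := congrArg Prod.fst h'
        simp only at this
        exact hne (inv_mul_eq_one.1 this.symm)
      have := beta_cyl pm {(1, n), (s'⁻¹ * s, n)} (fun e => if e = (1, n) then s else s')
      rw [Finset.prod_pair hne'] at this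
      simp only [if_true, if_neg hne'.symm] at this
      rw [← this]
      apply measure_mono
      rintro ω ⟨-, h1, h2⟩ e he
      rw [Finset.mem_insert, Finset.mem_singleton] at he
      rcases he with rfl | rfl
      · simpa using h1
      · simpa [hne'.symm] using h2
    · simp [h]
  have hb' : ∑' s, ∑' s', (if enc s' < enc s then pm n {s} * pm n {s'} else 0) =
      ∑' s, ∑' s', (if enc s < enc s' then pm n {s} * pm n {s'} else 0) := by
    rw [ENNReal.tsum_comm]
    simp only [mul_comm]
  calc 2 * beta pm (DD enc n)ᶜ ≤ _ := mul_le_mul_right hb 2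
    _ = ∑' s, ∑' s', ((if enc s' < enc s then pm n {s} * pm n {s'} else 0) +
        (if enc s < enc s' then pm n {s} * pm n {s'} else 0)) := by
        simp only [ENNReal.tsum_add]
        rw [two_mul, hb']
    _ ≤ ∑' s, ∑' s', pm n {s} * pm n {s'} := by
        refine ENNReal.tsum_le_tsum fun s => ENNReal.tsum_le_tsum fun s' => ?_
        split_ifs with h1 h2
        · omega
        · simp
        · simp
        · simp
    _ = 1 := hone

lemma hasSum_measureReal_iUnion' {Ω ι : Type*} [MeasurableSpace Ω] [Countable ι] {μ : Measure Ω}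
    [IsFiniteMeasure μ] {W : ι → Set Ω} (hd : Pairwise (Function.onFun Disjoint W))
    (hm : ∀ i, MeasurableSet (W i)) : HasSum (fun s => μ.real (W s)) (μ.real (⋃ s, W s)) := by
  have h : ∑' s, μ (W s) ≠ ∞ := by
    rw [← measure_iUnion hd hm]
    exact measure_ne_top _ _
  have h1 := ENNReal.hasSum_toReal h
  have h2 : (∑' s, μ (W s)).toReal = μ.real (⋃ s, W s) := by
    rw [measureReal_def, measure_iUnion hd hm]
  rw [← ENNReal.tsum_toReal_eq (fun _ => measure_ne_top _ _), h2] at h1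
  exact h1

lemma half_le_DD {enc : Γ → ℕ} (henc : Function.Injective enc) (n : ℕ) :
    1 / 2 ≤ (beta pm).real (DD enc n) := by
  have h := beta_DD pm henc n
  have h2 : (2 * beta pm (DD enc n)ᶜ).toReal ≤ 1 := by
    have := ENNReal.toReal_mono ENNReal.one_ne_top h
    simpa using this
  rw [ENNReal.toReal_mul, ← measureReal_def, probReal_compl_eq_one_sub (meas_DD enc n)] at h2
  simp at h2
  linarith

/-- Lower bound for the measure of the newly matched points. -/
lemma MM_lower (enc : Γ → ℕ) (c n : ℕ) (hc : n % 2 = c)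
    (a : ℝ) (ha : 0 ≤ a) (K : Finset Γ) (b : ℝ)
    (hK : ∀ s ∉ K, a ≤ (beta pm).real ((UVs enc c n).1 ∩ shiftFun s ⁻¹' (UVs enc c n).2))
    (hb : ∀ s, (beta pm).real {ω : Lab Γ | ω (1, n) = s} ≤ b) :
    a * ((beta pm).real (DD enc n) - K.card * b) - (beta pm).real {ω | Bad n ω} ≤
      (beta pm).real (MM enc c n) := by
  set U := (UVs enc c n).1 with hU
  set V := (UVs enc c n).2 with hV
  let W : Γ → Set (Lab Γ) := fun s => DD enc n ∩ {ω : Lab Γ | ω (1, n) = s}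
  have hWm : ∀ s, MeasurableSet (W s) := fun s => (meas_DD enc n).inter (meas_coord _ _)
  let Q : Γ → Set (Lab Γ) := fun s => (U ∩ shiftFun s ⁻¹' V) ∩ W s
  have hUVm : ∀ s, MeasurableSet (U ∩ shiftFun s ⁻¹' V) := fun s =>
    (meas_UVs enc c n).1.inter (measurable_shiftFun s (meas_UVs enc c n).2)
  have hQm : ∀ s, MeasurableSet (Q s) := fun s => (hUVm s).inter (hWm s)
  have hWd : Pairwise (Function.onFun Disjoint W) := by
    intro s t hst
    rw [Function.onFun, Set.disjoint_left]
    rintro ω ⟨_, h1⟩ ⟨_, h2⟩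
    exact hst (h1.symm.trans h2)
  have hQd : Pairwise (Function.onFun Disjoint Q) := fun s t hst =>
    (hWd hst).mono Set.inter_subset_right Set.inter_subset_right
  have hQ : ∀ s, (beta pm).real (Q s) =
      (beta pm).real (U ∩ shiftFun s ⁻¹' V) * (beta pm).real (W s) := by
    intro s
    rw [measureReal_def, measureReal_def, measureReal_def, ← ENNReal.toReal_mul]
    congr 1
    unfold beta
    refine dep_indep (fun e : Γ × ℕ => pm e.2) (J := {e | e.2 < n}) (K := {e | e.2 = n}) ?_
      (hUVm s) (hWm s) ?_ ?_
    · rw [Set.disjoint_left]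
      intro e (h1 : e.2 < n) (h2 : e.2 = n)
      omega
    · rintro ω ω' h ⟨h1, h2⟩
      exact ⟨(UVs_dep enc c n).1 ω ω' h h1, (UVs_dep enc c n).2 _ _ (fun e he => h (_, e.2) he) h2⟩
    · rintro ω ω' h ⟨h1, h2⟩
      refine ⟨DD_dep enc n ω ω' h h1, ?_⟩
      have h3 := h (1, n) rfl
      exact h3.symm.trans h2
  have hsumW : HasSum (fun s => (beta pm).real (W s)) ((beta pm).real (DD enc n)) := by
    have e : DD enc n = ⋃ s, W s := by ext ω; simp [W]
    rw [e]
    exact hasSum_measureReal_iUnion' hWd hWm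
  have hsumQ : HasSum (fun s => (beta pm).real (Q s)) ((beta pm).real (⋃ s, Q s)) :=
    hasSum_measureReal_iUnion' hQd hQm
  have hle : ⋃ s, Q s ⊆ MM enc c n ∪ {ω | Bad n ω} := by
    intro ω hω
    obtain ⟨s, ⟨h1, h2⟩, h3, h4⟩ := Set.mem_iUnion.1 hω
    by_cases hB : Bad n ω
    · exact Or.inr hB
    · refine Or.inl ⟨hc, h1, h3, hB, ?_⟩
      unfold TT
      rw [show ω (1, n) = s from h4]
      exact h2
  have h1 : (beta pm).real (⋃ s, Q s) ≤ (beta pm).real (MM enc c n) + (beta pm).real {ω | Bad n ω} :=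
    (measureReal_mono hle).trans (measureReal_union_le _ _)
  have hpt : ∀ s, a * ((beta pm).real (W s) - (if s ∈ K then b else 0)) ≤ (beta pm).real (Q s) := by
    intro s
    have hWb : (beta pm).real (W s) ≤ b := (measureReal_mono Set.inter_subset_right).trans (hb s)
    by_cases hs : s ∈ K
    · simp only [hs, if_true]
      have : 0 ≤ (beta pm).real (Q s) := measureReal_nonneg
      nlinarith
    · simp only [hs, if_false, sub_zero]
      rw [hQ s]
      exact mul_le_mul_of_nonneg_right (hK s hs) measureReal_nonneg
  have hsumK : HasSum (fun s => if s ∈ K then b else 0) (K.card * b) := by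
    have := hasSum_sum_of_ne_finset_zero (L := SummationFilter.unconditional Γ) (f := fun s => if s ∈ K then b else 0) (s := K)
      (fun s hs => by simp [hs])
    convert this using 1
    rw [Finset.sum_ite_mem]
    simp
  have h2 := hasSum_le hpt ((hsumW.sub hsumK).mul_left a) hsumQ
  linarith

theorem greedy_complete {enc : Γ → ℕ} (henc : Function.Injective enc) (c : ℕ) (hc : c < 2)
    (b : ℕ → ℝ) (hb0 : Tendsto b atTop (𝓝 0))
    (hb : ∀ n s, (pm n).real {s} ≤ b n) (hBad : ∀ n, (beta pm).real {ω | Bad n ω} ≤ 2 * b n) :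
    beta pm (⋂ n, (UVs enc c n).1) = 0 ∧ beta pm (⋂ n, (UVs enc c n).2) = 0 := by
  have hMD : ∀ n, MM enc c n ⊆ DD enc n := fun n ω h => h.2.2.1
  have hMU : ∀ n, (beta pm).real (UVs enc c (n + 1)).1 =
      (beta pm).real (UVs enc c n).1 - (beta pm).real (MM enc c n) := by
    intro n
    exact measureReal_sdiff (MM_sub_U enc c n) (meas_MM enc c n)
  have hMV : ∀ n, (beta pm).real (UVs enc c (n + 1)).2 =
      (beta pm).real (UVs enc c n).2 - (beta pm).real (MM enc c n) := by
    intro n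
    have : (beta pm).real (TM n (MM enc c n)) = (beta pm).real (MM enc c n) := by
      rw [measureReal_def, measureReal_def, beta_TM pm henc n (meas_MM enc c n) (hMD n)]
    rw [← this]
    exact measureReal_sdiff (TM_sub_V enc c n) (meas_TM n (meas_MM enc c n))
  have hUV : ∀ n, (beta pm).real (UVs enc c n).1 = (beta pm).real (UVs enc c n).2 := by
    intro n
    induction n with
    | zero => rfl
    | succ n ih => rw [hMU, hMV, ih]
  set U := ⋂ n, (UVs enc c n).1 with hU
  set V := ⋂ n, (UVs enc c n).2 with hV
  have tU : Tendsto (fun n => (beta pm).real (UVs enc c n).1) atTop (𝓝 ((beta pm).real U)) := by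
    have := tendsto_measure_iInter_atTop (μ := beta pm)
      (fun n => (meas_UVs enc c n).1.nullMeasurableSet) (UVs_anti1 enc c) ⟨0, measure_ne_top _ _⟩
    exact (ENNReal.tendsto_toReal (measure_ne_top _ _)).comp this
  have tV : Tendsto (fun n => (beta pm).real (UVs enc c n).2) atTop (𝓝 ((beta pm).real V)) := by
    have := tendsto_measure_iInter_atTop (μ := beta pm)
      (fun n => (meas_UVs enc c n).2.nullMeasurableSet) (UVs_anti2 enc c) ⟨0, measure_ne_top _ _⟩
    exact (ENNReal.tendsto_toReal (measure_ne_top _ _)).comp this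
  have huv : (beta pm).real U = (beta pm).real V := by
    refine tendsto_nhds_unique tU ?_
    simp only [hUV]
    exact tV
  have tM : Tendsto (fun n => (beta pm).real (MM enc c n)) atTop (𝓝 0) := by
    have h := tU.sub (tU.comp (tendsto_add_atTop_nat 1))
    rw [sub_self] at h
    refine h.congr (fun n => ?_)
    simp only [Function.comp]
    rw [hMU]; ring
  have hUm : MeasurableSet U := MeasurableSet.iInter fun n => (meas_UVs enc c n).1
  have hVm : MeasurableSet V := MeasurableSet.iInter fun n => (meas_UVs enc c n).2
  have hzero : (beta pm).real U = 0 := by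
    by_contra hne
    have hpos : 0 < (beta pm).real U := lt_of_le_of_ne measureReal_nonneg (Ne.symm hne)
    set u := (beta pm).real U with hu
    have hmix := mixing pm hUm hVm
    rw [← huv, ← hu] at hmix
    have hev := hmix.eventually (lt_mem_nhds (show u * u / 2 < u * u by nlinarith [mul_pos hpos hpos]))
    have hfin : {s | ¬ (u * u / 2 < (beta pm).real (U ∩ shiftFun s ⁻¹' V))}.Finite := hev
    let K := hfin.toFinset
    have hlow : ∀ m : ℕ, (u * u / 2) * (1 / 2 - K.card * b (2 * m + c)) - 2 * b (2 * m + c) ≤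
        (beta pm).real (MM enc c (2 * m + c)) := by
      intro m
      have := MM_lower pm enc c (2 * m + c) (by omega) (u * u / 2) (by positivity) K (b (2 * m + c))
        (by
          intro s hs
          have hs' : u * u / 2 < (beta pm).real (U ∩ shiftFun s ⁻¹' V) := by
            by_contra h
            exact hs (hfin.mem_toFinset.2 h)
          refine hs'.le.trans (measureReal_mono ?_)
          exact Set.inter_subset_inter (Set.iInter_subset _ _)
            (Set.preimage_mono (Set.iInter_subset _ _)))
        (by
          intro s
          refine le_trans (le_of_eq ?_) (hb (2 * m + c) s)
          have := beta_cyl pm {((1 : Γ), 2 * m + c)} (fun _ => s)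
          simp only [Finset.prod_singleton] at this
          rw [measureReal_def, measureReal_def, ← this]
          congr 2
          ext ω
          simp [cyl])
      have h2 := half_le_DD pm henc (2 * m + c)
      have h3 := hBad (2 * m + c)
      have h4 : (u * u / 2) * (1 / 2 - K.card * b (2 * m + c)) ≤
        (u * u / 2) * ((beta pm).real (DD enc (2 * m + c)) - K.card * b (2 * m + c)) := by
        apply mul_le_mul_of_nonneg_left _ (by positivity)
        linarith
      linarith
    have tsub : Tendsto (fun m : ℕ => 2 * m + c) atTop atTop :=
      tendsto_atTop_mono (fun m => by simp only [id]; omega) tendsto_id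
    have tb := hb0.comp tsub
    have t1 : Tendsto (fun m : ℕ => (u * u / 2) * (1 / 2 - K.card * b (2 * m + c)) - 2 * b (2 * m + c))
        atTop (𝓝 ((u * u / 2) * (1 / 2 - K.card * 0) - 2 * 0)) :=
      (((tb.const_mul _).const_sub _).const_mul _).sub (tb.const_mul _)
    have := le_of_tendsto_of_tendsto' t1 (tM.comp tsub) hlow
    nlinarith [mul_pos hpos hpos]
  refine ⟨(measureReal_eq_zero_iff (measure_ne_top _ _)).1 hzero,
    (measureReal_eq_zero_iff (measure_ne_top _ _)).1 (huv ▸ hzero)⟩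

end Greedy

open MeasureTheory

section Comb
open scoped Classical

variable {Γ : Type*} [Group Γ]

lemma StepE_symm {ω : Lab Γ} {n : ℕ} {E : Finset (Γ × ℕ)} {a b : Γ} (h : StepE ω n E a b) :
    StepE ω n E b a := by
  obtain ⟨i, hi, h⟩ := h
  exact ⟨i, hi, h.symm⟩

lemma conn_symm {ω : Lab Γ} {n : ℕ} {E : Finset (Γ × ℕ)} {a b : Γ}
    (h : Relation.ReflTransGen (StepE ω n E) a b) : Relation.ReflTransGen (StepE ω n E) b a := by
  induction h with
  | refl => exact Relation.ReflTransGen.refl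
  | tail _ h2 ih => exact Relation.ReflTransGen.head (StepE_symm h2) ih

lemma bad_transfer {ω : Lab Γ} {γ : Γ} {n : ℕ}
    (h : Relation.ReflTransGen (StepE ω n {(γ, n)}) (ω (γ, n) * γ) γ) : Bad n (shiftFun γ ω) := by
  unfold Bad
  have := Relation.ReflTransGen.lift (p := StepE (shiftFun γ ω) n {(1, n)}) (fun a => a * γ⁻¹) ?_ _ _ h
  · simpa [shiftFun, Function.onFun] using this
  · rintro a b ⟨i, hi, h⟩
    refine ⟨i, hi, ?_⟩
    have key : ∀ u v : Γ, (u, i) ∉ ({(γ, n)} : Finset (Γ × ℕ)) ∧ ω (u, i) * u = v →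
        (u * γ⁻¹, i) ∉ ({(1, n)} : Finset (Γ × ℕ)) ∧
          shiftFun γ ω (u * γ⁻¹, i) * (u * γ⁻¹) = v * γ⁻¹ := by
      rintro u v ⟨h1, h2⟩
      constructor
      · simp only [Finset.mem_singleton, Prod.mk.injEq, not_and] at h1 ⊢
        intro h3
        apply h1
        exact mul_inv_eq_one.1 h3
      · simp [shiftFun, ← h2, mul_assoc]
    rcases h with h | h
    · exact Or.inl (key _ _ h)
    · exact Or.inr (key _ _ h)

/-- Edge `e` joins `a` to `b` in the direction recorded by `σ`. -/
def Joins (ω : Lab Γ) (e : Γ × ℕ) (σ : Bool) (a b : Γ) : Prop :=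
  if σ then e.1 = a ∧ ω e * e.1 = b else e.1 = b ∧ ω e * e.1 = a

lemma step_of_joins {ω : Lab Γ} {e : Γ × ℕ} {σ : Bool} {a b : Γ} (h : Joins ω e σ a b) {n : ℕ}
    (hn : e.2 ≤ n) {E : Finset (Γ × ℕ)} (he : e ∉ E) : StepE ω n E a b := by
  obtain ⟨g, i⟩ := e
  unfold Joins at h
  split_ifs at h with hσ
  · obtain ⟨rfl, h2⟩ := h
    exact ⟨i, hn, Or.inl ⟨he, h2⟩⟩
  · obtain ⟨rfl, h2⟩ := h
    exact ⟨i, hn, Or.inr ⟨he, h2⟩⟩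

theorem walk_inj (ω : Lab Γ) (k : ℕ) (γ : ℕ → Γ) (e : ℕ → Γ × ℕ) (σ : ℕ → Bool)
    (hj : ∀ t < k, Joins ω (e t) (σ t) (γ t) (γ (t + 1)))
    (hb : ∀ t < k, ¬ Relation.ReflTransGen (StepE ω (e t).2 {e t}) (ω (e t) * (e t).1) (e t).1)
    (hnb : ∀ t, t + 1 < k → e t ≠ e (t + 1)) :
    ∀ d, 1 ≤ d → ∀ i, i + d ≤ k → γ i ≠ γ (i + d) := by
  intro d
  induction d using Nat.strong_induction_on with
  | _ d ih =>
    intro hd i hik heq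
    have hlt : ∀ a b, i ≤ a → a < b → b ≤ i + d → b - a < d → γ a ≠ γ b := by
      intro a b h1 h2 h3 h4
      have := ih (b - a) h4 (by omega) a (by omega)
      rwa [show a + (b - a) = b by omega] at this
    obtain ⟨p, hp, hmax⟩ := Finset.exists_max_image (Finset.Ico i (i + d)) (fun t => (e t).2)
      ⟨i, by simp; omega⟩
    rw [Finset.mem_Ico] at hp
    have hne : ∀ t, i ≤ t → t < i + d → t ≠ p → e t ≠ e p := by
      have key : ∀ a b, i ≤ a → a < b → b < i + d → e a ≠ e b := by
        intro a b h1 h2 h3 h4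
        have ja := hj a (by omega)
        have jb := hj b (by omega)
        rw [← h4] at jb
        unfold Joins at ja jb
        by_cases hsa : σ a <;> by_cases hsb : σ b <;> simp only [hsa, hsb, if_true] at ja jb
        · exact hlt a b h1 h2 (by omega) (by omega) (ja.1.symm.trans jb.1)
        · by_cases hab : a + 1 = b
          · exact hnb a (by omega) (by rw [hab]; exact h4)
          · exact hlt (a + 1) b (by omega) (by omega) (by omega) (by omega) (ja.2.symm.trans jb.2)
        · by_cases hab : a + 1 = b
          · exact hnb a (by omega) (by rw [hab]; exact h4)
          · exact hlt (a + 1) b (by omega) (by omega) (by omega) (by omega) (ja.1.symm.trans jb.1)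
        · exact hlt a b h1 h2 (by omega) (by omega) (ja.2.symm.trans jb.2)
      intro t h1 h2 h3
      rcases lt_or_gt_of_ne h3 with h | h
      · exact key t p h1 h hp.2
      · exact (key p t hp.1 h h2).symm
    have hstep : ∀ t, i ≤ t → t < i + d → t ≠ p → StepE ω (e p).2 {e p} (γ t) (γ (t + 1)) := by
      intro t h1 h2 h3
      exact step_of_joins (hj t (by omega)) (hmax t (Finset.mem_Ico.2 ⟨h1, h2⟩))
        (by simpa using hne t h1 h2 h3)
    have hconn : ∀ a b, a ≤ b → (∀ t, a ≤ t → t < b → i ≤ t ∧ t < i + d ∧ t ≠ p) →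
        Relation.ReflTransGen (StepE ω (e p).2 {e p}) (γ a) (γ b) := by
      intro a b hab
      induction b, hab using Nat.le_induction with
      | base => intro _; exact Relation.ReflTransGen.refl
      | succ b hab ih2 =>
        intro h
        refine Relation.ReflTransGen.tail (ih2 (fun t h1 h2 => h t h1 (by omega))) ?_
        obtain ⟨h1, h2, h3⟩ := h b hab (by omega)
        exact hstep b h1 h2 h3
    have h1 := hconn i p hp.1 (fun t h1 h2 => ⟨h1, by omega, by omega⟩)
    have h2 := hconn (p + 1) (i + d) (by omega) (fun t h1 h2 => ⟨by omega, h2, by omega⟩)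
    rw [← heq] at h2
    have h3 := h2.trans h1
    have jp := hj p (by omega)
    apply hb p (by omega)
    unfold Joins at jp
    split_ifs at jp with hs
    · rw [jp.2, jp.1]; exact h3
    · rw [jp.2, jp.1]; exact conn_symm h3

/-- `a` leads from `γ` to a second point in the matching graph of `ω`. -/
def Arc (enc : Γ → ℕ) (ω : Lab Γ) (a : Fin 2 × Bool) (γ γ' : Γ) : Prop :=
  ∃ e : Γ × ℕ, Joins ω e a.2 γ γ' ∧ shiftFun e.1 ω ∈ MM enc a.1 e.2

def pos (C : Fin 2 × Bool → Γ → Γ) : List (Fin 2 × Bool) → Γ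
  | [] => 1
  | a :: L => C a (pos C L) * pos C L

theorem pos_ne_one (enc : Γ → ℕ) (ω : Lab Γ) (C : Fin 2 × Bool → Γ → Γ)
    (hC : ∀ a γ, Arc enc ω a γ (C a γ * γ)) (L : List (Fin 2 × Bool)) (hL : FreeGroup.IsReduced L)
    (hne : L ≠ []) : pos C L ≠ 1 := by
  set k := L.length with hk
  have hk0 : 0 < k := List.length_pos_iff.2 hne
  let γ : ℕ → Γ := fun t => pos C (L.drop (k - t))
  let a : ℕ → Fin 2 × Bool := fun t => L.getD (k - t - 1) (0, true)
  have hdrop : ∀ t < k, γ (t + 1) = C (a t) (γ t) * γ t := by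
    intro t ht
    simp only [γ, a]
    have h1 : k - (t + 1) < L.length := by omega
    rw [List.drop_eq_getElem_cons h1]
    rw [show k - (t + 1) + 1 = k - t by omega]
    rw [pos, List.getD_eq_getElem L _ (show k - t - 1 < L.length by omega)]
    rfl
  choose e he1 he2 using fun t => hC (a t) (γ t)
  have hbad : ∀ t, ¬ Relation.ReflTransGen (StepE ω (e t).2 {e t}) (ω (e t) * (e t).1) (e t).1 :=
    fun t h => (he2 t).2.2.2.1 (bad_transfer h)
  have hj : ∀ t < k, Joins ω (e t) (a t).2 (γ t) (γ (t + 1)) := by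
    intro t ht
    rw [hdrop t ht]
    exact he1 t
  have := walk_inj ω k γ e (fun t => (a t).2) hj (fun t _ => hbad t) ?_ k hk0 0 (by omega)
  · simp only [γ, zero_add, Nat.sub_zero, Nat.sub_self, List.drop_zero] at this
    rw [List.drop_of_length_le (by omega)] at this
    exact fun h => this (by rw [h]; rfl)
  · intro t ht hee
    have hpar : (a (t + 1)).1 = (a t).1 := by
      have h1 := (he2 t).1
      have h2 := (he2 (t + 1)).1
      rw [← hee] at h2
      exact Fin.ext (h2.symm.trans h1)
    have hsig : (a (t + 1)).2 = (a t).2 := by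
      have hch := (List.isChain_iff_getElem.1 hL) (k - (t + 1) - 1) (by omega)
      simp only [a] at hpar ⊢
      rw [List.getD_eq_getElem L _ (show k - t - 1 < L.length by omega),
        List.getD_eq_getElem L _ (show k - (t + 1) - 1 < L.length by omega)] at hpar ⊢
      have e1 : k - (t + 1) - 1 + 1 = k - t - 1 := by omega
      simp only [e1] at hch
      exact hch hpar
    have j1 := hj t (by omega)
    have j2 := hj (t + 1) ht
    rw [← hee, hsig] at j2
    apply hbad t
    have : ω (e t) * (e t).1 = (e t).1 := by
      unfold Joins at j1 j2
      split_ifs at j1 j2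
      · exact j1.2.trans j2.1.symm
      · exact j2.2.trans j1.1.symm
    rw [this]

end Comb

open MeasureTheory

section FTwo
open scoped Classical

variable {Γ : Type*} [Group Γ]

lemma joins_shift (ω : Lab Γ) (γ : Γ) (e : Γ × ℕ) (σ : Bool) (a b : Γ) :
    Joins (shiftFun γ ω) e σ a b ↔ Joins ω (e.1 * γ, e.2) σ (a * γ) (b * γ) := by
  unfold Joins
  have h : ∀ u : Γ, shiftFun γ ω e * e.1 = u ↔ ω (e.1 * γ, e.2) * (e.1 * γ) = u * γ := by
    intro u
    rw [← mul_assoc, mul_left_inj]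
    rfl
  split_ifs
  · rw [h, mul_left_inj]
  · rw [h, mul_left_inj]

lemma arc_shift (enc : Γ → ℕ) (ω : Lab Γ) (γ : Γ) (a : Fin 2 × Bool) (s t : Γ) :
    Arc enc (shiftFun γ ω) a s t ↔ Arc enc ω a (s * γ) (t * γ) := by
  constructor
  · rintro ⟨e, h1, h2⟩
    refine ⟨(e.1 * γ, e.2), (joins_shift ω γ e a.2 s t).1 h1, ?_⟩
    rw [shiftFun_mul]; exact h2
  · rintro ⟨e, h1, h2⟩
    refine ⟨(e.1 * γ⁻¹, e.2), (joins_shift ω γ _ a.2 s t).2 ?_, ?_⟩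
    · simpa using h1
    · rw [← shiftFun_mul]; simpa using h2

lemma arc_flip (enc : Γ → ℕ) (ω : Lab Γ) (c : Fin 2) (b : Bool) (s t : Γ) :
    Arc enc ω (c, b) s t ↔ Arc enc ω (c, !b) t s := by
  unfold Arc Joins
  cases b <;> simp

lemma arc_inv (enc : Γ → ℕ) (ω : Lab Γ) (c : Fin 2) (b : Bool) (s : Γ) :
    Arc enc ω (c, b) 1 s ↔ Arc enc (shiftFun s ω) (c, !b) 1 s⁻¹ := by
  rw [arc_shift, arc_flip]
  simp

lemma arc_unique_true {enc : Γ → ℕ} {ω : Lab Γ} {c : Fin 2} {s t : Γ}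
    (h1 : Arc enc ω (c, true) 1 s) (h2 : Arc enc ω (c, true) 1 t) : s = t := by
  obtain ⟨⟨e, n⟩, ⟨j1, j2⟩, m⟩ := h1
  obtain ⟨⟨e', n'⟩, ⟨j1', j2'⟩, m'⟩ := h2
  simp only at j1 j1' m m'
  subst j1 j1'
  rw [shiftFun_one] at m m'
  obtain rfl := MM_unique enc c m m'
  exact j2.symm.trans j2'

lemma arc_TM {enc : Γ → ℕ} {ω : Lab Γ} {c : Fin 2} {s : Γ}
    (h1 : Arc enc ω (c, false) 1 s) : ∃ n, shiftFun s ω ∈ MM enc c n ∧ (shiftFun s ω) (1, n) = s⁻¹ := by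
  obtain ⟨⟨e, n⟩, hj, m⟩ := h1
  simp only [Joins, Bool.false_eq_true, if_false] at hj
  obtain ⟨j1, j2⟩ := hj
  subst j1
  refine ⟨n, m, ?_⟩
  simp only [shiftFun, one_mul]
  exact eq_inv_of_mul_eq_one_left j2

lemma arc_unique {enc : Γ → ℕ} (henc : Function.Injective enc) {ω : Lab Γ} {a : Fin 2 × Bool} {s t : Γ}
    (h1 : Arc enc ω a 1 s) (h2 : Arc enc ω a 1 t) : s = t := by
  obtain ⟨c, b⟩ := a
  cases b
  · obtain ⟨n, m1, m2⟩ := arc_TM h1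
    obtain ⟨n', m1', m2'⟩ := arc_TM h2
    have k1 : ω ∈ TM n (MM enc c n) := ⟨s⁻¹, by simpa using m1, by simpa using m2⟩
    have k2 : ω ∈ TM n' (MM enc c n') := ⟨t⁻¹, by simpa using m1', by simpa using m2'⟩
    obtain rfl := TM_unique enc c k1 k2
    have := DD_unique (enc := enc) henc (z := ω) (s := s⁻¹) (t := t⁻¹) (n := n)
      (by simpa using m1.2.2.1) (by simpa using m2) (by simpa using m1'.2.2.1) (by simpa using m2')
    exact inv_injective this
  · exact arc_unique_true h1 h2

lemma not_arc_true {enc : Γ → ℕ} {ω : Lab Γ} {c : Fin 2} (h : ∀ s, ¬ Arc enc ω (c, true) 1 s) :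
    ω ∈ ⋂ n, (UVs enc c n).1 := by
  rw [Set.mem_iInter]
  intro n
  induction n with
  | zero => trivial
  | succ n ih =>
    refine ⟨ih, fun hM => h (ω (1, n)) ⟨(1, n), ?_, ?_⟩⟩
    · simp [Joins]
    · rw [shiftFun_one]; exact hM

lemma not_arc_false {enc : Γ → ℕ} {ω : Lab Γ} {c : Fin 2} (h : ∀ s, ¬ Arc enc ω (c, false) 1 s) :
    ω ∈ ⋂ n, (UVs enc c n).2 := by
  rw [Set.mem_iInter]
  intro n
  induction n with
  | zero => trivial
  | succ n ih =>
    refine ⟨ih, ?_⟩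
    rintro ⟨s, hs1, hs2⟩
    refine h s⁻¹ ⟨(s⁻¹, n), ?_, hs1⟩
    simp only [Joins, Bool.false_eq_true, if_false, true_and]
    simp only [shiftFun, one_mul] at hs2
    rw [hs2]; simp

noncomputable def coc (enc : Γ → ℕ) (a : Fin 2 × Bool) (ω : Lab Γ) : Γ :=
  if h : ∃ s, Arc enc ω a 1 s then h.choose else 1

lemma coc_spec {enc : Γ → ℕ} {a : Fin 2 × Bool} {ω : Lab Γ} (h : ∃ s, Arc enc ω a 1 s) :
    Arc enc ω a 1 (coc enc a ω) := by
  unfold coc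
  rw [dif_pos h]
  exact h.choose_spec

variable {Y : Type*} [MeasurableSpace Y] {ν : Measure Y}

section
variable [MeasurableSpace Γ]

def Y0 (enc : Γ → ℕ) (g : PMP Γ Y ν) (θ : Y → Lab Γ) : Set Y :=
  {y | ∀ γ a, ∃ s, Arc enc (θ (g.act γ y)) a 1 s}

noncomputable def AA (enc : Γ → ℕ) (g : PMP Γ Y ν) (θ : Y → Lab Γ) (a : Fin 2 × Bool) (y : Y) : Y :=
  if y ∈ Y0 enc g θ then g.act (coc enc a (θ y)) y else y

lemma Y0_inv {enc : Γ → ℕ} {g : PMP Γ Y ν} {θ : Y → Lab Γ} {y : Y} (h : y ∈ Y0 enc g θ) (γ : Γ) :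
    g.act γ y ∈ Y0 enc g θ := by
  intro γ' a
  rw [← g.act_mul]
  exact h _ a

lemma Y0_inv_iff {enc : Γ → ℕ} {g : PMP Γ Y ν} {θ : Y → Lab Γ} {y : Y} (γ : Γ) :
    g.act γ y ∈ Y0 enc g θ ↔ y ∈ Y0 enc g θ := by
  refine ⟨fun h => ?_, fun h => Y0_inv h γ⟩
  have := Y0_inv h γ⁻¹
  rwa [← g.act_mul, inv_mul_cancel, g.act_one] at this

lemma AA_mem {enc : Γ → ℕ} {g : PMP Γ Y ν} {θ : Y → Lab Γ} {y : Y} (h : y ∈ Y0 enc g θ)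
    (a : Fin 2 × Bool) : AA enc g θ a y ∈ Y0 enc g θ := by
  unfold AA
  rw [if_pos h]
  exact Y0_inv h _

lemma Y0_arc {enc : Γ → ℕ} {g : PMP Γ Y ν} {θ : Y → Lab Γ} {y : Y} (h : y ∈ Y0 enc g θ)
    (a : Fin 2 × Bool) : Arc enc (θ y) a 1 (coc enc a (θ y)) := by
  apply coc_spec
  have := h 1 a
  rwa [g.act_one] at this

lemma AA_inv {enc : Γ → ℕ} (henc : Function.Injective enc) {g : PMP Γ Y ν} {θ : Y → Lab Γ}
    (hθ : ∀ γ y, θ (g.act γ y) = shiftFun γ (θ y)) (c : Fin 2) (b : Bool) (y : Y) :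
    AA enc g θ (c, !b) (AA enc g θ (c, b) y) = y := by
  by_cases h : y ∈ Y0 enc g θ
  · have h1 := AA_mem h (c, b)
    have e1 : AA enc g θ (c, b) y = g.act (coc enc (c, b) (θ y)) y := if_pos h
    have e2 : AA enc g θ (c, !b) (AA enc g θ (c, b) y) =
      g.act (coc enc (c, !b) (θ (AA enc g θ (c, b) y))) (AA enc g θ (c, b) y) := if_pos h1
    have h2 := Y0_arc h1 (c, !b)
    have h3 := (arc_inv enc (θ y) c b _).1 (Y0_arc h (c, b))
    rw [← hθ, ← e1] at h3
    have h4 := arc_unique henc h2 h3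
    rw [e2, h4, e1, ← g.act_mul, inv_mul_cancel, g.act_one]
  · have e1 : AA enc g θ (c, b) y = y := if_neg h
    rw [e1]
    exact if_neg h

variable [Countable Γ] [MeasurableSingletonClass Γ]

lemma meas_arc (enc : Γ → ℕ) (a : Fin 2 × Bool) (s : Γ) :
    MeasurableSet {ω : Lab Γ | Arc enc ω a 1 s} := by
  have : {ω : Lab Γ | Arc enc ω a 1 s} = ⋃ e : Γ × ℕ,
      ({ω : Lab Γ | Joins ω e a.2 1 s} ∩ shiftFun e.1 ⁻¹' (MM enc a.1 e.2)) := by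
    ext ω
    simp [Arc]
  rw [this]
  refine MeasurableSet.iUnion fun e => MeasurableSet.inter ?_ (measurable_shiftFun _ (meas_MM _ _ _))
  unfold Joins
  split_ifs
  · have : {ω : Lab Γ | e.1 = 1 ∧ ω e * e.1 = s} = {ω : Lab Γ | e.1 = 1} ∩ {ω | ω e = s * e.1⁻¹} := by
      ext ω; simp [eq_mul_inv_iff_mul_eq]
    rw [this]
    exact (MeasurableSet.const _).inter (meas_coord _ _)
  · have : {ω : Lab Γ | e.1 = s ∧ ω e * e.1 = 1} = {ω : Lab Γ | e.1 = s} ∩ {ω | ω e = 1 * e.1⁻¹} := by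
      ext ω; simp only [Set.mem_ofPred_eq, Set.mem_inter_iff, eq_mul_inv_iff_mul_eq]
    rw [this]
    exact (MeasurableSet.const _).inter (meas_coord _ _)

lemma meas_Y0 (enc : Γ → ℕ) (g : PMP Γ Y ν) {θ : Y → Lab Γ} (hm : Measurable θ) :
    MeasurableSet (Y0 enc g θ) := by
  have : Y0 enc g θ = ⋂ γ, ⋂ a, ⋃ s, (fun y => θ (g.act γ y)) ⁻¹' {ω : Lab Γ | Arc enc ω a 1 s} := by
    ext y; simp [Y0]
  rw [this]
  exact MeasurableSet.iInter fun γ => MeasurableSet.iInter fun a => MeasurableSet.iUnion fun s =>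
    (hm.comp (g.measurable γ)) (meas_arc enc a s)

lemma Y0_conull (pm : ℕ → Measure Γ) [∀ n, IsProbabilityMeasure (pm n)]
    (enc : Γ → ℕ) (g : PMP Γ Y ν) {θ : Y → Lab Γ} (hθm : MeasurePreserving θ ν (beta pm))
    (hU : ∀ c : Fin 2, beta pm (⋂ n, (UVs enc c n).1) = 0 ∧ beta pm (⋂ n, (UVs enc c n).2) = 0) :
    ∀ᵐ y ∂ν, y ∈ Y0 enc g θ := by
  have h1 : ∀ a : Fin 2 × Bool, ∀ᵐ ω ∂(beta pm), ∃ s, Arc enc ω a 1 s := by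
    rintro ⟨c, b⟩
    cases b
    · refine measure_mono_null ?_ (hU c).2
      intro ω hω
      exact not_arc_false (not_exists.1 hω)
    · refine measure_mono_null ?_ (hU c).1
      intro ω hω
      exact not_arc_true (not_exists.1 hω)
  have h2 : ∀ γ a, ∀ᵐ y ∂ν, ∃ s, Arc enc (θ (g.act γ y)) a 1 s := by
    intro γ a
    exact (hθm.comp (g.preserves γ)).quasiMeasurePreserving.ae (h1 a)
  have h3 := ae_all_iff.2 (fun γ => ae_all_iff.2 (h2 γ))
  exact h3

lemma AA_preimage {enc : Γ → ℕ} (henc : Function.Injective enc) (g : PMP Γ Y ν) {θ : Y → Lab Γ}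
    (hθ : ∀ γ y, θ (g.act γ y) = shiftFun γ (θ y)) (c : Fin 2) (b : Bool) (E : Set Y) :
    AA enc g θ (c, b) ⁻¹' E = ((Y0 enc g θ)ᶜ ∩ E) ∪
      ⋃ s, g.act s ⁻¹' (Y0 enc g θ ∩ θ ⁻¹' {ω : Lab Γ | Arc enc ω (c, !b) 1 s⁻¹} ∩ E) := by
  ext y
  by_cases h : y ∈ Y0 enc g θ
  · have e1 : AA enc g θ (c, b) y = g.act (coc enc (c, b) (θ y)) y := if_pos h
    simp only [Set.mem_preimage, e1, Set.mem_union, Set.mem_inter_iff, Set.mem_compl_iff, h,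
      not_true_eq_false, false_and, false_or, Set.mem_iUnion, Y0_inv_iff, true_and, hθ]
    have h2 := Y0_arc h (c, b)
    constructor
    · intro hE
      exact ⟨_, (arc_inv enc (θ y) c b _).1 h2, hE⟩
    · rintro ⟨s, hs, hE⟩
      have := arc_unique henc h2 ((arc_inv enc (θ y) c b _).2 hs)
      rwa [this]
  · have e1 : AA enc g θ (c, b) y = y := if_neg h
    simp [e1, h, Y0_inv_iff]

lemma AA_meas {enc : Γ → ℕ} (henc : Function.Injective enc) (g : PMP Γ Y ν) {θ : Y → Lab Γ}
    (hm : Measurable θ)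
    (hθ : ∀ γ y, θ (g.act γ y) = shiftFun γ (θ y)) (c : Fin 2) (b : Bool) :
    Measurable (AA enc g θ (c, b)) := by
  intro E hE
  rw [AA_preimage henc g hθ]
  exact ((meas_Y0 enc g hm).compl.inter hE).union (MeasurableSet.iUnion fun s => g.measurable s
    (((meas_Y0 enc g hm).inter (hm (meas_arc _ _ _))).inter hE))

lemma AA_mp {enc : Γ → ℕ} (henc : Function.Injective enc) (g : PMP Γ Y ν) {θ : Y → Lab Γ}
    (hm : Measurable θ)
    (hθ : ∀ γ y, θ (g.act γ y) = shiftFun γ (θ y)) (h0 : ∀ᵐ y ∂ν, y ∈ Y0 enc g θ)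
    (c : Fin 2) (b : Bool) :
    MeasurePreserving (AA enc g θ (c, b)) ν ν := by
  refine ⟨AA_meas henc g hm hθ c b, ?_⟩
  ext E hE
  rw [Measure.map_apply (AA_meas henc g hm hθ c b) hE, AA_preimage henc g hθ]
  have hnull : ν ((Y0 enc g θ)ᶜ) = 0 := h0
  have hQm : ∀ s : Γ, MeasurableSet (Y0 enc g θ ∩ θ ⁻¹' {ω : Lab Γ | Arc enc ω (c, !b) 1 s⁻¹} ∩ E) :=
    fun s => ((meas_Y0 enc g hm).inter (hm (meas_arc _ _ _))).inter hE
  have hdis : Disjoint ((Y0 enc g θ)ᶜ ∩ E)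
      (⋃ s, g.act s ⁻¹' (Y0 enc g θ ∩ θ ⁻¹' {ω : Lab Γ | Arc enc ω (c, !b) 1 s⁻¹} ∩ E)) := by
    rw [Set.disjoint_left]
    rintro y ⟨hy, -⟩ hy2
    obtain ⟨s, ⟨hs, -⟩, -⟩ := Set.mem_iUnion.1 hy2
    exact hy ((Y0_inv_iff s).1 hs)
  rw [measure_union hdis (MeasurableSet.iUnion fun s => g.measurable s (hQm s)),
    measure_mono_null Set.inter_subset_left hnull, zero_add, measure_iUnion]
  · have e1 : ∀ s, ν (g.act s ⁻¹' (Y0 enc g θ ∩ θ ⁻¹' {ω : Lab Γ | Arc enc ω (c, !b) 1 s⁻¹} ∩ E)) =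
        ν (Y0 enc g θ ∩ θ ⁻¹' {ω : Lab Γ | Arc enc ω (c, !b) 1 s⁻¹} ∩ E) := fun s =>
      (g.preserves s).measure_preimage (hQm s).nullMeasurableSet
    simp only [e1]
    rw [← measure_iUnion _ hQm]
    · have : (⋃ s : Γ, Y0 enc g θ ∩ θ ⁻¹' {ω : Lab Γ | Arc enc ω (c, !b) 1 s⁻¹} ∩ E) =
          Y0 enc g θ ∩ E := by
        ext y
        simp only [Set.mem_iUnion, Set.mem_inter_iff]
        constructor
        · rintro ⟨s, ⟨h1, -⟩, h2⟩
          exact ⟨h1, h2⟩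
        · rintro ⟨h1, h2⟩
          refine ⟨(coc enc (c, !b) (θ y))⁻¹, ⟨h1, ?_⟩, h2⟩
          have := Y0_arc h1 (c, !b)
          simpa using this
      rw [this]
      apply measure_congr
      filter_upwards [h0] with y hy
      apply propext
      exact ⟨fun h => h.2, fun h => ⟨hy, h⟩⟩
    · intro s t hst
      rw [Function.onFun, Set.disjoint_left]
      rintro y ⟨⟨-, h1⟩, -⟩ ⟨⟨-, h2⟩, -⟩
      exact hst (inv_injective (arc_unique henc h1 h2))
  · intro s t hst
    rw [Function.onFun, Set.disjoint_left]
    rintro y ⟨⟨-, h1⟩, -⟩ ⟨⟨-, h2⟩, -⟩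
    simp only [Set.mem_preimage, hθ] at h1 h2
    exact hst (arc_unique henc ((arc_inv enc (θ y) c b _).2 h1) ((arc_inv enc (θ y) c b _).2 h2))
  · exact fun s => g.measurable s (hQm s)

noncomputable def permA {enc : Γ → ℕ} (henc : Function.Injective enc) (g : PMP Γ Y ν) {θ : Y → Lab Γ}
    (hθ : ∀ γ y, θ (g.act γ y) = shiftFun γ (θ y)) (c : Fin 2) : Equiv.Perm Y where
  toFun := AA enc g θ (c, true)
  invFun := AA enc g θ (c, false)
  left_inv := AA_inv henc hθ c true
  right_inv := AA_inv henc hθ c false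

lemma lift_perm {enc : Γ → ℕ} (henc : Function.Injective enc) (g : PMP Γ Y ν) {θ : Y → Lab Γ}
    (hθ : ∀ γ y, θ (g.act γ y) = shiftFun γ (θ y)) (a : Fin 2 × Bool) (L : List (Fin 2 × Bool)) (y : Y) :
    FreeGroup.lift (permA henc g hθ) (FreeGroup.mk (a :: L)) y =
      AA enc g θ a (FreeGroup.lift (permA henc g hθ) (FreeGroup.mk L) y) := by
  rw [FreeGroup.lift_mk, FreeGroup.lift_mk, List.map_cons, List.prod_cons, Equiv.Perm.mul_apply]
  obtain ⟨c, b⟩ := a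
  cases b <;> rfl

theorem exists_F2 (pm : ℕ → Measure Γ) [∀ n, IsProbabilityMeasure (pm n)]
    {enc : Γ → ℕ} (henc : Function.Injective enc) (g : PMP Γ Y ν) (hg : IsFreeAction g)
    {θ : Y → Lab Γ} (hθm : MeasurePreserving θ ν (beta pm))
    (hθ : ∀ γ y, θ (g.act γ y) = shiftFun γ (θ y))
    (hU : ∀ c : Fin 2, beta pm (⋂ n, (UVs enc c n).1) = 0 ∧ beta pm (⋂ n, (UVs enc c n).2) = 0) :
    ∃ h : PMP (FreeGroup (Fin 2)) Y ν, IsFreeAction h ∧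
        ∀ᵐ x ∂ν, ∀ t : FreeGroup (Fin 2), ∃ γ : Γ, h.act t x = g.act γ x := by
  have h0 := Y0_conull pm enc g hθm hU
  have hmp : ∀ L : List (Fin 2 × Bool), MeasurePreserving
      (fun y => FreeGroup.lift (permA henc g hθ) (FreeGroup.mk L) y) ν ν := by
    intro L
    induction L with
    | nil => exact MeasurePreserving.id ν
    | cons a L ih =>
      simp only [lift_perm]
      exact (AA_mp henc g hθm.measurable hθ h0 a.1 a.2).comp ih
  have hpos : ∀ y ∈ Y0 enc g θ, ∀ L : List (Fin 2 × Bool),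
      FreeGroup.lift (permA henc g hθ) (FreeGroup.mk L) y =
        g.act (pos (fun a γ => coc enc a (shiftFun γ (θ y))) L) y := by
    intro y hy L
    induction L with
    | nil =>
      simp only [pos, g.act_one]
      rfl
    | cons a L ih =>
      rw [lift_perm, ih, pos, g.act_mul, ← hθ]
      exact if_pos (Y0_inv hy _)
  refine ⟨⟨fun t y => FreeGroup.lift (permA henc g hθ) t y, ?_, ?_, ?_, ?_⟩, ?_, ?_⟩
  · intro t
    have := (hmp t.toWord).measurable
    rwa [FreeGroup.mk_toWord] at this
  · intro t
    have := (hmp t.toWord)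
    rwa [FreeGroup.mk_toWord] at this
  · intro y; simp
  · intro s t y; simp
  · filter_upwards [h0, hg] with y hy hfr t ht
    change FreeGroup.lift (permA henc g hθ) t y = y at ht
    rw [← FreeGroup.mk_toWord (x := t), hpos y hy] at ht
    have h1 := hfr _ ht
    by_contra hne
    refine pos_ne_one enc (θ y) _ ?_ t.toWord FreeGroup.isReduced_toWord
      (fun h => hne (FreeGroup.toWord_eq_nil_iff.1 h)) h1
    intro a γ
    have := Y0_arc (Y0_inv hy γ) a
    rw [hθ, arc_shift] at this
    simpa using this
  · filter_upwards [h0] with y hy t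
    have := hpos y hy t.toWord
    rw [FreeGroup.mk_toWord] at this
    exact ⟨_, this⟩

end
end FTwo

open MeasureTheory

namespace Iso
open Set Filter Topology ProbabilityTheory

lemma cdf_cont (m : Measure ℝ) [IsProbabilityMeasure m] [NullSingletonClass m] : Continuous (cdf m) := by
  rw [continuous_iff_continuousAt]
  intro x
  rw [(cdf m).mono.continuousAt_iff_leftLim_eq_rightLim, (cdf m).rightLim_eq]
  apply le_antisymm ((cdf m).mono.leftLim_le le_rfl)
  have h := (cdf m).measure_singleton x
  rw [measure_cdf, measure_singleton] at h
  have := ENNReal.ofReal_eq_zero.1 h.symm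
  linarith

lemma map_cdf (m : Measure ℝ) [IsProbabilityMeasure m] [NullSingletonClass m] :
    m.map (cdf m) = volume.restrict (Icc (0:ℝ) 1) := by
  have hc := cdf_cont m
  haveI : IsProbabilityMeasure (m.map (cdf m)) :=
    Measure.isProbabilityMeasure_map hc.measurable.aemeasurable
  refine Measure.ext_of_Iic _ _ fun t => ?_
  rw [Measure.map_apply hc.measurable measurableSet_Iic, Measure.restrict_apply measurableSet_Iic]
  have e1 : Iic t ∩ Icc (0:ℝ) 1 = Icc 0 (min t 1) := by
    ext x; simp only [mem_inter_iff, mem_Iic, mem_Icc, le_min_iff]; tauto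
  rw [e1, Real.volume_Icc, sub_zero]
  by_cases ht : 1 ≤ t
  · have : (cdf m) ⁻¹' Iic t = univ := by
      ext x; simpa using (cdf_le_one m x).trans ht
    rw [this, measure_univ, min_eq_right ht, ENNReal.ofReal_one]
  push Not at ht
  rw [min_eq_left ht.le]
  set S := (cdf m) ⁻¹' Iic t with hS
  rcases S.eq_empty_or_nonempty with h | hne
  · rw [h, measure_empty]
    symm
    rw [ENNReal.ofReal_eq_zero]
    by_contra hlt
    push Not at hlt
    obtain ⟨x, hx⟩ := ((tendsto_cdf_atBot m).eventually (gt_mem_nhds hlt)).exists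
    have : x ∈ S := le_of_lt hx
    rw [h] at this; exact this
  · obtain ⟨b, hb⟩ := ((tendsto_cdf_atTop m).eventually (lt_mem_nhds ht)).exists
    have hbd : BddAbove S := ⟨b, fun x hx => by
      by_contra hlt
      push Not at hlt
      have := (cdf m).mono hlt.le
      have h2 : cdf m x ≤ t := hx
      linarith⟩
    have hcl : IsClosed S := isClosed_Iic.preimage hc
    have hs := hcl.csSup_mem hne hbd
    set s := sSup S
    have hs' : cdf m s ≤ t := hs
    have hSI : S = Iic s := by
      ext x
      constructor
      · exact fun hx => le_csSup hbd hx
      · exact fun hx => ((cdf m).mono hx).trans hs'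
    have heq : cdf m s = t := by
      refine le_antisymm hs' ?_
      by_contra hlt
      push Not at hlt
      have hev : ∀ᶠ x in 𝓝 s, cdf m x < t := hc.continuousAt.eventually (gt_mem_nhds hlt)
      obtain ⟨x, hx1, hx2⟩ := ((hev.filter_mono nhdsWithin_le_nhds).and
        (self_mem_nhdsWithin : Ioi s ∈ 𝓝[>] s)).exists
      have h3 : x ∈ S := le_of_lt hx1
      have : x ≤ s := le_csSup hbd h3
      exact absurd hx2 (not_lt.2 this)
    rw [hSI, ← heq, ofReal_cdf]

lemma iso_unit {X : Type*} [MeasurableSpace X] [StandardBorelSpace X] (μ : Measure X)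
    [IsProbabilityMeasure μ] [NullSingletonClass μ] :
    ∃ (φ : X → ℝ) (ψ : ℝ → X), MeasurePreserving φ μ (volume.restrict (Icc (0:ℝ) 1)) ∧
      MeasurePreserving ψ (volume.restrict (Icc (0:ℝ) 1)) μ ∧ (∀ᵐ x ∂μ, ψ (φ x) = x) ∧
      ∀ᵐ y ∂(volume.restrict (Icc (0:ℝ) 1)), φ (ψ y) = y := by
  obtain ⟨e, he⟩ := exists_measurableEmbedding_real X
  set m := μ.map e with hm
  haveI : IsProbabilityMeasure m := Measure.isProbabilityMeasure_map he.measurable.aemeasurable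
  haveI : NullSingletonClass m := ⟨fun x => by
    rw [hm, he.map_apply]
    have : (e ⁻¹' {x}).Subsingleton := by
      intro a ha b hb
      exact he.injective (ha.trans hb.symm)
    exact this.measure_zero μ⟩
  have hc := cdf_cont m
  set φ : X → ℝ := fun x => cdf m (e x) with hφ
  have hφm : Measurable φ := hc.measurable.comp he.measurable
  have hφp : MeasurePreserving φ μ (volume.restrict (Icc (0:ℝ) 1)) := by
    refine ⟨hφm, ?_⟩
    rw [← map_cdf m, hm, Measure.map_map hc.measurable he.measurable]
    rfl
  set N : Set X := ⋃ r : ℚ, φ ⁻¹' {cdf m (r:ℝ)} with hN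
  have hNm : MeasurableSet N := MeasurableSet.iUnion fun r => hφm (measurableSet_singleton _)
  have hN0 : μ N = 0 := by
    rw [hN, measure_iUnion_null_iff]
    intro r
    rw [hφp.measure_preimage (measurableSet_singleton _).nullMeasurableSet]
    exact measure_singleton _
  have hinj : InjOn φ Nᶜ := by
    have key : ∀ x ∈ Nᶜ, ∀ y, φ x = φ y → ¬ e x < e y := by
      intro x hx y hxy hlt
      obtain ⟨r, hr1, hr2⟩ := exists_rat_btwn hlt
      apply hx
      refine mem_iUnion.2 ⟨r, ?_⟩
      have h1 := (cdf m).mono hr1.le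
      have h2 := (cdf m).mono hr2.le
      change cdf m (e x) = cdf m r
      have h3 : cdf m (e x) = cdf m (e y) := hxy
      linarith
    intro x hx y hy hxy
    apply he.injective
    exact le_antisymm (not_lt.1 (key y hy x hxy.symm)) (not_lt.1 (key x hx y hxy))
  haveI : StandardBorelSpace (Nᶜ : Set X) := hNm.compl.standardBorel
  have hemb : MeasurableEmbedding (fun x : (Nᶜ : Set X) => φ x) :=
    Measurable.measurableEmbedding (hφm.comp measurable_subtype_coe) (injOn_iff_injective.1 hinj)
  haveI : Nonempty X := by
    by_contra h
    rw [not_nonempty_iff] at h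
    have := measure_univ (μ := μ)
    rw [univ_eq_empty_iff.2 h] at this
    simp at this
  obtain ⟨ψ, hψm, hψ⟩ := hemb.exists_measurable_extend (g := fun x : (Nᶜ : Set X) => (x : X))
    measurable_subtype_coe (fun _ => inferInstance)
  have hN' : ∀ᵐ x ∂μ, x ∈ Nᶜ := by
    rw [ae_iff]; simpa using hN0
  have h1 : ∀ᵐ x ∂μ, ψ (φ x) = x := by
    filter_upwards [hN'] with x hx
    exact congrFun hψ ⟨x, hx⟩
  refine ⟨φ, ψ, hφp, ⟨hψm, ?_⟩, h1, ?_⟩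
  · rw [← hφp.map_eq, Measure.map_map hψm hφm]
    calc μ.map (ψ ∘ φ) = μ.map id := Measure.map_congr h1
      _ = μ := Measure.map_id
  · have hms : MeasurableSet {y : ℝ | φ (ψ y) = y} :=
      measurableSet_eq_fun (hφm.comp hψm) measurable_id
    rw [← hφp.map_eq, ae_map_iff hφm.aemeasurable hms]
    filter_upwards [h1] with x hx
    rw [hx]

lemma iso {X Y : Type*} [MeasurableSpace X] [StandardBorelSpace X] (μ : Measure X)
    [IsProbabilityMeasure μ] [NullSingletonClass μ] [MeasurableSpace Y] [StandardBorelSpace Y] (ν : Measure Y)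
    [IsProbabilityMeasure ν] [NullSingletonClass ν] :
    ∃ (φ : X → Y) (ψ : Y → X), MeasurePreserving φ μ ν ∧
      MeasurePreserving ψ ν μ ∧ (∀ᵐ x ∂μ, ψ (φ x) = x) ∧ ∀ᵐ y ∂ν, φ (ψ y) = y := by
  obtain ⟨φ, ψ, a1, a2, a3, a4⟩ := iso_unit μ
  obtain ⟨φ', ψ', b1, b2, b3, b4⟩ := iso_unit ν
  refine ⟨ψ' ∘ φ, ψ ∘ φ', b2.comp a1, a2.comp b1, ?_, ?_⟩
  · filter_upwards [a3, a1.quasiMeasurePreserving.ae b4] with x h1 h2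
    simp only [Function.comp]
    rw [h2, h1]
  · filter_upwards [b3, b1.quasiMeasurePreserving.ae a4] with x h1 h2
    simp only [Function.comp]
    rw [h2, h1]

end Iso

open MeasureTheory

namespace Transp
section
variable {G X Y : Type*} [Group G] [MeasurableSpace X] [MeasurableSpace Y]
  {μ : Measure X} {ν : Measure Y}

lemma act_image (f : PMP G X μ) (γ : G) (S : Set X) : f.act γ '' S = f.act γ⁻¹ ⁻¹' S := by
  ext x
  simp only [Set.mem_image, Set.mem_preimage]
  constructor
  · rintro ⟨y, hy, rfl⟩
    rwa [← f.act_mul, inv_mul_cancel, f.act_one]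
  · intro h
    exact ⟨_, h, by rw [← f.act_mul, mul_inv_cancel, f.act_one]⟩

lemma wc_of_factor (g : PMP G X μ) (a : PMP G Y ν) {π : X → Y} (hπ : MeasurePreserving π μ ν)
    (he : ∀ γ, ∀ᵐ x ∂μ, π (g.act γ x) = a.act γ (π x)) : WeaklyContains g a := by
  intro n _ C hC F ε hε
  refine ⟨C ∘ π, hC.comp hπ.measurable, fun i j γ _ => ?_⟩
  have : μ (g.act γ '' ((C ∘ π) ⁻¹' {i}) ∩ (C ∘ π) ⁻¹' {j}) =
      ν (a.act γ '' (C ⁻¹' {i}) ∩ C ⁻¹' {j}) := by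
    rw [act_image, act_image, ← hπ.measure_preimage]
    · apply measure_congr
      filter_upwards [he γ⁻¹] with x hx
      apply propext
      change (C (π (g.act γ⁻¹ x)) = i ∧ C (π x) = j) ↔ (C (a.act γ⁻¹ (π x)) = i ∧ C (π x) = j)
      rw [hx]
    · exact ((a.measurable _ (hC (measurableSet_singleton _))).inter
        (hC (measurableSet_singleton _))).nullMeasurableSet
  rw [this, sub_self, abs_zero]
  exact hε.le

lemma wc_trans {Z : Type*} [MeasurableSpace Z] {ρ : Measure Z} {f : PMP G X μ} {g : PMP G Y ν}
    {h : PMP G Z ρ} (h1 : WeaklyContains f g) (h2 : WeaklyContains g h) : WeaklyContains f h := by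
  intro n hn C hC F ε hε
  obtain ⟨D, hD, hD2⟩ := h2 n hn C hC F (ε/2) (by positivity)
  obtain ⟨E, hE, hE2⟩ := h1 n hn D hD F (ε/2) (by positivity)
  refine ⟨E, hE, fun i j γ hγ => ?_⟩
  have a := hD2 i j γ hγ
  have b := hE2 i j γ hγ
  rw [abs_le] at *
  constructor <;> linarith [a.1, a.2, b.1, b.2]

open scoped Classical in
lemma transport [Countable G] [StandardBorelSpace X] [StandardBorelSpace Y] (a : PMP G Y ν)
    {φ : X → Y} {ψ : Y → X} (hφ : MeasurePreserving φ μ ν) (hψ : MeasurePreserving ψ ν μ)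
    (h1 : ∀ᵐ x ∂μ, ψ (φ x) = x) (h2 : ∀ᵐ y ∂ν, φ (ψ y) = y) :
    ∃ g : PMP G X μ, ∀ᵐ x ∂μ, ∀ γ, g.act γ x = ψ (a.act γ (φ x)) ∧
      φ (g.act γ x) = a.act γ (φ x) := by
  set X0 : Set X := {x | ψ (φ x) = x ∧ ∀ γ, φ (ψ (a.act γ (φ x))) = a.act γ (φ x)} with hX0
  have hm0 : MeasurableSet X0 := by
    have e : X0 = {x | ψ (φ x) = x} ∩ ⋂ γ, {x | φ (ψ (a.act γ (φ x))) = a.act γ (φ x)} := by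
      ext x; simp [hX0]
    rw [e]
    refine (measurableSet_eq_fun (hψ.measurable.comp hφ.measurable) measurable_id).inter
      (MeasurableSet.iInter fun γ => measurableSet_eq_fun ?_ ((a.measurable γ).comp hφ.measurable))
    exact hφ.measurable.comp (hψ.measurable.comp ((a.measurable γ).comp hφ.measurable))
  have hc0 : ∀ᵐ x ∂μ, x ∈ X0 := by
    have h3 : ∀ γ, ∀ᵐ x ∂μ, φ (ψ (a.act γ (φ x))) = a.act γ (φ x) := fun γ =>
      ((a.preserves γ).comp hφ).quasiMeasurePreserving.ae h2
    filter_upwards [h1, ae_all_iff.2 h3] with x hx hx2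
    exact ⟨hx, hx2⟩
  have hinv : ∀ x ∈ X0, ∀ γ, ψ (a.act γ (φ x)) ∈ X0 := by
    rintro x ⟨hx1, hx2⟩ γ
    refine ⟨by rw [hx2], fun δ => ?_⟩
    rw [hx2, ← a.act_mul, hx2]
  set A : G → X → X := fun γ x => if x ∈ X0 then ψ (a.act γ (φ x)) else x with hA
  have hAp : ∀ γ x, x ∈ X0 → A γ x = ψ (a.act γ (φ x)) := fun γ x hx => if_pos hx
  have hAn : ∀ γ x, x ∉ X0 → A γ x = x := fun γ x hx => if_neg hx
  have hAm : ∀ γ, Measurable (A γ) := fun γ => Measurable.ite hm0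
    (hψ.measurable.comp ((a.measurable γ).comp hφ.measurable)) measurable_id
  refine ⟨⟨A, hAm, fun γ => ?_, fun x => ?_, fun γ δ x => ?_⟩, ?_⟩
  · have hh := hψ.comp ((a.preserves γ).comp hφ)
    refine ⟨hAm γ, ?_⟩
    have : μ.map (A γ) = μ.map (ψ ∘ (a.act γ ∘ φ)) := by
      apply Measure.map_congr
      filter_upwards [hc0] with x hx
      exact hAp γ x hx
    exact this.trans hh.map_eq
  · by_cases hx : x ∈ X0
    · rw [hAp _ _ hx, a.act_one, hx.1]
    · exact hAn _ _ hx
  · by_cases hx : x ∈ X0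
    · rw [hAp δ _ hx, hAp _ _ hx, hAp _ _ (hinv x hx δ), hx.2, a.act_mul]
    · rw [hAn δ _ hx, hAn _ _ hx, hAn _ _ hx]
  · filter_upwards [hc0] with x hx γ
    refine ⟨hAp _ _ hx, ?_⟩
    change φ (A γ x) = _
    rw [hAp _ _ hx, hx.2]

lemma free_transport {g : PMP G X μ} {a : PMP G Y ν} {φ : X → Y} (hφ : MeasurePreserving φ μ ν)
    (h : ∀ᵐ x ∂μ, ∀ γ, φ (g.act γ x) = a.act γ (φ x)) (ha : IsFreeAction a) : IsFreeAction g := by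
  filter_upwards [h, hφ.quasiMeasurePreserving.ae ha] with x h1 h2 γ hγ
  apply h2
  rw [← h1, hγ]

lemma wc_back {g : PMP G X μ} {a : PMP G Y ν} {φ : X → Y} {ψ : Y → X} (hψ : MeasurePreserving ψ ν μ)
    (h2 : ∀ᵐ y ∂ν, φ (ψ y) = y)
    (h : ∀ᵐ x ∂μ, ∀ γ, g.act γ x = ψ (a.act γ (φ x))) : WeaklyContains a g := by
  refine wc_of_factor a g hψ fun γ => ?_
  filter_upwards [h2, hψ.quasiMeasurePreserving.ae h] with y h3 h4
  rw [h4, h3]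

lemma atomless [MeasurableSingletonClass X] [IsProbabilityMeasure μ] [Infinite G] {f : PMP G X μ}
    (hf : IsFreeAction f) :
    NullSingletonClass μ := by
  refine ⟨fun x => ?_⟩
  by_contra hx
  have hfx : ∀ γ : G, f.act γ x = x → γ = 1 := by
    by_contra hn
    apply hx
    refine measure_mono_null ?_ hf
    intro y hy
    rw [Set.mem_singleton_iff.1 hy]
    exact hn
  have hinj : Function.Injective (fun γ : G => f.act γ x) := by
    intro γ δ h
    have : f.act (δ⁻¹ * γ) x = x := by
      have h' : f.act γ x = f.act δ x := h
      rw [f.act_mul, h', ← f.act_mul, inv_mul_cancel, f.act_one]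
    have := hfx _ this
    exact (inv_mul_eq_one.1 this).symm
  have hmeas : ∀ γ, μ {f.act γ x} = μ {x} := by
    intro γ
    rw [← (f.preserves γ).measure_preimage (measurableSet_singleton _).nullMeasurableSet]
    congr 1
    ext y
    simp only [Set.mem_preimage, Set.mem_singleton_iff]
    constructor
    · intro h
      have := congrArg (f.act γ⁻¹) h
      rwa [← f.act_mul, ← f.act_mul, inv_mul_cancel, f.act_one, f.act_one] at this
    · rintro rfl; rfl
  let e := Infinite.natEmbedding G
  have hd : Pairwise (Function.onFun Disjoint fun n : ℕ => ({f.act (e n) x} : Set X)) := by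
    intro m n hmn
    rw [Function.onFun, Set.disjoint_singleton]
    exact fun h => hmn (e.injective (hinj h))
  have hU := measure_iUnion (μ := μ) hd (fun n => measurableSet_singleton _)
  simp only [hmeas, ENNReal.tsum_const_eq_top_of_ne_zero hx] at hU
  exact measure_ne_top μ _ hU

end

lemma infinite_of_nonamenable {Γ : Type*} [Group Γ] (h : ¬ IsAmenable Γ) : Infinite Γ := by
  by_contra hf
  rw [not_infinite_iff_finite] at hf
  apply h
  have hpos : (0:ℝ) < (Nat.card Γ : ℝ) := by exact_mod_cast Nat.card_pos
  refine ⟨fun A => (A.ncard : ℝ) / Nat.card Γ, fun A => by positivity, ?_, fun A B hAB => ?_,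
    fun γ A => ?_⟩
  · simp only [Set.ncard_univ]
    exact div_self hpos.ne'
  · simp only [Set.ncard_union_eq hAB (Set.toFinite _) (Set.toFinite _)]
    push_cast; ring
  · simp only [Set.ncard_image_of_injective A (mul_right_injective γ)]

end Transp

open MeasureTheory

namespace AW
open Set Filter Topology
section

lemma int_ind {Z : Type*} [MeasurableSpace Z] (ρ : Measure Z) [IsProbabilityMeasure ρ] {W : Set Z}
    (hW : MeasurableSet W) : Integrable (W.indicator (1 : Z → ℝ)) ρ :=
  (integrable_const (1:ℝ)).indicator hW

lemma cov_zero {Ω : Type*} [MeasurableSpace Ω] (P : Measure Ω) [IsProbabilityMeasure P] {U V : Set Ω}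
    (hU : MeasurableSet U) (hV : MeasurableSet V) (h : P (U ∩ V) = P U * P V) :
    ∫ k, (U.indicator (1 : Ω → ℝ) k - P.real U) * (V.indicator (1 : Ω → ℝ) k - P.real V) ∂P = 0 := by
  have hi : ∀ {W : Set Ω}, MeasurableSet W → Integrable (W.indicator (1 : Ω → ℝ)) P := fun hW =>
    (integrable_const (1:ℝ)).indicator hW
  have e : ∀ k, (U.indicator (1 : Ω → ℝ) k - P.real U) * (V.indicator (1 : Ω → ℝ) k - P.real V) =
      (U ∩ V).indicator (1 : Ω → ℝ) k - P.real V * U.indicator (1 : Ω → ℝ) k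
        - P.real U * V.indicator (1 : Ω → ℝ) k + P.real U * P.real V := by
    intro k
    have : (U ∩ V).indicator (1 : Ω → ℝ) k = U.indicator (1 : Ω → ℝ) k * V.indicator (1 : Ω → ℝ) k := by
      rw [Set.inter_indicator_one]; rfl
    rw [this]; ring
  simp only [e]
  rw [integral_add, integral_sub, integral_sub, integral_const_mul, integral_const_mul,
    integral_indicator_one hU, integral_indicator_one hV, integral_indicator_one (hU.inter hV),
    integral_const]
  · have : P.real (U ∩ V) = P.real U * P.real V := by
      simp only [measureReal_def, h, ENNReal.toReal_mul]
    rw [this]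
    simp
    ring
  · exact hi (hU.inter hV)
  · exact (hi hU).const_mul _
  · exact (hi (hU.inter hV)).sub ((hi hU).const_mul _)
  · exact (hi hV).const_mul _
  · exact ((hi (hU.inter hV)).sub ((hi hU).const_mul _)).sub ((hi hV).const_mul _)
  · exact integrable_const _

variable {Γ X : Type*} [Group Γ] [MeasurableSpace Γ] [MeasurableSpace X] {μ : Measure X}

noncomputable def prodAct [IsProbabilityMeasure μ] (f : PMP Γ X μ) (pm : ℕ → Measure Γ)
    [∀ n, IsProbabilityMeasure (pm n)] : PMP Γ (X × Lab Γ) (μ.prod (beta pm)) where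
  act := fun γ z => (f.act γ z.1, shiftFun γ z.2)
  measurable := fun γ => ((f.measurable γ).comp measurable_fst).prodMk
    ((measurable_shiftFun γ).comp measurable_snd)
  preserves := fun γ => (f.preserves γ).prod ((shift pm).preserves γ)
  act_one := fun z => Prod.ext (f.act_one z.1) ((shift pm).act_one z.2)
  act_mul := fun a b z => Prod.ext (f.act_mul a b z.1) ((shift pm).act_mul a b z.2)

/-- Local sets. -/
def Loc (E : Finset (Γ × ℕ)) (A : Set (X × Lab Γ)) : Prop :=
  ∀ x ω ω', (∀ e ∈ E, ω e = ω' e) → (x, ω) ∈ A → (x, ω') ∈ A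

def Th {Q : Type*} (f : PMP Γ X μ) (q : X → Q) (x : X) (k : Q × ℕ → Γ) : X × Lab Γ :=
  (x, fun e => k (q (f.act e.1 x), e.2))

lemma Th_equiv {Q : Type*} [IsProbabilityMeasure μ] (f : PMP Γ X μ) (pm : ℕ → Measure Γ)
    [∀ n, IsProbabilityMeasure (pm n)] (q : X → Q) (γ : Γ) (x : X) (k : Q × ℕ → Γ) :
    Th f q (f.act γ x) k = (prodAct f pm).act γ (Th f q x k) := by
  refine Prod.ext rfl ?_
  funext e
  change k (q (f.act e.1 (f.act γ x)), e.2) = k (q (f.act (e.1 * γ) x), e.2)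
  rw [f.act_mul]

lemma meas_Th {Q : Type*} [Countable Q] [MeasurableSpace Q] [MeasurableSingletonClass Q]
    (f : PMP Γ X μ) {q : X → Q} (hq : Measurable q) :
    Measurable (fun z : X × (Q × ℕ → Γ) => Th f q z.1 z.2) := by
  refine measurable_fst.prodMk (measurable_pi_lambda _ fun e => ?_)
  have h : Measurable (fun p : Q × (Q × ℕ → Γ) => p.2 (p.1, e.2)) :=
    measurable_from_prod_countable_right fun c => measurable_pi_apply (c, e.2)
  exact h.comp (((hq.comp ((f.measurable e.1).comp measurable_fst))).prodMk measurable_snd)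

lemma transfer {I I' : Type*} (P : I → Measure Γ) (P' : I' → Measure Γ)
    [∀ i, IsProbabilityMeasure (P i)] [∀ i, IsProbabilityMeasure (P' i)] (E : Finset I) (r : I → I')
    (hr : Set.InjOn r E) (hP : ∀ e ∈ E, P' (r e) = P e) {U : Set (I → Γ)} (hU : MeasurableSet U)
    (dU : ∀ ω ω' : I → Γ, (∀ e ∈ E, ω e = ω' e) → ω ∈ U → ω' ∈ U) :
    Measure.infinitePi P' {k | (fun e => k (r e)) ∈ U} = Measure.infinitePi P U := by
  classical
  let ext : (E → Γ) → I → Γ := fun w e => if h : e ∈ E then w ⟨e, h⟩ else 1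
  have hext : Measurable ext := by
    refine measurable_pi_lambda _ fun e => ?_
    by_cases h : e ∈ E
    · simp only [ext, dif_pos h]; exact measurable_pi_apply _
    · simp only [ext, dif_neg h]; exact measurable_const
  have i1 : Function.Injective (fun e : E => (e : I)) := Subtype.val_injective
  have i2 : Function.Injective (fun e : E => r e) := Set.injOn_iff_injective.1 hr
  have h1 := Measure.map_infinitePi_infinitePi_of_inj (P := P) i1
  have h2 := Measure.map_infinitePi_infinitePi_of_inj (P := P') i2
  have hPP : (fun e : E => P' (r e)) = fun e : E => P e := funext fun e => hP e e.2
  have key : Measure.infinitePi (fun e : E => P' (r e)) = Measure.infinitePi (fun e : E => P e) := by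
    congr 1
  have e1 : U = (fun ω : I → Γ => fun e : E => ω e) ⁻¹' (ext ⁻¹' U) := by
    ext ω
    constructor
    · exact dU _ _ (fun e he => by simp [ext, he])
    · exact dU _ _ (fun e he => by simp [ext, he])
  have e2 : {k : I' → Γ | (fun e => k (r e)) ∈ U} =
      (fun k : I' → Γ => fun e : E => k (r e)) ⁻¹' (ext ⁻¹' U) := by
    ext k
    constructor
    · exact dU _ _ (fun e he => by simp [ext, he])
    · exact dU _ _ (fun e he => by simp [ext, he])
  have m1 : Measurable (fun ω : I → Γ => fun e : E => ω e) := by fun_prop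
  have m2 : Measurable (fun k : I' → Γ => fun e : E => k (r e)) := by fun_prop
  rw [e2, ← Measure.map_apply m2 (hext hU), h2, key, ← h1, Measure.map_apply m1 (hext hU), ← e1]

def PP (f : PMP Γ X μ) (s : Γ × Bool) (z : X × X) : X := f.act s.1 (if s.2 then z.1 else z.2)

def BadP {Q : Type*} (f : PMP Γ X μ) (E : Finset (Γ × ℕ)) (q : X → Q) : Set (X × X) :=
  {z | ∃ e ∈ E, ∃ e' ∈ E, ∃ b b', (e.1, b) ≠ (e'.1, b') ∧ q (PP f (e.1, b) z) = q (PP f (e'.1, b') z)}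

lemma meas_PP (f : PMP Γ X μ) (s : Γ × Bool) : Measurable (PP f s) := by
  unfold PP
  refine (f.measurable _).comp ?_
  cases s.2 <;> simp <;> fun_prop

lemma meas_BadP {Q : Type*} [Countable Q] [MeasurableSpace Q] [MeasurableSingletonClass Q]
    (f : PMP Γ X μ) (E : Finset (Γ × ℕ)) {q : X → Q} (hq : Measurable q) :
    MeasurableSet (BadP f E q) := by
  have : BadP f E q = ⋃ e ∈ E, ⋃ e' ∈ E, ⋃ b, ⋃ b', ⋃ (_ : (e.1, b) ≠ (e'.1, b')),
      {z | q (PP f (e.1, b) z) = q (PP f (e'.1, b') z)} := by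
    ext z; simp [BadP]
  rw [this]
  refine Finset.measurableSet_biUnion _ fun e _ => Finset.measurableSet_biUnion _ fun e' _ =>
    MeasurableSet.iUnion fun b => MeasurableSet.iUnion fun b' => MeasurableSet.iUnion fun _ => ?_
  exact measurableSet_eq_fun (hq.comp (meas_PP f _)) (hq.comp (meas_PP f _))

theorem second_moment {Q : Type*} [Countable Q] [MeasurableSpace Q] [MeasurableSingletonClass Q]
    [IsProbabilityMeasure μ] (f : PMP Γ X μ) (pm : ℕ → Measure Γ)
    [∀ n, IsProbabilityMeasure (pm n)] {q : X → Q} (hq : Measurable q)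
    {E : Finset (Γ × ℕ)} {A : Set (X × Lab Γ)} (hA : MeasurableSet A) (hL : Loc E A) :
    Integrable (fun k => (μ.real {x | Th f q x k ∈ A} - (μ.prod (beta pm)).real A) ^ 2)
      (Measure.infinitePi (fun e : Q × ℕ => pm e.2)) ∧
    ∫ k, (μ.real {x | Th f q x k ∈ A} - (μ.prod (beta pm)).real A) ^ 2
      ∂(Measure.infinitePi (fun e : Q × ℕ => pm e.2)) ≤ (μ.prod μ).real (BadP f E q) := by
  set B := Measure.infinitePi (fun e : Q × ℕ => pm e.2) with hB
  set a : X → ℝ := fun x => (beta pm).real (Prod.mk x ⁻¹' A) with ha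
  set U : X → Set (Q × ℕ → Γ) := fun x => {k | Th f q x k ∈ A} with hU
  set h : X → (Q × ℕ → Γ) → ℝ := fun x k => (U x).indicator 1 k - a x with hh
  have hT := meas_Th f hq
  have ham : Measurable a := (measurable_measure_prodMk_left hA).ennreal_toReal
  have hAT : MeasurableSet ((fun z : X × (Q × ℕ → Γ) => Th f q z.1 z.2) ⁻¹' A) := hT hA
  have hUm : ∀ x, MeasurableSet (U x) := fun x =>
    (hT.comp (measurable_const.prodMk measurable_id : Measurable fun k : Q × ℕ → Γ => (x, k))) hA
  have hhm : Measurable (fun z : X × (Q × ℕ → Γ) => h z.1 z.2) := by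
    have e : (fun z : X × (Q × ℕ → Γ) => h z.1 z.2) = fun z =>
        ((fun z : X × (Q × ℕ → Γ) => Th f q z.1 z.2) ⁻¹' A).indicator (1 : X × (Q × ℕ → Γ) → ℝ) z - a z.1 := by
      funext z
      rfl
    rw [e]
    exact (measurable_one.indicator hAT).sub (ham.comp measurable_fst)
  have ha0 : ∀ x, 0 ≤ a x ∧ a x ≤ 1 := fun x => ⟨measureReal_nonneg, measureReal_le_one⟩
  have hb : ∀ x k, |h x k| ≤ 1 := by
    intro x k
    have := ha0 x
    simp only [hh]
    by_cases hk : k ∈ U x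
    · rw [indicator_of_mem hk, abs_le]; simp only [Pi.one_apply]; constructor <;> linarith
    · rw [indicator_of_notMem hk, abs_le]; constructor <;> linarith
  have hmA : (μ.prod (beta pm)).real A = ∫ x, a x ∂μ := by
    rw [← integral_indicator_one hA, integral_prod _ (int_ind _ hA)]
    congr 1
    funext x
    rw [ha]
    dsimp only
    rw [← integral_indicator_one (measurable_prodMk_left hA)]
    rfl
  have hgk : ∀ k, μ.real {x | Th f q x k ∈ A} - (μ.prod (beta pm)).real A = ∫ x, h x k ∂μ := by
    intro k
    have hm : MeasurableSet {x | Th f q x k ∈ A} :=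
      (hT.comp (measurable_id.prodMk measurable_const : Measurable fun x : X => (x, k))) hA
    rw [hmA, ← integral_indicator_one hm, ← integral_sub (int_ind _ hm)]
    · rfl
    · exact Integrable.of_bound ham.aestronglyMeasurable 1
        (ae_of_all _ fun x => by rw [Real.norm_eq_abs, abs_of_nonneg (ha0 x).1]; exact (ha0 x).2)
  have hsq : ∀ k, (μ.real {x | Th f q x k ∈ A} - (μ.prod (beta pm)).real A) ^ 2 =
      ∫ z, h z.1 k * h z.2 k ∂(μ.prod μ) := by
    intro k
    rw [hgk, sq]
    exact (integral_prod_mul (fun x => h x k) (fun x => h x k)).symm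
  have hm3 : Measurable (fun w : (Q × ℕ → Γ) × (X × X) => h w.2.1 w.1 * h w.2.2 w.1) :=
    (hhm.comp ((measurable_fst.comp measurable_snd).prodMk measurable_fst)).mul
      (hhm.comp ((measurable_snd.comp measurable_snd).prodMk measurable_fst))
  have hbb : ∀ (z : X × X) k, |h z.1 k * h z.2 k| ≤ 1 := fun z k => by
    rw [abs_mul]
    exact mul_le_one₀ (hb _ _) (abs_nonneg _) (hb _ _)
  have hIntg : Integrable (Function.uncurry fun (k : Q × ℕ → Γ) (z : X × X) => h z.1 k * h z.2 k)
      (B.prod (μ.prod μ)) :=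
    Integrable.of_bound hm3.aestronglyMeasurable 1 (ae_of_all _ fun w => hbb w.2 w.1)
  simp only [hsq]
  refine ⟨hIntg.integral_prod_left, ?_⟩
  rw [integral_integral_swap hIntg, ← integral_indicator_one (meas_BadP f E hq)]
  have hin : ∀ z : X × X, ∫ k, h z.1 k * h z.2 k ∂B ≤ (BadP f E q).indicator (1 : X × X → ℝ) z := by
    intro z
    by_cases hz : z ∈ BadP f E q
    · rw [indicator_of_mem hz]
      refine (le_abs_self _).trans ?_
      have := norm_integral_le_of_norm_le_const (μ := B) (C := 1)
        (ae_of_all _ fun k => (Real.norm_eq_abs _).trans_le (hbb z k))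
      simpa using this
    · rw [indicator_of_notMem hz]
      have hne : ∀ e ∈ E, ∀ e' ∈ E, ∀ b b', (e.1, b) ≠ (e'.1, b') →
          q (PP f (e.1, b) z) ≠ q (PP f (e'.1, b') z) := by
        intro e he e' he' b b' h1 h2
        exact hz ⟨e, he, e', he', b, b', h1, h2⟩
      have hdep : ∀ x, ∀ k k' : Q × ℕ → Γ,
          (∀ e ∈ (fun e : Γ × ℕ => (q (f.act e.1 x), e.2)) '' E, k e = k' e) → k ∈ U x → k' ∈ U x := by
        intro x k k' hkk hk
        refine hL x _ _ ?_ hk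
        intro e he
        exact hkk _ ⟨e, he, rfl⟩
      have htr : ∀ b : Bool, B.real (U (if b then z.1 else z.2)) = a (if b then z.1 else z.2) := by
        intro b
        set x := if b then z.1 else z.2 with hx
        simp only [measureReal_def, ha]
        congr 1
        refine transfer (fun e : Γ × ℕ => pm e.2) (fun e : Q × ℕ => pm e.2) E
          (fun e => (q (f.act e.1 x), e.2)) ?_ (fun e _ => rfl) (measurable_prodMk_left hA)
          (fun ω ω' => hL x ω ω')
        intro e he e' he' hee
        by_contra hcon
        have h2 := (Prod.ext_iff.1 hee).2
        have h1 := (Prod.ext_iff.1 hee).1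
        refine hne e he e' he' b b ?_ h1
        intro h3
        exact hcon (Prod.ext (Prod.ext_iff.1 h3).1 h2)
      have t1 : B.real (U z.1) = a z.1 := htr true
      have t2 : B.real (U z.2) = a z.2 := htr false
      simp only [hh]
      rw [← t1, ← t2]
      refine (cov_zero B (hUm _) (hUm _) ?_).le
      refine dep_indep (fun e : Q × ℕ => pm e.2) ?_ (hUm _) (hUm _) (hdep z.1) (hdep z.2)
      rw [Set.disjoint_left]
      rintro _ ⟨e, he, rfl⟩ ⟨e', he', h1⟩
      exact hne e' he' e he false true (by simp) (Prod.ext_iff.1 h1).1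
  exact integral_mono hIntg.integral_prod_right (int_ind _ (meas_BadP f E hq)) hin
end
end AW

open MeasureTheory

namespace AW
open Set Filter Topology
section
variable {Γ X : Type*} [Group Γ] [MeasurableSpace Γ] [MeasurableSpace X] {μ : Measure X}

noncomputable def qN [StandardBorelSpace X] (N : ℕ) (x : X) : Fin N → Bool :=
  fun k => MeasurableSpace.mapNatBool X x k

lemma meas_qN [StandardBorelSpace X] (N : ℕ) : Measurable (qN N : X → Fin N → Bool) := by
  refine measurable_pi_lambda _ fun k => ?_
  exact (measurable_pi_apply (k : ℕ)).comp (MeasurableSpace.measurable_mapNatBool X)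

lemma qN_eventually [StandardBorelSpace X] {x y : X} (h : x ≠ y) :
    ∀ᶠ N in atTop, qN N x ≠ qN N y := by
  have : MeasurableSpace.mapNatBool X x ≠ MeasurableSpace.mapNatBool X y := fun hh =>
    h (MeasurableSpace.injective_mapNatBool X hh)
  obtain ⟨k, hk⟩ := Function.ne_iff.1 this
  filter_upwards [eventually_gt_atTop k] with N hN hq
  exact hk (congrFun hq ⟨k, hN⟩)

lemma PP_inj [Countable Γ] [StandardBorelSpace X] [IsProbabilityMeasure μ] [NullSingletonClass μ]
    {f : PMP Γ X μ} (hf : IsFreeAction f) :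
    ∀ᵐ z ∂(μ.prod μ), ∀ s t, s ≠ t → PP f s z ≠ PP f t z := by
  have hcross : ∀ γ δ : Γ, ∀ᵐ z ∂(μ.prod μ), f.act γ z.1 ≠ f.act δ z.2 := by
    intro γ δ
    have hm : MeasurableSet {z : X × X | f.act γ z.1 = f.act δ z.2} :=
      measurableSet_eq_fun ((f.measurable γ).comp measurable_fst) ((f.measurable δ).comp measurable_snd)
    rw [ae_iff]
    simp only [not_not]
    rw [Measure.measure_prod_null hm]
    refine ae_of_all _ fun x => ?_
    refine measure_mono_null (t := {f.act (δ⁻¹ * γ) x}) ?_ (measure_singleton _)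
    intro y hy
    have hy' : f.act γ x = f.act δ y := hy
    rw [mem_singleton_iff, f.act_mul, hy', ← f.act_mul, inv_mul_cancel, f.act_one]
  have hinj : ∀ x : X, (∀ γ : Γ, f.act γ x = x → γ = 1) → ∀ γ δ, f.act γ x = f.act δ x → γ = δ := by
    intro x hx γ δ h
    have : f.act (δ⁻¹ * γ) x = x := by
      rw [f.act_mul, h, ← f.act_mul, inv_mul_cancel, f.act_one]
    exact (inv_mul_eq_one.1 (hx _ this)).symm
  have h1 := (Measure.quasiMeasurePreserving_fst (μ := μ) (ν := μ)).ae hf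
  have h2 := (Measure.quasiMeasurePreserving_snd (μ := μ) (ν := μ)).ae hf
  filter_upwards [h1, h2, ae_all_iff.2 fun γ => ae_all_iff.2 fun δ => hcross γ δ] with z a b c
  rintro ⟨γ, s⟩ ⟨δ, t⟩ hst heq
  cases s <;> cases t <;> simp only [PP, Bool.false_eq_true, if_false, if_true] at heq
  · exact hst (by rw [hinj _ b _ _ heq])
  · exact c _ _ heq.symm
  · exact c _ _ heq
  · exact hst (by rw [hinj _ a _ _ heq])

lemma BadP_tendsto [Countable Γ] [StandardBorelSpace X] [IsProbabilityMeasure μ] [NullSingletonClass μ]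
    {f : PMP Γ X μ} (hf : IsFreeAction f) (E : Finset (Γ × ℕ)) :
    Tendsto (fun N => (μ.prod μ).real (BadP f E (qN N))) atTop (𝓝 0) := by
  have h := tendsto_measure_of_ae_tendsto_indicator_of_isFiniteMeasure (μ := μ.prod μ) (A := ∅)
    (As := fun N => BadP f E (qN N)) atTop MeasurableSet.empty (fun N => meas_BadP f E (meas_qN N)) ?_
  · rw [measure_empty] at h
    have := (ENNReal.tendsto_toReal ENNReal.zero_ne_top).comp h
    rw [ENNReal.toReal_zero] at this
    exact this
  · filter_upwards [PP_inj hf] with z hz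
    have : ∀ᶠ N in atTop, ∀ e ∈ E, ∀ e' ∈ E, ∀ b b' : Bool, (e.1, b) ≠ (e'.1, b') →
        qN N (PP f (e.1, b) z) ≠ qN N (PP f (e'.1, b') z) := by
      rw [Filter.eventually_all_finset]
      intro e _
      rw [Filter.eventually_all_finset]
      intro e' _
      rw [Filter.eventually_all]
      intro b
      rw [Filter.eventually_all]
      intro b'
      by_cases hne : (e.1, b) = (e'.1, b')
      · exact Eventually.of_forall fun N hh => absurd hne hh
      · filter_upwards [qN_eventually (hz _ _ hne)] with N hN _
        exact hN
    filter_upwards [this] with N hN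
    simp only [mem_empty_iff_false, iff_false]
    rintro ⟨e, he, e', he', b, b', h1, h2⟩
    exact hN e he e' he' b b' h1 h2

lemma loc_approx (ν : Measure (X × Lab Γ)) [IsProbabilityMeasure ν] {S : Set (X × Lab Γ)}
    (hS : MeasurableSet S) {δ : ℝ} (hδ : 0 < δ) :
    ∃ T, MeasurableSet T ∧ (∃ E : Finset (Γ × ℕ), Loc E T) ∧ ν (symmDiff S T) < ENNReal.ofReal δ := by
  classical
  let 𝒜 : Set (Set (X × Lab Γ)) := {T | MeasurableSet T ∧ ∃ E : Finset (Γ × ℕ), Loc E T}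
  have hm : ∀ T, MeasurableSet T → (∃ E : Finset (Γ × ℕ), Loc E T) → T ∈ 𝒜 := fun T a b => ⟨a, b⟩
  have halg : IsSetAlgebra 𝒜 := by
    refine ⟨hm _ MeasurableSet.empty ⟨∅, fun x ω ω' _ h => h⟩, ?_, ?_⟩
    · rintro s ⟨h1, E, h2⟩
      refine hm _ h1.compl ⟨E, fun x ω ω' h hx hx' => hx (h2 x ω' ω (fun e he => (h e he).symm) hx')⟩
    · rintro s t ⟨h1, E, h2⟩ ⟨h3, E', h4⟩
      refine hm _ (h1.union h3) ⟨E ∪ E', fun x ω ω' h hx => ?_⟩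
      rcases hx with hx | hx
      · exact Or.inl (h2 x ω ω' (fun e he => h e (Finset.mem_union_left _ he)) hx)
      · exact Or.inr (h4 x ω ω' (fun e he => h e (Finset.mem_union_right _ he)) hx)
  have hgen : (Prod.instMeasurableSpace : MeasurableSpace (X × Lab Γ)) =
      MeasurableSpace.generateFrom 𝒜 := by
    apply le_antisymm
    · refine sup_le ?_ ?_
      · rintro _ ⟨s, hs, rfl⟩
        exact MeasurableSpace.measurableSet_generateFrom
          (hm _ (measurable_fst hs) ⟨∅, fun x ω ω' _ h => h⟩)
      · rw [← measurable_iff_comap_le]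
        refine @measurable_pi_lambda _ _ _ (MeasurableSpace.generateFrom 𝒜) _ _ fun e => ?_
        intro s hs
        refine MeasurableSpace.measurableSet_generateFrom
          (hm _ (((measurable_pi_apply e).comp measurable_snd) hs) ⟨{e}, fun x ω ω' h hx => ?_⟩)
        have : ω e = ω' e := h e (Finset.mem_singleton_self e)
        change ω' e ∈ s
        rw [← this]; exact hx
    · exact MeasurableSpace.generateFrom_le fun s hs => hs.1
  have hd := Measure.MeasureDense.of_generateFrom_isSetAlgebra_finite (μ := ν) halg hgen
  obtain ⟨T, hT, h⟩ := hd.approx S hS (measure_ne_top _ _) δ hδ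
  exact ⟨T, hT.1, hT.2, h⟩

lemma loc_map (ν : Measure (X × Lab Γ)) [IsProbabilityMeasure ν] {n : ℕ} (hn : 1 ≤ n)
    {C : X × Lab Γ → Fin n} (hC : Measurable C) {δ : ℝ} (hδ : 0 < δ) :
    ∃ C' : X × Lab Γ → Fin n, Measurable C' ∧ (∃ E : Finset (Γ × ℕ), ∀ x ω ω',
      (∀ e ∈ E, ω e = ω' e) → C' (x, ω) = C' (x, ω')) ∧ ν.real {z | C z ≠ C' z} ≤ δ := by
  classical
  have hn0 : (0:ℝ) < n := by exact_mod_cast hn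
  have := fun i : Fin n => loc_approx ν (hC (measurableSet_singleton i)) (div_pos hδ hn0)
  choose S hSm hE hS using this
  choose E hE using hE
  let v : X × Lab Γ → Fin n → Bool := fun z i => decide (z ∈ S i)
  let pick : (Fin n → Bool) → Fin n := fun w => if h : ∃ i, w i = true then h.choose else ⟨0, hn⟩
  have hv : Measurable v := by
    refine measurable_pi_lambda _ fun i => ?_
    refine measurable_to_bool ?_
    have : (fun z => v z i) ⁻¹' {true} = S i := by ext z; simp [v]
    rw [this]; exact hSm i
  refine ⟨fun z => pick (v z), (measurable_of_countable pick).comp hv,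
    ⟨Finset.univ.biUnion E, fun x ω ω' h => ?_⟩, ?_⟩
  · have h1 : ∀ i, ∀ e ∈ E i, ω e = ω' e := fun i e he =>
      h e (Finset.mem_biUnion.2 ⟨i, Finset.mem_univ _, he⟩)
    have : v (x, ω) = v (x, ω') := by
      funext i
      simp only [v, decide_eq_decide]
      exact ⟨hE i x ω ω' (h1 i), hE i x ω' ω fun e he => (h1 i e he).symm⟩
    simp only [this]
  · have hsub : {z | C z ≠ pick (v z)} ⊆ ⋃ i, symmDiff (C ⁻¹' {i}) (S i) := by
      intro z hz
      by_contra hcon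
      apply hz
      simp only [mem_iUnion, not_exists, mem_symmDiff, mem_preimage, mem_singleton_iff] at hcon
      have hiff : ∀ i, z ∈ S i ↔ C z = i := by
        intro i
        have := hcon i
        tauto
      have hex : ∃ i, v z i = true := ⟨C z, by simp [v, hiff]⟩
      have hs := hex.choose_spec
      have hp : pick (v z) = hex.choose := dif_pos hex
      rw [hp]
      exact (hiff _).1 (of_decide_eq_true hs)
    calc ν.real {z | C z ≠ pick (v z)} ≤ ν.real (⋃ i, symmDiff (C ⁻¹' {i}) (S i)) :=
          measureReal_mono hsub
      _ ≤ ∑ i, ν.real (symmDiff (C ⁻¹' {i}) (S i)) := measureReal_iUnion_fintype_le _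
      _ ≤ ∑ _i : Fin n, δ / n := by
          refine Finset.sum_le_sum fun i _ => ?_
          exact ENNReal.toReal_le_of_le_ofReal (div_pos hδ hn0).le (hS i).le
      _ = δ := by
          rw [Finset.sum_const, Finset.card_univ, Fintype.card_fin, nsmul_eq_mul]
          field_simp

theorem abert_weiss [Countable Γ] [StandardBorelSpace X] [IsProbabilityMeasure μ]
    [NullSingletonClass μ] {f : PMP Γ X μ} (hf : IsFreeAction f) (pm : ℕ → Measure Γ)
    [∀ n, IsProbabilityMeasure (pm n)] : WeaklyContains f (prodAct f pm) := by
  classical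
  intro n hn C hC F ε hε
  set ν := μ.prod (beta pm) with hν
  set g := prodAct f pm with hg
  obtain ⟨C', hC'm, ⟨E, hE⟩, hCC⟩ := loc_map ν hn hC (δ := ε / 4) (by positivity)
  let A : Γ × Fin n × Fin n → Set (X × Lab Γ) := fun t =>
    {z | C' (g.act t.1⁻¹ z) = t.2.1 ∧ C' z = t.2.2}
  have hAm : ∀ t, MeasurableSet (A t) := fun t =>
    ((hC'm.comp (g.measurable _)) (measurableSet_singleton t.2.1)).inter
      (hC'm (measurableSet_singleton t.2.2))
  let Es : Γ × Fin n × Fin n → Finset (Γ × ℕ) := fun t =>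
    E ∪ E.image fun e => (e.1 * t.1⁻¹, e.2)
  have hLoc : ∀ t, Loc (Es t) (A t) := by
    rintro t x ω ω' h ⟨h1, h2⟩
    refine ⟨?_, ?_⟩
    · rw [← h1]
      refine hE _ _ _ fun e he => ?_
      exact (h _ (Finset.mem_union_right _ (Finset.mem_image_of_mem _ he))).symm
    · rw [← h2]
      exact hE _ _ _ fun e he => (h _ (Finset.mem_union_left _ he)).symm
  have hbd : Tendsto (fun N => ∑ t ∈ F ×ˢ (Finset.univ : Finset (Fin n × Fin n)),
      (μ.prod μ).real (BadP f (Es t) (qN N))) atTop (𝓝 0) := by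
    have := tendsto_finsetSum (F ×ˢ (Finset.univ : Finset (Fin n × Fin n)))
      (fun t _ => BadP_tendsto hf (Es t))
    simpa using this
  obtain ⟨N, hN⟩ := (hbd.eventually (gt_mem_nhds (show (0:ℝ) < (ε/2)^2 by positivity))).exists
  have hsm := fun t => second_moment f pm (meas_qN N) (hAm t) (hLoc t)
  have hIntg := integrable_finsetSum (F ×ˢ (Finset.univ : Finset (Fin n × Fin n)))
    (fun t _ => (hsm t).1)
  obtain ⟨k, hk⟩ := exists_le_integral hIntg
  rw [integral_finsetSum _ (fun t _ => (hsm t).1)] at hk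
  have hk2 := hk.trans ((Finset.sum_le_sum fun t _ => (hsm t).2).trans hN.le)
  refine ⟨fun x => C' (Th f (qN N) x k), ?_, fun i j γ hγ => ?_⟩
  · exact hC'm.comp ((meas_Th f (meas_qN N)).comp
      (measurable_id.prodMk measurable_const : Measurable fun x : X => (x, k)))
  have hdiff : |ν.real (A (γ, i, j)) - ν.real (g.act γ '' (C ⁻¹' {i}) ∩ C ⁻¹' {j})| ≤ ε / 2 := by
    rw [Transp.act_image]
    have hBm : MeasurableSet (g.act γ⁻¹ ⁻¹' (C ⁻¹' {i}) ∩ C ⁻¹' {j}) :=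
      (g.measurable _ (hC (measurableSet_singleton _))).inter (hC (measurableSet_singleton _))
    have hne : MeasurableSet {z | C z ≠ C' z} := (measurableSet_eq_fun hC hC'm).compl
    calc _ ≤ ν.real (symmDiff (A (γ, i, j)) (g.act γ⁻¹ ⁻¹' (C ⁻¹' {i}) ∩ C ⁻¹' {j})) :=
          abs_measureReal_sub_le_measureReal_symmDiff (hAm _).nullMeasurableSet hBm.nullMeasurableSet
      _ ≤ ν.real ({z | C z ≠ C' z} ∪ g.act γ⁻¹ ⁻¹' {z | C z ≠ C' z}) := by
          refine measureReal_mono ?_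
          intro z hz
          by_contra hcon
          simp only [mem_union, mem_preimage, mem_ofPred_eq, not_or, not_not] at hcon
          simp only [mem_symmDiff, A, mem_inter_iff, mem_preimage, mem_singleton_iff,
            mem_ofPred_eq, hcon.1, hcon.2] at hz
          tauto
      _ ≤ ν.real {z | C z ≠ C' z} + ν.real (g.act γ⁻¹ ⁻¹' {z | C z ≠ C' z}) :=
          measureReal_union_le _ _
      _ = ν.real {z | C z ≠ C' z} + ν.real {z | C z ≠ C' z} := by
          congr 1
          simp only [measureReal_def]
          rw [(g.preserves _).measure_preimage hne.nullMeasurableSet]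
      _ ≤ ε / 2 := by linarith
  have hst : |μ.real {x | Th f (qN N) x k ∈ A (γ, i, j)} - ν.real (A (γ, i, j))| ≤ ε / 2 := by
    apply abs_le_of_sq_le_sq _ (by positivity)
    refine le_trans ?_ hk2
    exact Finset.single_le_sum (f := fun t =>
      (μ.real {x | Th f (qN N) x k ∈ A t} - ν.real (A t)) ^ 2) (fun t _ => sq_nonneg _)
      (Finset.mem_product.2 ⟨hγ, Finset.mem_univ _⟩)
  have heq : f.act γ '' ((fun x => C' (Th f (qN N) x k)) ⁻¹' {i}) ∩
      (fun x => C' (Th f (qN N) x k)) ⁻¹' {j} = {x | Th f (qN N) x k ∈ A (γ, i, j)} := by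
    rw [Transp.act_image]
    ext x
    simp only [mem_inter_iff, mem_preimage, mem_singleton_iff, mem_ofPred_eq, A]
    rw [Th_equiv f pm]
  rw [heq]
  change |μ.real _ - ν.real _| ≤ ε
  rw [abs_le] at *
  constructor <;> linarith [hst.1, hst.2, hdiff.1, hdiff.2]
end
end AW

open MeasureTheory

open Filter Topology in
lemma exists_n0 {ρ : ENNReal} (hρ : ρ < 1) :
    ∃ n0 : ℕ, ∀ N, ∑ i ∈ Finset.range N, 2 * ρ ^ (i + n0) ≤ 1 / 2 := by
  have h1 : (1 - ρ)⁻¹ ≠ ⊤ := by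
    rw [Ne, ENNReal.inv_eq_top]
    exact (tsub_pos_of_lt hρ).ne'
  have h2 : Tendsto (fun n0 : ℕ => (2 * (1 - ρ)⁻¹) * ρ ^ n0) atTop (𝓝 ((2 * (1 - ρ)⁻¹) * 0)) :=
    ENNReal.Tendsto.const_mul (ENNReal.tendsto_pow_atTop_nhds_zero_of_lt_one hρ)
      (Or.inr (ENNReal.mul_ne_top (by simp) h1))
  rw [mul_zero] at h2
  obtain ⟨n0, hn0⟩ := (h2.eventually (gt_mem_nhds (show (0 : ENNReal) < 1 / 2 by simp))).exists
  refine ⟨n0, fun N => le_trans (ENNReal.sum_le_tsum _) (le_trans (le_of_eq ?_) hn0.le)⟩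
  rw [ENNReal.tsum_mul_left]
  simp only [pow_add]
  rw [ENNReal.tsum_mul_right, ENNReal.tsum_geometric, mul_assoc]

lemma prod_free {Γ X : Type*} [Group Γ] [MeasurableSpace Γ] [MeasurableSpace X] {μ : Measure X}
    [IsProbabilityMeasure μ] {f : PMP Γ X μ} (hf : IsFreeAction f) (pm : ℕ → Measure Γ)
    [∀ n, IsProbabilityMeasure (pm n)] : IsFreeAction (AW.prodAct f pm) := by
  have h1 := (Measure.quasiMeasurePreserving_fst (μ := μ) (ν := beta pm)).ae hf
  filter_upwards [h1] with z hz γ h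
  exact hz γ (congrArg Prod.fst h)

theorem main_aux
    {Γ X : Type} [Group Γ] [Countable Γ] (hna : ¬ IsAmenable Γ)
    [MeasurableSpace X] [StandardBorelSpace X]
    (μ : Measure X) [IsProbabilityMeasure μ]
    (f : PMP Γ X μ) (hfree : IsFreeAction f) :
    ∃ g : PMP Γ X μ, WeaklyEquivalent f g ∧
      ∃ h : PMP (FreeGroup (Fin 2)) X μ, IsFreeAction h ∧
        ∀ᵐ x ∂μ, ∀ t : FreeGroup (Fin 2), ∃ γ : Γ, h.act t x = g.act γ x := by
  letI : MeasurableSpace Γ := ⊤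
  haveI : DiscreteMeasurableSpace Γ := ⟨fun _ => trivial⟩
  haveI : Infinite Γ := Transp.infinite_of_nonamenable hna
  haveI : NullSingletonClass μ := Transp.atomless hfree
  obtain ⟨p, ρ, hρ1, hsum, hsym, hle, hconv⟩ := exists_walk hna
  obtain ⟨n0, hn0⟩ := exists_n0 hρ1
  obtain ⟨enc, henc⟩ := exists_injective_nat Γ
  let pf : ℕ → PMF Γ := fun n => ⟨p (n + n0), by
    rw [← hsum (n + n0)]; exact ENNReal.summable.hasSum⟩
  let pm : ℕ → Measure Γ := fun n => (pf n).toMeasure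
  haveI : ∀ n, IsProbabilityMeasure (pm n) := fun n => inferInstanceAs
    (IsProbabilityMeasure (pf n).toMeasure)
  have hpm : ∀ i s, pm i {s} = p (i + n0) s := fun i s =>
    (pf i).toMeasure_apply_singleton s (measurableSet_singleton s)
  have hbad := bad_bound pm p ρ hsym hle hconv n0 hn0 hpm
  have hnt : ∀ n : ℕ, ρ ^ (n + n0) ≠ ⊤ := fun n => ENNReal.pow_ne_top (hρ1.trans ENNReal.one_lt_top).ne
  have hU : ∀ c : Fin 2, beta pm (⋂ n, (UVs enc c n).1) = 0 ∧
      beta pm (⋂ n, (UVs enc c n).2) = 0 := by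
    intro c
    refine greedy_complete pm henc c c.2 (fun n => (ρ ^ (n + n0)).toReal) ?_ ?_ ?_
    · have h1 := (ENNReal.tendsto_pow_atTop_nhds_zero_of_lt_one hρ1).comp
        (Filter.tendsto_add_atTop_nat n0)
      have h2 := (ENNReal.tendsto_toReal ENNReal.zero_ne_top).comp h1
      rw [ENNReal.toReal_zero] at h2
      exact h2
    · intro n s
      rw [measureReal_def, hpm]
      exact ENNReal.toReal_mono (hnt n) (hle _ _)
    · intro n
      rw [measureReal_def]
      refine (ENNReal.toReal_mono (ENNReal.mul_ne_top (by simp) (hnt n)) (hbad n)).trans ?_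
      rw [ENNReal.toReal_mul]
      simp
  have hpf := prod_free hfree pm
  obtain ⟨h, hh1, hh2⟩ := exists_F2 pm henc (AW.prodAct f pm) hpf
    (θ := Prod.snd) measurePreserving_snd (fun γ y => rfl) hU
  obtain ⟨φ, ψ, i1, i2, i3, i4⟩ := Iso.iso μ (μ.prod (beta pm))
  obtain ⟨g', hg'⟩ := Transp.transport (AW.prodAct f pm) i1 i2 i3 i4
  obtain ⟨h', hh'⟩ := Transp.transport h i1 i2 i3 i4
  refine ⟨g', ⟨?_, ?_⟩, h', ?_, ?_⟩
  · refine Transp.wc_trans (AW.abert_weiss hfree pm) (Transp.wc_back i2 i4 ?_)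
    filter_upwards [hg'] with x hx γ
    exact (hx γ).1
  · refine Transp.wc_trans (Transp.wc_of_factor g' (AW.prodAct f pm) i1 fun γ => ?_)
      (Transp.wc_of_factor (AW.prodAct f pm) f measurePreserving_fst fun γ => ?_)
    · filter_upwards [hg'] with x hx
      exact (hx γ).2
    · exact ae_of_all _ fun z => rfl
  · refine Transp.free_transport i1 ?_ hh1
    filter_upwards [hh'] with x hx γ
    exact (hx γ).2
  · filter_upwards [hg', hh', i1.quasiMeasurePreserving.ae hh2] with x a b c t
    obtain ⟨γ, hγ⟩ := c t
    exact ⟨γ, by rw [(a γ).1, (b t).1, hγ]⟩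

theorem measurable_von_neumann_in_weak_equivalence_class
    {Γ X : Type} [Group Γ] [Countable Γ] (hna : ¬ IsAmenable Γ)
    [MeasurableSpace X] [StandardBorelSpace X]
    (μ : Measure X) [IsProbabilityMeasure μ]
    (f : PMP Γ X μ) (hfree : IsFreeAction f) :
    ∃ g : PMP Γ X μ, WeaklyEquivalent f g ∧
      ∃ h : PMP (FreeGroup (Fin 2)) X μ, IsFreeAction h ∧
        ∀ᵐ x ∂μ, ∀ t : FreeGroup (Fin 2), ∃ γ : Γ, h.act t x = g.act γ x := by
  exact main_aux hna μ f hfree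
end
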